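/- arXiv:2010.01467 — 2 statements merged into one kernel-verified Lean document; each statement's English description precedes it below -/
import Mathlib

section
/- Let λ, b ∈ X₀([0,T₀]×D_{R₀}) satisfy λ(0,x) ≡ 0 on D_{R₀}, |λ(t,x)| ≤ Λ·m(t) and |b(t,x)| ≤ B·m(t) on [0,T₀]×D_{R₀} for a weight function m and Λ, B > 0. With W = {(t,x) ∈ [0,T]×D_R : φ(t)/r + |x| < R} (0 < T < T₀, 0 < R < R₀, 0 < r ≤ 1/B) and φ(t;t₀,x₀) the characteristic solving dx/dt = −b(t,x)/t, x(t₀) = x₀: for every holomorphic ψ on D_R, the equation t·∂v/∂t − λ(t,x)·v − b(t,x)·∂v/∂x = 0 has a unique solution v ∈ X₁(W) with v(0,x) = ψ(x) on D_R, and it is given by v(t,x) = ψ(φ(0;t,x))·exp[∫₀^t λ(s,φ(s;t,x))/s ds]. -/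
open Set Filter MeasureTheory Metric Topology Complex

noncomputable section

/-- A *weight function* on `(0, T₀]`: increasing, continuous and positive on `(0,T₀]`,
with `∫₀^{T₀} m(τ)/τ dτ < ∞`. -/
def IsWeight (T₀ : ℝ) (m : ℝ → ℝ) : Prop :=
  MonotoneOn m (Set.Ioc 0 T₀) ∧ ContinuousOn m (Set.Ioc 0 T₀) ∧
    (∀ t ∈ Set.Ioc (0 : ℝ) T₀, 0 < m t) ∧
    MeasureTheory.IntegrableOn (fun τ => m τ / τ) (Set.Ioc 0 T₀)

/-- `φ(t) = ∫₀ᵗ m(τ)/τ dτ`. -/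
def wphi (m : ℝ → ℝ) (t : ℝ) : ℝ := ∫ τ in Set.Ioc (0 : ℝ) t, m τ / τ

/-- `f ∈ X₀(S × D_R)` : continuous on `S × D_R`, holomorphic in `x` for each fixed `t`. -/
def MemX0 (S : Set ℝ) (R : ℝ) (f : ℝ → ℂ → ℂ) : Prop :=
  ContinuousOn (fun p : ℝ × ℂ => f p.1 p.2) (S ×ˢ Metric.ball (0 : ℂ) R) ∧
    ∀ t ∈ S, DifferentiableOn ℂ (f t) (Metric.ball (0 : ℂ) R)

/-- `f ∈ X₁(S × D_R)` : `f ∈ X₀`, with a `t`-derivative for `t > 0` such that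
`t ∂f/∂t ∈ X₀`. -/
def MemX1 (S : Set ℝ) (R : ℝ) (f : ℝ → ℂ → ℂ) : Prop :=
  MemX0 S R f ∧
    ∃ g : ℝ → ℂ → ℂ, MemX0 S R g ∧
      ∀ t ∈ S, 0 < t → ∀ x ∈ Metric.ball (0 : ℂ) R,
        HasDerivWithinAt (fun s => f s x) (g t x / (t : ℂ)) S t

/-- `u` solves equation (E) :
`t ∂u/∂t = a + λ u + b ∂u/∂x + Σ_{j+α≥2} a_{j,α} u^j (∂u/∂x)^α` on `(0,T] × D_R`. -/
def SolvesE (T R : ℝ) (a lam b : ℝ → ℂ → ℂ) (c : ℕ → ℕ → ℝ → ℂ → ℂ)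
    (u : ℝ → ℂ → ℂ) : Prop :=
  ∀ t ∈ Set.Ioc (0 : ℝ) T, ∀ x ∈ Metric.ball (0 : ℂ) R,
    HasDerivWithinAt (fun s => u s x)
      ((a t x + lam t x * u t x + b t x * deriv (u t) x +
          ∑' p : ℕ × ℕ, c p.1 p.2 t x * u t x ^ p.1 * deriv (u t) x ^ p.2) / (t : ℂ))
      (Set.Ioc 0 T) t

/-- `u` is a germ (near the origin) solution of equation (E). -/
def GermSol (T₀ R₀ : ℝ) (a lam b : ℝ → ℂ → ℂ) (c : ℕ → ℕ → ℝ → ℂ → ℂ)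
    (u : ℝ → ℂ → ℂ) : Prop :=
  ∃ T, 0 < T ∧ T ≤ T₀ ∧ ∃ R, 0 < R ∧ R ≤ R₀ ∧ SolvesE T R a lam b c u

/-- the germ class `X₁^d`. -/
def MemX1d (d : ℝ) (u : ℝ → ℂ → ℂ) : Prop :=
  ∃ T > (0 : ℝ), ∃ R > (0 : ℝ), MemX1 (Set.Icc 0 T) R u ∧
    ∃ C > (0 : ℝ), ∀ t ∈ Set.Icc (0 : ℝ) T, ∀ x ∈ Metric.ball (0 : ℂ) R,
      max ‖u t x‖ ‖deriv (u t) x‖ ≤ C * t ^ d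

/-- the germ class `X₁⁺ = ⋃_{d>0} X₁^d`. -/
def MemX1plus (u : ℝ → ℂ → ℂ) : Prop := ∃ d > (0 : ℝ), MemX1d d u

/-- the germ class `X₁^{(μ)} = ⋂_{0<a<μ} X₁^a`. -/
def MemX1lt (μ : ℝ) (u : ℝ → ℂ → ℂ) : Prop := ∀ a : ℝ, 0 < a → a < μ → MemX1d a u

/-- two functions agree as germs on some `(0,ε] × D_δ`. -/
def GermEqPos (u v : ℝ → ℂ → ℂ) : Prop :=
  ∃ ε > (0 : ℝ), ∃ δ > (0 : ℝ), ∀ t ∈ Set.Ioc (0 : ℝ) ε, ∀ x ∈ Metric.ball (0 : ℂ) δ,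
    u t x = v t x

/-- the class `𝒳₁` (built on `X₁([0,T]×D_R)`) : the limsup-condition
`limsup_{ρ→0⁺} [ lim_{σ→0⁺} (1/ρ²) sup_{(0,σ)×D_ρ} |u| ] = 0`. -/
def MemXscrIcc (u : ℝ → ℂ → ℂ) : Prop :=
  (∃ T > (0 : ℝ), ∃ R > (0 : ℝ), MemX1 (Set.Icc 0 T) R u) ∧
    ∀ ε > (0 : ℝ), ∃ ρ₁ > (0 : ℝ), ∀ ρ, 0 < ρ → ρ < ρ₁ →
      ∃ σ > (0 : ℝ), ∀ t, 0 < t → t < σ → ∀ x ∈ Metric.ball (0 : ℂ) ρ,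
        ‖u t x‖ ≤ ε * ρ ^ 2

/-- the class `𝒳₁` (built on `X₁((0,T]×D_R)`). -/
def MemXscrIoc (u : ℝ → ℂ → ℂ) : Prop :=
  (∃ T > (0 : ℝ), ∃ R > (0 : ℝ), MemX1 (Set.Ioc 0 T) R u) ∧
    ∀ ε > (0 : ℝ), ∃ ρ₁ > (0 : ℝ), ∀ ρ, 0 < ρ → ρ < ρ₁ →
      ∃ σ > (0 : ℝ), ∀ t, 0 < t → t < σ → ∀ x ∈ Metric.ball (0 : ℂ) ρ,
        ‖u t x‖ ≤ ε * ρ ^ 2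

/-- `ψ` is holomorphic in a neighborhood of `x = 0`. -/
def HoloGerm (ψ : ℂ → ℂ) : Prop :=
  ∃ r > (0 : ℝ), DifferentiableOn ℂ ψ (Metric.ball (0 : ℂ) r)

/-- `t^{-λ(0,x)} w(t,x) → ψ(x)` as `t → 0⁺`, uniformly near `x = 0`,
where `t^{-λ(0,x)} = exp(-λ(0,x) log t)`. -/
def BndLimit (lam0 : ℂ → ℂ) (w : ℝ → ℂ → ℂ) (ψ : ℂ → ℂ) : Prop :=
  ∃ δ > (0 : ℝ), TendstoUniformlyOn
    (fun t x => Complex.exp (-(lam0 x) * (Real.log t : ℂ)) * w t x) ψ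
    (nhdsWithin 0 (Set.Ioi 0)) (Metric.ball (0 : ℂ) δ)

/-- `lim_{t→0⁺} sup_{x ∈ D_R} |t^{-d} u(t,x)| = 0`. -/
def SmalloOnBall (d R : ℝ) (u : ℝ → ℂ → ℂ) : Prop :=
  ∀ ε > (0 : ℝ), ∃ τ > (0 : ℝ), ∀ t, 0 < t → t < τ → ∀ x ∈ Metric.ball (0 : ℂ) R,
    ‖u t x‖ ≤ ε * t ^ d

/-- `f ∈ X₀(W)` for a general domain `W ⊆ ℝ × ℂ`. -/
def MemX0W (W : Set (ℝ × ℂ)) (f : ℝ → ℂ → ℂ) : Prop :=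
  ContinuousOn (fun p : ℝ × ℂ => f p.1 p.2) W ∧
    ∀ t : ℝ, DifferentiableOn ℂ (f t) {y : ℂ | (t, y) ∈ W}

/-- `f ∈ X₁(W)` for a general domain `W ⊆ ℝ × ℂ`. -/
def MemX1W (W : Set (ℝ × ℂ)) (f : ℝ → ℂ → ℂ) : Prop :=
  MemX0W W f ∧
    ∃ g : ℝ → ℂ → ℂ, MemX0W W g ∧
      ∀ t x, (t, x) ∈ W → 0 < t →
        HasDerivWithinAt (fun s => f s x) (g t x / (t : ℂ)) {s : ℝ | (s, x) ∈ W} t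

/-- `w` solves `t ∂w/∂t = λ w + b ∂w/∂x + g` on the domain `W`. -/
def SolvesLW (W : Set (ℝ × ℂ)) (lam b g w : ℝ → ℂ → ℂ) : Prop :=
  ∀ t x, (t, x) ∈ W → 0 < t →
    HasDerivWithinAt (fun s => w s x)
      ((lam t x * w t x + b t x * deriv (w t) x + g t x) / (t : ℂ))
      {s : ℝ | (s, x) ∈ W} t

/-- `v` solves the homogeneous linear equation `t ∂v/∂t = λ v + b ∂v/∂x`
on the product domain `S × D_R`. -/
def SolvesLin (S : Set ℝ) (R : ℝ) (lam b : ℝ → ℂ → ℂ) (v : ℝ → ℂ → ℂ) : Prop :=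
  ∀ t ∈ S, 0 < t → ∀ x ∈ Metric.ball (0 : ℂ) R,
    HasDerivWithinAt (fun s => v s x)
      ((lam t x * v t x + b t x * deriv (v t) x) / (t : ℂ)) S t

/-- the characteristic domain `𝒟 = ⋃_{x₀ ∈ D_{R₁}} {(t, φ(t;T,x₀)) : 0 < t ≤ T}`. -/
def Dchar (T R₁ : ℝ) (Φ : ℝ → ℝ → ℂ → ℂ) : Set (ℝ × ℂ) :=
  {p : ℝ × ℂ | p.1 ∈ Set.Ioc (0 : ℝ) T ∧ ∃ x₀ ∈ Metric.ball (0 : ℂ) R₁, p.2 = Φ p.1 T x₀}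

/-- the domain `W = {(t,x) ∈ [0,T] × D_R : φ(t)/r + |x| < R}`. -/
def Wset (m : ℝ → ℝ) (T R r : ℝ) : Set (ℝ × ℂ) :=
  {p : ℝ × ℂ | p.1 ∈ Set.Icc (0 : ℝ) T ∧ p.2 ∈ Metric.ball (0 : ℂ) R ∧
    wphi m p.1 / r + ‖p.2‖ < R}

theorem aux_int_sub {m : ℝ → ℝ} {T₀ s t : ℝ} (hm : IsWeight T₀ m) (hs : 0 ≤ s) (hst : s ≤ t)
    (ht : t ≤ T₀) : ∫ τ in Set.Ioc s t, m τ / τ = wphi m t - wphi m s := by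
  have hi := hm.2.2.2
  unfold wphi
  rw [← Set.Ioc_union_Ioc_eq_Ioc hs hst, setIntegral_union (Set.Ioc_disjoint_Ioc_of_le le_rfl)
    measurableSet_Ioc (hi.mono_set (Set.Ioc_subset_Ioc_right (hst.trans ht)))
    (hi.mono_set (Set.Ioc_subset_Ioc hs ht))]
  ring

theorem aux_wphi_mono {m : ℝ → ℝ} {T₀ s t : ℝ} (hm : IsWeight T₀ m) (hs : 0 ≤ s) (hst : s ≤ t)
    (ht : t ≤ T₀) : wphi m s ≤ wphi m t := by
  have h := aux_int_sub hm hs hst ht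
  have : 0 ≤ ∫ τ in Set.Ioc s t, m τ / τ := by
    apply setIntegral_nonneg measurableSet_Ioc
    intro x hx
    have hx0 : 0 < x := lt_of_le_of_lt hs hx.1
    exact (div_pos (hm.2.2.1 x ⟨hx0, hx.2.trans ht⟩) hx0).le
  linarith

theorem aux_wphi_zero (m : ℝ → ℝ) : wphi m 0 = 0 := by simp [wphi]

theorem aux_wphi_cont {m : ℝ → ℝ} {T₀ : ℝ} (hm : IsWeight T₀ m) :
    ContinuousOn (wphi m) (Set.Icc 0 T₀) := by
  apply intervalIntegral.continuousOn_primitive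
  rw [integrableOn_Icc_iff_integrableOn_Ioc]
  exact hm.2.2.2

/-- integrability and bound from domination by `M m(σ)/σ`. -/
theorem aux_integrable {m : ℝ → ℝ} {T₀ s t M : ℝ} (hm : IsWeight T₀ m) (hs : 0 ≤ s)
    (ht : t ≤ T₀) {f : ℝ → ℂ} (hf : ContinuousOn f (Set.Ioc s t))
    (hb : ∀ σ ∈ Set.Ioc s t, ‖f σ‖ ≤ M * (m σ / σ)) : IntegrableOn f (Set.Ioc s t) := by
  have hi : IntegrableOn (fun σ => M * (m σ / σ)) (Set.Ioc s t) :=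
    (hm.2.2.2.mono_set (Set.Ioc_subset_Ioc hs ht)).const_mul M
  exact Integrable.mono' hi (hf.aestronglyMeasurable measurableSet_Ioc)
    ((ae_restrict_iff' measurableSet_Ioc).2 (Eventually.of_forall hb))

theorem aux_norm_int_le {m : ℝ → ℝ} {T₀ s t M : ℝ} (hm : IsWeight T₀ m) (hs : 0 ≤ s)
    (hst : s ≤ t) (ht : t ≤ T₀) {f : ℝ → ℂ}
    (hb : ∀ σ ∈ Set.Ioc s t, ‖f σ‖ ≤ M * (m σ / σ)) :
    ‖∫ σ in Set.Ioc s t, f σ‖ ≤ M * (wphi m t - wphi m s) := by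
  have hi : IntegrableOn (fun σ => M * (m σ / σ)) (Set.Ioc s t) :=
    (hm.2.2.2.mono_set (Set.Ioc_subset_Ioc hs ht)).const_mul M
  have h := norm_integral_le_of_norm_le hi
    ((ae_restrict_iff' measurableSet_Ioc).2 (Eventually.of_forall hb))
  rw [integral_const_mul, aux_int_sub hm hs hst ht] at h
  exact h

/-- Cauchy estimate for the derivative. -/
theorem aux_deriv_bound {f : ℂ → ℂ} {R₀ ρ M : ℝ} (hρ : ρ < R₀)
    (hf : DifferentiableOn ℂ f (ball 0 R₀)) (hM : ∀ x ∈ ball (0:ℂ) R₀, ‖f x‖ ≤ M)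
    {p : ℂ} (hp : p ∈ closedBall (0:ℂ) ρ) : ‖deriv f p‖ ≤ 2 * M / (R₀ - ρ) := by
  have hd : 0 < (R₀ - ρ) / 2 := by linarith
  have hsub : closedBall p ((R₀ - ρ) / 2) ⊆ ball (0:ℂ) R₀ := by
    intro z hz
    rw [mem_closedBall] at hz hp
    rw [mem_ball]
    have := dist_triangle z p 0
    linarith
  have h := Complex.norm_deriv_le_of_forall_mem_sphere_norm_le (f := f) (c := p) hd
    (DifferentiableOn.diffContOnCl (by
      rw [closure_ball _ hd.ne']
      exact hf.mono hsub)) (fun z hz => hM z (hsub (sphere_subset_closedBall hz)))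
  refine h.trans (le_of_eq ?_)
  field_simp

theorem aux_lip {f : ℂ → ℂ} {R₀ ρ M : ℝ} (hρ : ρ < R₀)
    (hf : DifferentiableOn ℂ f (ball 0 R₀)) (hM : ∀ x ∈ ball (0:ℂ) R₀, ‖f x‖ ≤ M)
    {p q : ℂ} (hp : p ∈ closedBall (0:ℂ) ρ) (hq : q ∈ closedBall (0:ℂ) ρ) :
    ‖f q - f p‖ ≤ 2 * M / (R₀ - ρ) * ‖q - p‖ := by
  apply Convex.norm_image_sub_le_of_norm_deriv_le (𝕜 := ℂ) (s := closedBall (0:ℂ) ρ)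
  · intro x hx
    exact hf.differentiableAt (isOpen_ball.mem_nhds (closedBall_subset_ball hρ hx))
  · intro x hx
    exact aux_deriv_bound hρ hf hM hx
  · exact convex_closedBall _ _
  · exact hp
  · exact hq

/-- explicit solution of the linear equation `δ' = -c δ`. -/
theorem aux_lin {s t : ℝ} (hst : s ≤ t) {δ c : ℝ → ℂ} (hδ : ContinuousOn δ (Set.Icc s t))
    (hc : ContinuousOn c (Set.Ioc s t)) (hci : IntegrableOn c (Set.Ioc s t))
    (hd : ∀ σ ∈ Set.Ioo s t, HasDerivAt δ (-(c σ) * δ σ) σ) :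
    δ t * Complex.exp (∫ σ in Set.Ioc s t, c σ) = δ s := by
  have hcii : IntervalIntegrable c volume s t :=
    (intervalIntegrable_iff_integrableOn_Ioc_of_le hst).2 hci
  have hcont : ContinuousOn (fun σ => ∫ τ in Set.Ioc s σ, c τ) (Set.Icc s t) := by
    apply intervalIntegral.continuousOn_primitive
    rw [integrableOn_Icc_iff_integrableOn_Ioc]
    exact hci
  have hder : ∀ σ ∈ Set.Ioo s t, HasDerivAt
      (fun σ => δ σ * Complex.exp (∫ τ in Set.Ioc s σ, c τ)) ((fun _ => (0:ℂ)) σ) σ := by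
    intro σ hσ
    have hnb : Set.Ioc s t ∈ 𝓝 σ := Ioc_mem_nhds hσ.1 hσ.2
    have h1 : HasDerivAt (fun u => ∫ x in s..u, c x) (c σ) σ := by
      apply intervalIntegral.integral_hasDerivAt_right
      · exact hcii.mono_set (by
          rw [Set.uIcc_of_le hst, Set.uIcc_of_le hσ.1.le]
          exact Set.Icc_subset_Icc_right hσ.2.le)
      · exact ⟨Set.Ioc s t, hnb, hc.aestronglyMeasurable measurableSet_Ioc⟩
      · exact hc.continuousAt hnb
    have h2 : HasDerivAt (fun u => ∫ x in Set.Ioc s u, c x) (c σ) σ := by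
      apply h1.congr_of_eventuallyEq
      filter_upwards [Ioi_mem_nhds hσ.1] with u hu
      rw [intervalIntegral.integral_of_le (le_of_lt hu)]
    have h3 := (hd σ hσ).mul h2.cexp
    refine h3.congr_deriv ?_
    ring
  have h := intervalIntegral.integral_eq_sub_of_hasDerivAt_of_le hst
    (hδ.mul hcont.cexp) hder (by simp)
  simp at h
  exact (sub_eq_zero.1 h.symm)

/-- one-sided fundamental theorem of calculus. -/
theorem aux_ftc {T t : ℝ} (ht : t ∈ Set.Ioc 0 T) {c : ℝ → ℂ}
    (hc : ContinuousOn c (Set.Ioc 0 T)) (hci : IntegrableOn c (Set.Ioc 0 T)) :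
    HasDerivWithinAt (fun u => ∫ x in Set.Ioc 0 u, c x) (c t) (Set.Icc 0 T) t := by
  have hT : 0 < T := ht.1.trans_le ht.2
  have hg : ContinuousOn (fun s => c (min s T)) (Set.Ioi 0) := by
    apply hc.comp (by fun_prop)
    intro s hs
    exact ⟨lt_min hs hT, min_le_right _ _⟩
  have hnb : Set.Ioi 0 ∈ 𝓝 t := Ioi_mem_nhds ht.1
  have hcg : ∀ u ∈ Set.Icc 0 T, ∫ x in Set.Ioc 0 u, c x = ∫ x in (0:ℝ)..u, c (min x T) := by
    intro u hu
    rw [intervalIntegral.integral_of_le hu.1]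
    apply setIntegral_congr_fun measurableSet_Ioc
    intro x hx
    simp only
    rw [min_eq_left (hx.2.trans hu.2)]
  have h1 : HasDerivAt (fun u => ∫ x in (0:ℝ)..u, c (min x T)) (c (min t T)) t := by
    apply intervalIntegral.integral_hasDerivAt_right
    · rw [intervalIntegrable_iff_integrableOn_Ioc_of_le ht.1.le]
      refine IntegrableOn.congr_fun (hci.mono_set (Set.Ioc_subset_Ioc_right ht.2)) ?_
        measurableSet_Ioc
      intro x hx
      simp only
      rw [min_eq_left (hx.2.trans ht.2)]
    · exact ⟨Set.Ioi 0, hnb, hg.aestronglyMeasurable measurableSet_Ioi⟩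
    · exact hg.continuousAt hnb
  rw [min_eq_left ht.2] at h1
  exact h1.hasDerivWithinAt.congr hcg (hcg t ⟨ht.1.le, ht.2⟩)

/-- the standing hypotheses on the characteristics. -/
structure CharCtx (T₀ R₀ : ℝ) (m : ℝ → ℝ) (b : ℝ → ℂ → ℂ) (B T R r : ℝ)
    (Φ : ℂ → ℝ → ℂ) : Prop where
  hm : IsWeight T₀ m
  hbX : MemX0 (Set.Icc 0 T₀) R₀ b
  hB : 0 < B
  hb : ∀ t ∈ Set.Ioc (0:ℝ) T₀, ∀ x ∈ Metric.ball (0:ℂ) R₀, ‖b t x‖ ≤ B * m t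
  hT : 0 < T
  hTT : T < T₀
  hR : 0 < R
  hRR : R < R₀
  hr : 0 < r
  hrB : r ≤ 1 / B
  hΦ0 : ∀ x₀ ∈ Metric.ball (0:ℂ) R, Φ x₀ 0 = x₀
  hΦc : ∀ x₀ ∈ Metric.ball (0:ℂ) R, ContinuousOn (Φ x₀) (Set.Icc 0 T)
  hΦode : ∀ x₀ ∈ Metric.ball (0:ℂ) R, ∀ t ∈ Set.Ioc (0:ℝ) T,
      Φ x₀ t ∈ Metric.ball (0:ℂ) R₀ ∧
      HasDerivAt (Φ x₀) (-(b t (Φ x₀ t)) / (t:ℂ)) t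

/-- difference quotient of `b` along two characteristics, divided by `t`. -/
def Dq (b : ℝ → ℂ → ℂ) (Φ : ℂ → ℝ → ℂ) (x₁ x₂ : ℂ) (σ : ℝ) : ℂ :=
  (b σ (Φ x₂ σ) - b σ (Φ x₁ σ)) / (Φ x₂ σ - Φ x₁ σ) / (σ : ℂ)

namespace CharCtx

variable {T₀ R₀ : ℝ} {m : ℝ → ℝ} {b : ℝ → ℂ → ℂ} {B T R r : ℝ} {Φ : ℂ → ℝ → ℂ}

theorem mem_ball (h : CharCtx T₀ R₀ m b B T R r Φ) {x : ℂ} (hx : x ∈ ball (0:ℂ) R) {t : ℝ}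
    (ht : t ∈ Set.Icc 0 T) : Φ x t ∈ ball (0:ℂ) R₀ := by
  rcases ht.1.eq_or_lt with h0 | h0
  · rw [← h0, h.hΦ0 x hx]
    exact ball_subset_ball h.hRR.le hx
  · exact (h.hΦode x hx t ⟨h0, ht.2⟩).1

theorem comp_cont (h : CharCtx T₀ R₀ m b B T R r Φ) {f : ℝ → ℂ → ℂ}
    (hf : MemX0 (Set.Icc 0 T₀) R₀ f) {x : ℂ} (hx : x ∈ ball (0:ℂ) R) :
    ContinuousOn (fun s => f s (Φ x s)) (Set.Icc 0 T) := by
  have : ContinuousOn (fun s : ℝ => ((s, Φ x s) : ℝ × ℂ)) (Set.Icc 0 T) :=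
    continuousOn_id.prodMk (h.hΦc x hx)
  exact hf.1.comp this fun s hs => ⟨⟨hs.1, hs.2.trans h.hTT.le⟩, h.mem_ball hx hs⟩

theorem comp_div_cont (h : CharCtx T₀ R₀ m b B T R r Φ) {f : ℝ → ℂ → ℂ}
    (hf : MemX0 (Set.Icc 0 T₀) R₀ f) {x : ℂ} (hx : x ∈ ball (0:ℂ) R) :
    ContinuousOn (fun s => f s (Φ x s) / (s:ℂ)) (Set.Ioc 0 T) := by
  apply ((h.comp_cont hf hx).mono Set.Ioc_subset_Icc_self).div (by fun_prop)
  intro s hs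
  exact_mod_cast hs.1.ne'

theorem comp_div_bound (h : CharCtx T₀ R₀ m b B T R r Φ) {f : ℝ → ℂ → ℂ} {M : ℝ}
    (hf : ∀ t ∈ Set.Ioc (0:ℝ) T₀, ∀ x ∈ Metric.ball (0:ℂ) R₀, ‖f t x‖ ≤ M * m t)
    {x : ℂ} (hx : x ∈ ball (0:ℂ) R) {s : ℝ} (hs : s ∈ Set.Ioc 0 T) :
    ‖f s (Φ x s) / (s:ℂ)‖ ≤ M * (m s / s) := by
  rw [norm_div, Complex.norm_real, Real.norm_of_nonneg hs.1.le, ← mul_div_assoc]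
  have := hf s ⟨hs.1, hs.2.trans h.hTT.le⟩ _ (h.mem_ball hx ⟨hs.1.le, hs.2⟩)
  have := hs.1
  gcongr

theorem comp_div_int (h : CharCtx T₀ R₀ m b B T R r Φ) {f : ℝ → ℂ → ℂ} {M : ℝ}
    (hfX : MemX0 (Set.Icc 0 T₀) R₀ f)
    (hf : ∀ t ∈ Set.Ioc (0:ℝ) T₀, ∀ x ∈ Metric.ball (0:ℂ) R₀, ‖f t x‖ ≤ M * m t)
    {x : ℂ} (hx : x ∈ ball (0:ℂ) R) :
    IntegrableOn (fun s => f s (Φ x s) / (s:ℂ)) (Set.Ioc 0 T) :=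
  aux_integrable h.hm le_rfl h.hTT.le (h.comp_div_cont hfX hx)
    fun _ hs => h.comp_div_bound hf hx hs

theorem lip_t (h : CharCtx T₀ R₀ m b B T R r Φ) {x : ℂ} (hx : x ∈ ball (0:ℂ) R) {s t : ℝ}
    (hs : 0 ≤ s) (hst : s ≤ t) (ht : t ≤ T) :
    ‖Φ x t - Φ x s‖ ≤ B * (wphi m t - wphi m s) := by
  have hi := (h.comp_div_int h.hbX h.hb hx).mono_set (Set.Ioc_subset_Ioc hs ht)
  have h1 := intervalIntegral.integral_eq_sub_of_hasDerivAt_of_le hst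
    ((h.hΦc x hx).mono (Set.Icc_subset_Icc hs ht))
    (f' := fun σ => -(b σ (Φ x σ) / (σ:ℂ)))
    (fun σ hσ => by
      have := (h.hΦode x hx σ ⟨hs.trans_lt hσ.1, hσ.2.le.trans ht⟩).2
      rwa [neg_div] at this)
    ((intervalIntegrable_iff_integrableOn_Ioc_of_le hst).2 hi.neg)
  rw [← h1, intervalIntegral.integral_of_le hst]
  apply aux_norm_int_le h.hm hs hst (ht.trans h.hTT.le)
  intro σ hσ
  rw [norm_neg]
  exact h.comp_div_bound h.hb hx ⟨hs.trans_lt hσ.1, hσ.2.trans ht⟩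

theorem range_bdd (h : CharCtx T₀ R₀ m b B T R r Φ) {x : ℂ} (hx : x ∈ ball (0:ℂ) R) :
    ∃ ρ < R₀, ∀ t ∈ Set.Icc 0 T, Φ x t ∈ closedBall (0:ℂ) ρ := by
  obtain ⟨t, ht, hmax⟩ := isCompact_Icc.exists_isMaxOn (Set.nonempty_Icc.2 h.hT.le)
    (h.hΦc x hx).norm
  refine ⟨‖Φ x t‖, by simpa using h.mem_ball hx ht, fun s hs => ?_⟩
  simpa using hmax hs

theorem inj (h : CharCtx T₀ R₀ m b B T R r Φ) {x y : ℂ} (hx : x ∈ ball (0:ℂ) R)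
    (hy : y ∈ ball (0:ℂ) R) {t : ℝ} (ht : t ∈ Set.Icc 0 T) (he : Φ x t = Φ y t) : x = y := by
  obtain ⟨ρ₁, hρ₁, hb₁⟩ := h.range_bdd hx
  obtain ⟨ρ₂, hρ₂, hb₂⟩ := h.range_bdd hy
  set ρ := max ρ₁ ρ₂
  have hρ : ρ < R₀ := max_lt hρ₁ hρ₂
  have key : ∀ ε ∈ Set.Ioc 0 t, Φ x ε = Φ y ε := by
    intro ε hε
    have hmT : 0 < m T := h.hm.2.2.1 T ⟨h.hT, h.hTT.le⟩
    have hK : 0 ≤ 2 * (B * m T) / (R₀ - ρ) / ε := by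
      have : 0 < R₀ - ρ := by linarith
      have := h.hB
      have := hε.1
      positivity
    have := ODE_solution_unique_of_mem_Icc_left (v := fun σ z => -(b σ z) / (σ:ℂ))
      (s := fun _ => closedBall (0:ℂ) ρ) (K := ⟨_, hK⟩) (f := Φ x) (g := Φ y) (a := ε) (b := t)
      ?_ ((h.hΦc x hx).mono (Set.Icc_subset_Icc hε.1.le ht.2))
      (fun σ hσ => ((h.hΦode x hx σ ⟨hε.1.trans hσ.1, hσ.2.trans ht.2⟩).2).hasDerivWithinAt)
      (fun σ hσ => closedBall_subset_closedBall (le_max_left _ _)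
        (hb₁ σ ⟨(hε.1.trans hσ.1).le, hσ.2.trans ht.2⟩))
      ((h.hΦc y hy).mono (Set.Icc_subset_Icc hε.1.le ht.2))
      (fun σ hσ => ((h.hΦode y hy σ ⟨hε.1.trans hσ.1, hσ.2.trans ht.2⟩).2).hasDerivWithinAt)
      (fun σ hσ => closedBall_subset_closedBall (le_max_right _ _)
        (hb₂ σ ⟨(hε.1.trans hσ.1).le, hσ.2.trans ht.2⟩)) he
    · exact this ⟨le_rfl, hε.2⟩
    · intro σ hσ
      have hσ0 : 0 < σ := hε.1.trans hσ.1
      have hσT : σ ≤ T := hσ.2.trans ht.2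
      apply LipschitzOnWith.of_dist_le_mul
      intro p hp q hq
      have h1 := aux_lip hρ (h.hbX.2 σ ⟨hσ0.le, hσT.trans h.hTT.le⟩)
        (h.hb σ ⟨hσ0, hσT.trans h.hTT.le⟩) hq hp
      have h2 : m σ ≤ m T := h.hm.1 ⟨hσ0, hσT.trans h.hTT.le⟩ ⟨h.hT, h.hTT.le⟩ hσT
      have h3 : 0 < R₀ - ρ := by linarith
      have h4 := h.hB
      have h5 := hε.1
      rw [dist_eq_norm, dist_eq_norm, ← sub_div, norm_div, Complex.norm_real,
        Real.norm_of_nonneg hσ0.le]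
      have e1 : ‖-b σ p - -b σ q‖ = ‖b σ p - b σ q‖ := by
        rw [← norm_neg]; congr 1; ring
      rw [e1]
      change _ ≤ 2 * (B * m T) / (R₀ - ρ) / ε * ‖p - q‖
      rw [div_mul_eq_mul_div]
      have h6 : 2 * (B * m σ) / (R₀ - ρ) * ‖p - q‖ ≤ 2 * (B * m T) / (R₀ - ρ) * ‖p - q‖ := by
        gcongr
      exact div_le_div₀ (by positivity) (h1.trans h6) h5 hσ.1.le
  rcases ht.1.eq_or_lt with h0 | h0
  · rw [← h0, h.hΦ0 x hx, h.hΦ0 y hy] at he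
    exact he
  · have hc : ContinuousOn (fun s => Φ x s - Φ y s) (Set.Icc 0 t) :=
      ((h.hΦc x hx).sub (h.hΦc y hy)).mono (Set.Icc_subset_Icc_right ht.2)
    have h1 := (hc 0 ⟨le_rfl, h0.le⟩).mono (Set.Ioc_subset_Icc_self)
    have h2 : Tendsto (fun s => Φ x s - Φ y s) (𝓝[Set.Ioc 0 t] 0) (𝓝 0) := by
      apply tendsto_const_nhds.congr'
      filter_upwards [self_mem_nhdsWithin] with s hs
      rw [key s hs, sub_self]
    have : (𝓝[Set.Ioc 0 t] (0:ℝ)).NeBot := by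
      rw [nhdsWithin_Ioc_eq_nhdsGT h0]
      infer_instance
    have h3 := tendsto_nhds_unique h1.tendsto h2
    rw [h.hΦ0 x hx, h.hΦ0 y hy] at h3
    exact sub_eq_zero.1 h3

theorem Dq_cont (h : CharCtx T₀ R₀ m b B T R r Φ) {x y : ℂ} (hx : x ∈ ball (0:ℂ) R)
    (hy : y ∈ ball (0:ℂ) R) (hne : x ≠ y) : ContinuousOn (Dq b Φ x y) (Set.Ioc 0 T) := by
  have hsub : Set.Ioc 0 T ⊆ Set.Icc 0 T := Set.Ioc_subset_Icc_self
  apply ContinuousOn.div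
  · apply ContinuousOn.div
    · exact ((h.comp_cont h.hbX hy).sub (h.comp_cont h.hbX hx)).mono hsub
    · exact ((h.hΦc y hy).sub (h.hΦc x hx)).mono hsub
    · intro s hs h0
      exact hne (h.inj hx hy (hsub hs) (sub_eq_zero.1 h0).symm)
  · fun_prop
  · intro s hs
    exact_mod_cast hs.1.ne'

theorem Dq_bound (h : CharCtx T₀ R₀ m b B T R r Φ) {x y : ℂ} {ρ : ℝ} (hρ : ρ < R₀) {σ : ℝ}
    (hσ : σ ∈ Set.Ioc 0 T) (hxb : Φ x σ ∈ closedBall (0:ℂ) ρ) (hyb : Φ y σ ∈ closedBall (0:ℂ) ρ) :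
    ‖Dq b Φ x y σ‖ ≤ 2 * B / (R₀ - ρ) * (m σ / σ) := by
  have hσ' : σ ≤ T₀ := hσ.2.trans h.hTT.le
  have h1 := aux_lip hρ (h.hbX.2 σ ⟨hσ.1.le, hσ'⟩) (h.hb σ ⟨hσ.1, hσ'⟩) hxb hyb
  have hm0 := h.hm.2.2.1 σ ⟨hσ.1, hσ'⟩
  have h3 : 0 < R₀ - ρ := by linarith
  have h4 := h.hB
  have h5 := hσ.1
  unfold Dq
  rw [norm_div, norm_div, Complex.norm_real, Real.norm_of_nonneg hσ.1.le, ← mul_div_assoc]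
  gcongr
  refine div_le_of_le_mul₀ (norm_nonneg _) (by positivity) (h1.trans (le_of_eq ?_))
  ring

theorem diff_formula (h : CharCtx T₀ R₀ m b B T R r Φ) {x y : ℂ} (hx : x ∈ ball (0:ℂ) R)
    (hy : y ∈ ball (0:ℂ) R) (hne : x ≠ y) {ρ : ℝ} (hρ : ρ < R₀) {s t : ℝ} (hs : 0 ≤ s)
    (hst : s ≤ t) (ht : t ≤ T) (hxb : ∀ σ ∈ Set.Ioc s t, Φ x σ ∈ closedBall (0:ℂ) ρ)
    (hyb : ∀ σ ∈ Set.Ioc s t, Φ y σ ∈ closedBall (0:ℂ) ρ) :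
    (Φ y t - Φ x t) * Complex.exp (∫ σ in Set.Ioc s t, Dq b Φ x y σ) = Φ y s - Φ x s := by
  have hsub : Set.Ioc s t ⊆ Set.Ioc 0 T := Set.Ioc_subset_Ioc hs ht
  have hc := (h.Dq_cont hx hy hne).mono hsub
  refine aux_lin hst (δ := fun σ => Φ y σ - Φ x σ)
    (((h.hΦc y hy).sub (h.hΦc x hx)).mono (Set.Icc_subset_Icc hs ht)) hc
    (aux_integrable h.hm hs (ht.trans h.hTT.le) hc fun σ hσ =>
      h.Dq_bound hρ (hsub hσ) (hxb σ hσ) (hyb σ hσ)) ?_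
  intro σ hσ
  have hσ' := hsub ⟨hσ.1, hσ.2.le⟩
  refine ((h.hΦode y hy σ hσ').2.sub (h.hΦode x hx σ hσ').2).congr_deriv ?_
  have h0 : Φ y σ - Φ x σ ≠ 0 := fun h0 =>
    hne (h.inj hx hy ⟨hσ'.1.le, hσ'.2⟩ (sub_eq_zero.1 h0).symm)
  have h1 : (σ:ℂ) ≠ 0 := by exact_mod_cast hσ'.1.ne'
  unfold Dq
  field_simp
  ring

theorem Dq_int_bound (h : CharCtx T₀ R₀ m b B T R r Φ) {x y : ℂ}
    {ρ : ℝ} (hρ : ρ < R₀) {s t : ℝ} (hs : 0 ≤ s)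
    (hst : s ≤ t) (ht : t ≤ T) (hxb : ∀ σ ∈ Set.Ioc s t, Φ x σ ∈ closedBall (0:ℂ) ρ)
    (hyb : ∀ σ ∈ Set.Ioc s t, Φ y σ ∈ closedBall (0:ℂ) ρ) :
    ‖∫ σ in Set.Ioc s t, Dq b Φ x y σ‖ ≤ 2 * B / (R₀ - ρ) * (wphi m t - wphi m s) := by
  apply aux_norm_int_le h.hm hs hst (ht.trans h.hTT.le)
  intro σ hσ
  exact h.Dq_bound hρ (Set.Ioc_subset_Ioc hs ht hσ) (hxb σ hσ) (hyb σ hσ)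

theorem rB (h : CharCtx T₀ R₀ m b B T R r Φ) {a : ℝ} (ha : 0 ≤ a) : B * a ≤ a / r := by
  have h1 := h.hrB
  have h2 := h.hr
  have h3 := h.hB
  rw [le_div_iff₀ h2]
  rw [le_div_iff₀ h3] at h1
  nlinarith

theorem wmono (h : CharCtx T₀ R₀ m b B T R r Φ) {s t : ℝ} (hs : 0 ≤ s) (hst : s ≤ t)
    (ht : t ≤ T) : wphi m s ≤ wphi m t := aux_wphi_mono h.hm hs hst (ht.trans h.hTT.le)

theorem wnonneg (h : CharCtx T₀ R₀ m b B T R r Φ) {t : ℝ} (hs : 0 ≤ t)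
    (ht : t ≤ T) : 0 ≤ wphi m t := by
  have := h.wmono le_rfl hs ht
  rwa [aux_wphi_zero] at this

theorem surj_step (h : CharCtx T₀ R₀ m b B T R r Φ) {s t : ℝ} (hs : 0 ≤ s) (hst : s ≤ t)
    (ht : t ≤ T) {η : ℝ} (h1 : wphi m t - wphi m s ≤ η)
    (h2 : B * η ≤ (R₀ - R) / 2) (h3 : 2 * B / (R₀ - (R + R₀) / 2) * η ≤ 1 / 4)
    (hS : ∀ z : ℂ, wphi m s / r + ‖z‖ < R → ∃ x ∈ ball (0:ℂ) R, Φ x s = z)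
    (x : ℂ) (hx : wphi m t / r + ‖x‖ < R) : ∃ x₀ ∈ ball (0:ℂ) R, Φ x₀ t = x := by
  have hRR := h.hRR
  have hB := h.hB
  have hr := h.hr
  have hρ : (R + R₀) / 2 < R₀ := by linarith
  have hK : 0 < 2 * B / (R₀ - (R + R₀) / 2) := by
    have : 0 < R₀ - (R + R₀) / 2 := by linarith
    positivity
  set ρ := (R + R₀) / 2 with hρd
  choose! p hp hpe using hS
  set a := wphi m t - wphi m s with ha
  have ha0 : 0 ≤ a := by have := h.wmono hs hst ht; linarith
  have hrB := h.rB ha0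
  have hws := h.wnonneg hs (hst.trans ht)
  have hz : ∀ z ∈ closedBall x (B * a), wphi m s / r + ‖z‖ < R := by
    intro z hz
    rw [mem_closedBall, dist_eq_norm] at hz
    have e1 : ‖z‖ ≤ ‖x‖ + ‖z - x‖ := norm_le_norm_add_norm_sub' z x
    have e2 : a / r = wphi m t / r - wphi m s / r := by rw [ha, sub_div]
    linarith
  have hBa : B * a ≤ (R₀ - R) / 2 := le_trans (by gcongr) h2
  have hbd : ∀ z ∈ closedBall x (B * a), ∀ σ ∈ Set.Ioc s t,
      Φ (p z) σ ∈ closedBall (0:ℂ) ρ := by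
    intro z hzm σ hσ
    have hzz := hz z hzm
    have e1 := h.lip_t (hp z hzz) hs hσ.1.le (hσ.2.trans ht)
    rw [hpe z hzz] at e1
    have e2 : B * (wphi m σ - wphi m s) ≤ B * a := by
      have := h.wmono (hs.trans hσ.1.le) hσ.2 ht
      rw [ha]
      gcongr
    have e3 : ‖Φ (p z) σ‖ ≤ ‖z‖ + ‖Φ (p z) σ - z‖ := norm_le_norm_add_norm_sub' _ _
    have e4 : 0 ≤ wphi m s / r := by positivity
    rw [mem_closedBall_zero_iff]
    linarith
  set G : ℂ → ℂ := fun z => x - (Φ (p z) t - z) with hG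
  have hmaps : MapsTo G (closedBall x (B * a)) (closedBall x (B * a)) := by
    intro z hzm
    have hzz := hz z hzm
    have e1 := h.lip_t (hp z hzz) hs hst ht
    rw [hpe z hzz] at e1
    rw [mem_closedBall, dist_eq_norm, hG]
    simpa [norm_sub_rev] using e1
  have hcon : ContractingWith (1/2) (hmaps.restrict G _ _) := by
    refine ⟨by rw [← NNReal.coe_lt_coe]; norm_num, LipschitzWith.of_dist_le_mul ?_⟩
    rintro ⟨z, hzm⟩ ⟨w, hwm⟩
    rw [Subtype.dist_eq, Subtype.dist_eq]
    simp only [MapsTo.val_restrict_apply, hG, dist_eq_norm]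
    by_cases hne : p z = p w
    · have : z = w := by rw [← hpe z (hz z hzm), ← hpe w (hz w hwm), hne]
      subst this
      simp
    · have e1 := h.diff_formula (hp z (hz z hzm)) (hp w (hz w hwm)) hne hρ hs hst ht
        (hbd z hzm) (hbd w hwm)
      have e2 := h.Dq_int_bound hρ hs hst ht (hbd z hzm) (hbd w hwm)
      rw [hpe z (hz z hzm), hpe w (hz w hwm)] at e1
      set I := ∫ σ in Set.Ioc s t, Dq b Φ (p z) (p w) σ
      have e3 : ‖-I‖ ≤ 1 / 4 := by
        rw [norm_neg]
        refine e2.trans (le_trans ?_ h3)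
        gcongr
      have e4 := Complex.norm_exp_sub_one_le (x := -I) (by linarith)
      have e5 : Φ (p w) t - Φ (p z) t = (w - z) * Complex.exp (-I) := by
        rw [← e1, mul_assoc, ← Complex.exp_add]
        simp
      have e6 : x - (Φ (p z) t - z) - (x - (Φ (p w) t - w)) =
          (w - z) * (Complex.exp (-I) - 1) := by
        linear_combination e5
      rw [e6, norm_mul, mul_comm, norm_sub_rev w z]
      have e7 : ‖Complex.exp (-I) - 1‖ ≤ 1 / 2 := by linarith
      have e8 : (((1/2 : NNReal)) : ℝ) = 1/2 := by norm_num
      rw [e8]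
      gcongr
  obtain ⟨z, hzm, hfix, -⟩ := ContractingWith.exists_fixedPoint'
    (isClosed_closedBall.isComplete) hmaps hcon
    (mem_closedBall_self (by positivity) : x ∈ closedBall x (B * a)) (edist_ne_top _ _)
  refine ⟨p z, hp z (hz z hzm), ?_⟩
  have : x - (Φ (p z) t - z) = z := hfix
  linear_combination -this

theorem surj (h : CharCtx T₀ R₀ m b B T R r Φ) {t : ℝ} (ht : t ∈ Set.Icc 0 T)
    (x : ℂ) (hx : wphi m t / r + ‖x‖ < R) : ∃ x₀ ∈ ball (0:ℂ) R, Φ x₀ t = x := by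
  have hRR := h.hRR
  have hB := h.hB
  obtain ⟨η, hη, h2, h3⟩ : ∃ η > 0, B * η ≤ (R₀ - R) / 2 ∧
      2 * B / (R₀ - (R + R₀) / 2) * η ≤ 1 / 4 := by
    have hd : 0 < R₀ - R := by linarith
    have hd2 : 0 < R₀ - (R + R₀) / 2 := by linarith
    refine ⟨min ((R₀ - R) / 2 / B) (1 / 4 / (2 * B / (R₀ - (R + R₀) / 2))), by positivity, ?_, ?_⟩
    · rw [← le_div_iff₀' hB]
      exact min_le_left _ _
    · rw [← le_div_iff₀' (by positivity)]
      exact min_le_right _ _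
  have key : ∀ n : ℕ, ∀ t ∈ Set.Icc 0 T, wphi m t ≤ n * η → ∀ x : ℂ, wphi m t / r + ‖x‖ < R →
      ∃ x₀ ∈ ball (0:ℂ) R, Φ x₀ t = x := by
    have base : ∀ t ∈ Set.Icc 0 T, wphi m t ≤ η → ∀ x : ℂ, wphi m t / r + ‖x‖ < R →
      ∃ x₀ ∈ ball (0:ℂ) R, Φ x₀ t = x := by
      intro t ht hle
      apply h.surj_step le_rfl ht.1 ht.2 (η := η) (by rw [aux_wphi_zero]; linarith) h2 h3
      intro z hz
      have hz' : z ∈ ball (0:ℂ) R := by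
        rw [aux_wphi_zero] at hz
        simpa using hz
      exact ⟨z, hz', h.hΦ0 z hz'⟩
    intro n
    induction n with
    | zero => 
      intro t ht hle
      exact base t ht (by simp at hle; linarith)
    | succ n ih =>
      intro t ht hle
      by_cases hc : wphi m t ≤ η
      · exact base t ht hc
      · push Not at hc
        have hcont : ContinuousOn (wphi m) (Set.Icc 0 t) :=
          (aux_wphi_cont h.hm).mono (Set.Icc_subset_Icc_right (ht.2.trans h.hTT.le))
        obtain ⟨s, hs, hse⟩ := intermediate_value_Icc ht.1 hcont
          (show wphi m t - η ∈ Set.Icc (wphi m 0) (wphi m t) by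
            rw [aux_wphi_zero]; constructor <;> linarith)
        refine h.surj_step hs.1 hs.2 ht.2 (by linarith) h2 h3
          (ih s ⟨hs.1, hs.2.trans ht.2⟩ ?_)
        push_cast at hle
        linarith
  obtain ⟨n, hn⟩ := exists_nat_ge (wphi m t / η)
  exact key n t ht (by rwa [div_le_iff₀ hη] at hn) x hx

theorem W_Icc {t : ℝ} {x : ℂ} (hp : (t, x) ∈ Wset m T R r) : t ∈ Set.Icc 0 T := hp.1

theorem W_norm {t : ℝ} {x : ℂ}
    (hp : (t, x) ∈ Wset m T R r) : ‖x‖ < R := by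
  simpa using hp.2.1

theorem W_mk (h : CharCtx T₀ R₀ m b B T R r Φ) {t : ℝ} {x : ℂ} (ht : t ∈ Set.Icc 0 T)
    (hx : wphi m t / r + ‖x‖ < R) : (t, x) ∈ Wset m T R r := by
  refine ⟨ht, ?_, hx⟩
  have := div_nonneg (h.wnonneg ht.1 ht.2) h.hr.le
  simp only [mem_ball_zero_iff]
  linarith

theorem W_back (h : CharCtx T₀ R₀ m b B T R r Φ) {t s : ℝ} {x : ℂ} (hx : x ∈ ball (0:ℂ) R)
    (hp : (t, Φ x t) ∈ Wset m T R r) (hs : 0 ≤ s) (hst : s ≤ t) :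
    (s, Φ x s) ∈ Wset m T R r := by
  have ht : t ∈ Set.Icc 0 T := hp.1
  have h1 := h.lip_t hx hs hst ht.2
  have h2 := h.rB (sub_nonneg.2 (h.wmono hs hst ht.2))
  have h3 : wphi m t / r + ‖Φ x t‖ < R := hp.2.2
  have e3 : ‖Φ x s‖ ≤ ‖Φ x t‖ + ‖Φ x t - Φ x s‖ := norm_le_norm_add_norm_sub _ _
  rw [sub_div] at h2
  exact h.W_mk ⟨hs, hst.trans ht.2⟩ (by linarith)

theorem W_nhds (h : CharCtx T₀ R₀ m b B T R r Φ) {t : ℝ} {x : ℂ}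
    (hp : (t, x) ∈ Wset m T R r) :
    ∀ᶠ p : ℝ × ℂ in 𝓝[Set.Icc 0 T ×ˢ Set.univ] (t, x), p ∈ Wset m T R r := by
  have hc : ContinuousOn (fun p : ℝ × ℂ => wphi m p.1 / r + ‖p.2‖)
      (Set.Icc 0 T ×ˢ Set.univ) := by
    apply ContinuousOn.add
    · apply ContinuousOn.div_const
      apply (aux_wphi_cont h.hm).comp continuousOn_fst
      intro p hp
      exact ⟨hp.1.1, hp.1.2.trans h.hTT.le⟩
    · fun_prop
  have h1 := (hc (t, x) ⟨hp.1, mem_univ _⟩).tendsto.eventually_lt_const hp.2.2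
  filter_upwards [h1, self_mem_nhdsWithin] with p h2 h3
  exact h.W_mk h3.1 h2

theorem W_sub (h : CharCtx T₀ R₀ m b B T R r Φ) :
    Wset m T R r ⊆ Set.Icc 0 T₀ ×ˢ ball (0:ℂ) R₀ := fun _ hp =>
  ⟨⟨hp.1.1, hp.1.2.trans h.hTT.le⟩, ball_subset_ball h.hRR.le hp.2.1⟩

theorem slice_open (h : CharCtx T₀ R₀ m b B T R r Φ) (t : ℝ) :
    IsOpen {y : ℂ | (t, y) ∈ Wset m T R r} := by
  rw [isOpen_iff_mem_nhds]
  intro x hx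
  have h1 := h.W_nhds hx
  have h2 : Tendsto (fun y : ℂ => (t, y)) (𝓝 x) (𝓝[Set.Icc 0 T ×ˢ Set.univ] (t, x)) := by
    apply tendsto_nhdsWithin_of_tendsto_nhds_of_eventually_within
    · exact (Continuous.prodMk_right t).tendsto x
    · exact Eventually.of_forall fun y => ⟨hx.1, mem_univ _⟩
  exact h2.eventually h1

/-- joint continuity of the `x`-derivative. -/
theorem deriv_cont (h : CharCtx T₀ R₀ m b B T R r Φ) {f : ℝ → ℂ → ℂ}
    (hf : MemX0W (Wset m T R r) f) :
    ContinuousOn (fun p : ℝ × ℂ => deriv (f p.1) p.2) (Wset m T R r) := by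
  rintro ⟨t, x⟩ hp
  have h1 := h.W_nhds hp
  rw [nhdsWithin_prod_eq, nhdsWithin_univ] at h1
  obtain ⟨P, hP, Q, hQ, hPQ⟩ := eventually_prod_iff.1 h1
  obtain ⟨ε, hε, hεs⟩ := Metric.nhds_basis_closedBall.mem_iff.1 hQ
  have hsub : {s | P s} ∩ Set.Icc 0 T ⊆ {s | P s} := inter_subset_left
  have hcU : ContinuousOn (fun p : ℝ × ℂ => f p.1 p.2) ({s | P s} ×ˢ closedBall x ε) :=
    hf.1.mono fun p hp => hPQ hp.1 (hεs hp.2)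
  have htP : P t := mem_of_mem_nhdsWithin (show t ∈ Set.Icc 0 T from hp.1) hP
  have hu : TendstoUniformlyOn f (f t) (𝓝[{s | P s}] t) (closedBall x ε) := by
    rw [Metric.tendstoUniformlyOn_iff]
    intro e he
    have hK := isCompact_closedBall x ε
    have := hK.mem_uniformity_of_prod (f := f) (q := t) (s := {s | P s}) (u := {p | dist p.1 p.2 < e})
      hcU htP (Metric.dist_mem_uniformity he)
    obtain ⟨v, hv, hv2⟩ := this
    filter_upwards [hv] with s hs z hz
    rw [dist_comm]
    exact hv2 s hs z hz
  have hle : 𝓝[Wset m T R r] (t, x) ≤ comap Prod.fst (𝓝[{s | P s}] t) := by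
    rw [← tendsto_iff_comap]
    have a1 : Tendsto Prod.fst (𝓝[Wset m T R r] (t, x)) (𝓝[Set.Icc 0 T] t) := by
      apply tendsto_nhdsWithin_of_tendsto_nhds_of_eventually_within
      · exact (continuous_fst.tendsto (t, x)).mono_left nhdsWithin_le_nhds
      · filter_upwards [self_mem_nhdsWithin] with p hp using hp.1
    apply tendsto_nhdsWithin_of_tendsto_nhds_of_eventually_within
    · exact a1.mono_right nhdsWithin_le_nhds
    · exact a1.eventually hP
  rw [← tendsto_iff_comap] at hle
  have hu2 : TendstoUniformlyOn (fun p : ℝ × ℂ => f p.1) (f t) (𝓝[Wset m T R r] (t, x))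
      (ball x ε) := by
    intro u hu'
    exact hle.eventually ((hu u hu').mono fun s hs z hz => hs z (ball_subset_closedBall hz))
  have hd : ∀ s, P s → DifferentiableOn ℂ (f s) (ball x ε) := fun s hs =>
    (hf.2 s).mono fun z hz => hPQ hs (hεs (ball_subset_closedBall hz))
  have hu3 := hu2.tendstoLocallyUniformlyOn.deriv
    ((hle.eventually self_mem_nhdsWithin).mono fun p hp => hd p.1 hp) isOpen_ball
  refine hu3.tendsto_comp (g := fun p : ℝ × ℂ => p.2) ?_ (mem_ball_self hε) ?_
  · exact ((hd t htP).deriv isOpen_ball).continuousOn x (mem_ball_self hε)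
  · rw [isOpen_ball.nhdsWithin_eq (mem_ball_self hε)]
    exact (continuous_snd.tendsto (t, x)).mono_left nhdsWithin_le_nhds

open Classical in
/-- the foot `φ(0;t,x)` of the characteristic through `(t,x)`. -/
def foot (R : ℝ) (Φ : ℂ → ℝ → ℂ) (t : ℝ) (x : ℂ) : ℂ :=
  if h : ∃ x₀ ∈ ball (0:ℂ) R, Φ x₀ t = x then h.choose else 0

theorem foot_spec (h : CharCtx T₀ R₀ m b B T R r Φ) {t : ℝ} {x : ℂ}
    (hp : (t, x) ∈ Wset m T R r) :
    foot R Φ t x ∈ ball (0:ℂ) R ∧ Φ (foot R Φ t x) t = x := by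
  have he := h.surj hp.1 x hp.2.2
  unfold foot
  rw [dif_pos he]
  exact he.choose_spec

theorem foot_eq (h : CharCtx T₀ R₀ m b B T R r Φ) {t : ℝ} {x : ℂ} (hx : x ∈ ball (0:ℂ) R)
    (hp : (t, Φ x t) ∈ Wset m T R r) : foot R Φ t (Φ x t) = x :=
  h.inj (h.foot_spec hp).1 hx hp.1 (h.foot_spec hp).2

theorem foot_back (h : CharCtx T₀ R₀ m b B T R r Φ) {t s : ℝ} {x : ℂ}
    (hp : (t, x) ∈ Wset m T R r) (hs : 0 ≤ s) (hst : s ≤ t) :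
    (s, Φ (foot R Φ t x) s) ∈ Wset m T R r := by
  have h1 := h.foot_spec hp
  apply h.W_back h1.1 _ hs hst
  rw [h1.2]
  exact hp

theorem foot_ball (h : CharCtx T₀ R₀ m b B T R r Φ) {t s : ℝ} {x : ℂ}
    (hp : (t, x) ∈ Wset m T R r) (hs : 0 ≤ s) (hst : s ≤ t) :
    Φ (foot R Φ t x) s ∈ closedBall (0:ℂ) R := by
  have := h.foot_back hp hs hst
  exact ball_subset_closedBall this.2.1

theorem lip_back (h : CharCtx T₀ R₀ m b B T R r Φ) {t t' s : ℝ} {x x' : ℂ}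
    (hp : (t, x) ∈ Wset m T R r) (hp' : (t', x') ∈ Wset m T R r) (hs : 0 ≤ s) (hst : s ≤ t)
    (hst' : s ≤ t') :
    ‖Φ (foot R Φ t' x') s - Φ (foot R Φ t x) s‖ ≤
      Real.exp (2 * B / (R₀ - R) * wphi m T) * (‖x' - x‖ + B * |wphi m t' - wphi m t|) := by
  wlog htt : t ≤ t' generalizing t t' x x'
  · have := this hp' hp hst' hst (le_of_not_ge htt)
    rwa [norm_sub_rev, norm_sub_rev x', abs_sub_comm]
  have hB := h.hB
  obtain ⟨h1, h2⟩ := h.foot_spec hp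
  obtain ⟨h1', h2'⟩ := h.foot_spec hp'
  set p := foot R Φ t x
  set q := foot R Φ t' x'
  by_cases hne : p = q
  · rw [hne, sub_self, norm_zero]
    positivity
  have hb1 : ∀ σ ∈ Set.Ioc s t, Φ p σ ∈ closedBall (0:ℂ) R := fun σ hσ =>
    h.foot_ball hp (hs.trans hσ.1.le) hσ.2
  have hb2 : ∀ σ ∈ Set.Ioc s t, Φ q σ ∈ closedBall (0:ℂ) R := fun σ hσ =>
    h.foot_ball hp' (hs.trans hσ.1.le) (hσ.2.trans htt)
  have e1 := h.diff_formula h1 h1' hne h.hRR hs hst hp.1.2 hb1 hb2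
  have e2 := h.Dq_int_bound h.hRR hs hst hp.1.2 hb1 hb2
  have e3 := h.lip_t h1' hp.1.1 htt hp'.1.2
  rw [← e1, norm_mul, mul_comm]
  have hK : 0 < 2 * B / (R₀ - R) := by
    have : 0 < R₀ - R := sub_pos.2 h.hRR
    positivity
  have e4 : wphi m t - wphi m s ≤ wphi m T := by
    have := h.wnonneg hs (hst.trans hp.1.2)
    have := h.wmono hp.1.1 hp.1.2 le_rfl
    simp only at this
    linarith
  gcongr
  · refine (Complex.norm_exp_le_exp_norm _).trans (Real.exp_le_exp.2 (e2.trans ?_))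
    gcongr
  · rw [h2] 
    rw [h2'] at e3
    simp only at e3
    have e5 : ‖Φ q t - x‖ ≤ ‖x' - x‖ + ‖x' - Φ q t‖ := by
      calc ‖Φ q t - x‖ = ‖(x' - x) - (x' - Φ q t)‖ := by congr 1; ring
        _ ≤ _ := norm_sub_le _ _
    have e6 : B * (wphi m t' - wphi m t) ≤ B * |wphi m t' - wphi m t| := by
      gcongr
      exact le_abs_self _
    linarith

theorem back_tendsto (h : CharCtx T₀ R₀ m b B T R r Φ) {t s : ℝ} {x : ℂ}
    (hp : (t, x) ∈ Wset m T R r) (hs : 0 ≤ s) (hst : s ≤ t)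
    {l : Filter (ℝ × ℂ)} (hl : l ≤ 𝓝[Wset m T R r] (t, x)) (hls : ∀ᶠ p in l, s ≤ p.1) :
    Tendsto (fun p : ℝ × ℂ => Φ (foot R Φ p.1 p.2) s) l (𝓝 (Φ (foot R Φ t x) s)) := by
  rw [tendsto_iff_norm_sub_tendsto_zero]
  have hc : ContinuousWithinAt (fun p : ℝ × ℂ => Real.exp (2 * B / (R₀ - R) * wphi m T) *
      (‖p.2 - x‖ + B * |wphi m p.1 - wphi m t|)) (Wset m T R r) (t, x) := by
    have h1 : ContinuousWithinAt (fun p : ℝ × ℂ => wphi m p.1) (Wset m T R r) (t, x) := by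
      refine ContinuousOn.comp (aux_wphi_cont h.hm) continuousOn_fst ?_ _ hp
      intro p hp
      exact ⟨hp.1.1, hp.1.2.trans h.hTT.le⟩
    fun_prop
  have h2 := hc.tendsto.mono_left hl
  simp only [sub_self, norm_zero, abs_zero, mul_zero, add_zero] at h2
  refine squeeze_zero' (Eventually.of_forall fun _ => norm_nonneg _) ?_ h2
  have h3 : ∀ᶠ p in l, p ∈ Wset m T R r := hl self_mem_nhdsWithin
  filter_upwards [hls, h3] with p h4 h5
  exact h.lip_back hp h5 hs hst h4

theorem foot_cont (h : CharCtx T₀ R₀ m b B T R r Φ) :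
    ContinuousOn (fun p : ℝ × ℂ => foot R Φ p.1 p.2) (Wset m T R r) := by
  rintro ⟨t, x⟩ hp
  have h1 := h.back_tendsto hp le_rfl hp.1.1 le_rfl
    (by filter_upwards [self_mem_nhdsWithin] with p hp using hp.1.1)
  rw [h.hΦ0 _ (h.foot_spec hp).1] at h1
  refine h1.congr' ?_
  filter_upwards [self_mem_nhdsWithin] with p hp
  exact h.hΦ0 _ (h.foot_spec hp).1

/-- the integral in the exponent. -/
def expo (R : ℝ) (Φ : ℂ → ℝ → ℂ) (lam : ℝ → ℂ → ℂ) (t : ℝ) (x : ℂ) : ℂ :=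
  ∫ s in Set.Ioc (0:ℝ) t, lam s (Φ (foot R Φ t x) s) / (s:ℂ)

theorem expo_cont (h : CharCtx T₀ R₀ m b B T R r Φ) {lam : ℝ → ℂ → ℂ} {L : ℝ}
    (hX : MemX0 (Set.Icc 0 T₀) R₀ lam)
    (hL : ∀ t ∈ Set.Ioc (0:ℝ) T₀, ∀ x ∈ Metric.ball (0:ℂ) R₀, ‖lam t x‖ ≤ L * m t) :
    ContinuousOn (fun p : ℝ × ℂ => expo R Φ lam p.1 p.2) (Wset m T R r) := by
  rintro ⟨t, x⟩ hp
  set F : ℝ × ℂ → ℝ → ℂ := fun p => (Set.Ioc 0 p.1).indicator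
    (fun s => lam s (Φ (foot R Φ p.1 p.2) s) / (s:ℂ)) with hF
  have e1 : ∀ p ∈ Wset m T R r, expo R Φ lam p.1 p.2 = ∫ s in Set.Ioc 0 T, F p s := by
    intro p hp
    rw [hF, setIntegral_indicator measurableSet_Ioc,
      Set.inter_eq_self_of_subset_right (Set.Ioc_subset_Ioc_right hp.1.2)]
    rfl
  have hc : ContinuousWithinAt (fun p => ∫ s in Set.Ioc 0 T, F p s) (Wset m T R r) (t, x) := by
    apply continuousWithinAt_of_dominated (bound := fun s => L * (m s / s))
    · filter_upwards [self_mem_nhdsWithin] with p hp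
      apply AEStronglyMeasurable.indicator _ measurableSet_Ioc
      exact (h.comp_div_cont hX (h.foot_spec hp).1).aestronglyMeasurable measurableSet_Ioc
    · filter_upwards [self_mem_nhdsWithin] with p hp
      refine (ae_restrict_iff' measurableSet_Ioc).2 (Eventually.of_forall fun s hs => ?_)
      exact (norm_indicator_le_norm_self _ _).trans
        (h.comp_div_bound hL (h.foot_spec hp).1 hs)
    · exact (h.hm.2.2.2.mono_set (Set.Ioc_subset_Ioc_right h.hTT.le)).const_mul L
    · have hae : ∀ᵐ s ∂(volume.restrict (Set.Ioc 0 T)), s ≠ t :=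
        ae_restrict_of_ae (by simp [ae_iff])
      filter_upwards [hae, ae_restrict_mem measurableSet_Ioc] with s hst hs
      have hfst : Tendsto (fun p : ℝ × ℂ => p.1) (𝓝[Wset m T R r] (t, x)) (𝓝 t) :=
        (continuous_fst.tendsto (t, x)).mono_left nhdsWithin_le_nhds
      rcases lt_or_gt_of_ne hst with hlt | hgt
      · have ev : ∀ᶠ p : ℝ × ℂ in 𝓝[Wset m T R r] (t, x), s ≤ p.1 :=
          (hfst.eventually_const_lt hlt).mono fun _ hp => le_of_lt hp
        have h1 := h.back_tendsto hp hs.1.le hlt.le le_rfl ev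
        have h2 : ContinuousAt (lam s) (Φ (foot R Φ t x) s) :=
          ((hX.2 s ⟨hs.1.le, hs.2.trans h.hTT.le⟩).differentiableAt
            (isOpen_ball.mem_nhds (h.mem_ball (h.foot_spec hp).1 ⟨hs.1.le, hs.2⟩))).continuousAt
        have h3 := (h2.tendsto.comp h1).div_const (s:ℂ)
        have h4 : F (t, x) s = lam s (Φ (foot R Φ t x) s) / (s:ℂ) :=
          Set.indicator_of_mem (show s ∈ Set.Ioc 0 t from ⟨hs.1, hlt.le⟩) _
        change Tendsto (fun p => F p s) _ (𝓝 (F (t, x) s))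
        rw [h4]
        refine h3.congr' ?_
        filter_upwards [ev] with p hp
        have h5 : F p s = lam s (Φ (foot R Φ p.1 p.2) s) / (s:ℂ) :=
          Set.indicator_of_mem (show s ∈ Set.Ioc 0 p.1 from ⟨hs.1, hp⟩) _
        exact h5.symm
      · have ev := hfst.eventually_lt_const hgt
        have h4 : F (t, x) s = 0 :=
          Set.indicator_of_notMem (show s ∉ Set.Ioc 0 t from fun h' => absurd h'.2 (not_le.2 hgt)) _
        change Tendsto (fun p => F p s) _ (𝓝 (F (t, x) s))
        rw [h4]
        refine tendsto_const_nhds.congr' ?_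
        filter_upwards [ev] with p hp
        have h5 : F p s = 0 := Set.indicator_of_notMem
          (show s ∉ Set.Ioc 0 p.1 from fun h' => absurd h'.2 (not_le.2 hp)) _
        exact h5.symm
  exact hc.congr e1 (e1 _ hp)

theorem back_deriv (h : CharCtx T₀ R₀ m b B T R r Φ) {t s : ℝ} {x : ℂ}
    (hp : (t, x) ∈ Wset m T R r) (hs : 0 ≤ s) (hst : s ≤ t) :
    HasDerivAt (fun x' => Φ (foot R Φ t x') s)
      (Complex.exp (∫ σ in Set.Ioc s t, deriv (b σ) (Φ (foot R Φ t x) σ) / (σ:ℂ))) x := by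
  rw [hasDerivAt_iff_tendsto_slope]
  have evW : ∀ᶠ y in 𝓝[≠] x, (t, y) ∈ Wset m T R r :=
    nhdsWithin_le_nhds ((h.slice_open t).mem_nhds hp)
  have hp1 := (h.foot_spec hp).1
  have hne : ∀ y, (t, y) ∈ Wset m T R r → y ≠ x → foot R Φ t x ≠ foot R Φ t y := by
    intro y hy hyx he
    apply hyx
    rw [← (h.foot_spec hy).2, ← he, (h.foot_spec hp).2]
  have hlim : Tendsto (fun y => ∫ σ in Set.Ioc s t, Dq b Φ (foot R Φ t x) (foot R Φ t y) σ)
      (𝓝[≠] x) (𝓝 (∫ σ in Set.Ioc s t, deriv (b σ) (Φ (foot R Φ t x) σ) / (σ:ℂ))) := by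
    have hsub : Set.Ioc s t ⊆ Set.Ioc 0 T := Set.Ioc_subset_Ioc hs hp.1.2
    apply tendsto_integral_filter_of_dominated_convergence
      (fun σ => 2 * B / (R₀ - R) * (m σ / σ))
    · filter_upwards [evW, self_mem_nhdsWithin] with y hy hyx
      exact ((h.Dq_cont hp1 (h.foot_spec hy).1 (hne y hy hyx)).mono hsub).aestronglyMeasurable
        measurableSet_Ioc
    · filter_upwards [evW] with y hy
      refine (ae_restrict_iff' measurableSet_Ioc).2 (Eventually.of_forall fun σ hσ => ?_)
      exact h.Dq_bound h.hRR (hsub hσ) (h.foot_ball hp (hs.trans hσ.1.le) hσ.2)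
        (h.foot_ball hy (hs.trans hσ.1.le) hσ.2)
    · exact (h.hm.2.2.2.mono_set (Set.Ioc_subset_Ioc hs (hp.1.2.trans h.hTT.le))).const_mul _
    · refine (ae_restrict_iff' measurableSet_Ioc).2 (Eventually.of_forall fun σ hσ => ?_)
      have hσ' := hsub hσ
      apply Tendsto.div_const
      have hd : DifferentiableAt ℂ (b σ) (Φ (foot R Φ t x) σ) :=
        (h.hbX.2 σ ⟨hσ'.1.le, hσ'.2.trans h.hTT.le⟩).differentiableAt
          (isOpen_ball.mem_nhds (h.mem_ball hp1 ⟨hσ'.1.le, hσ'.2⟩))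
      have h1 := hasDerivAt_iff_tendsto_slope.1 hd.hasDerivAt
      have h2 : Tendsto (fun y => Φ (foot R Φ t y) σ) (𝓝[≠] x) (𝓝[≠] (Φ (foot R Φ t x) σ)) := by
        apply tendsto_nhdsWithin_of_tendsto_nhds_of_eventually_within
        · have hm : Tendsto (fun y : ℂ => (t, y)) (𝓝[≠] x) (𝓝[Wset m T R r] (t, x)) := by
            apply tendsto_nhdsWithin_of_tendsto_nhds_of_eventually_within
            · exact ((Continuous.prodMk_right t).tendsto x).mono_left nhdsWithin_le_nhds
            · exact evW
          exact (h.back_tendsto hp hσ'.1.le hσ.2 hm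
            (eventually_map.2 (Eventually.of_forall fun _ => hσ.2))).comp tendsto_map
        · filter_upwards [evW, self_mem_nhdsWithin] with y hy hyx he
          exact hne y hy hyx (h.inj hp1 (h.foot_spec hy).1 ⟨hσ'.1.le, hσ'.2⟩ (Eq.symm he))
      refine (h1.comp h2).congr fun y => ?_
      simp [slope_def_field]
  refine (hlim.cexp).congr' ?_
  filter_upwards [evW, self_mem_nhdsWithin] with y hy hyx
  have e := h.diff_formula hp1 (h.foot_spec hy).1 (hne y hy hyx) h.hRR hs hst hp.1.2
    (fun σ hσ => h.foot_ball hp (hs.trans hσ.1.le) hσ.2)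
    (fun σ hσ => h.foot_ball hy (hs.trans hσ.1.le) hσ.2)
  rw [(h.foot_spec hp).2, (h.foot_spec hy).2] at e
  rw [slope_def_field, ← e, mul_div_cancel_left₀ _ (sub_ne_zero.2 hyx)]

theorem foot_diff (h : CharCtx T₀ R₀ m b B T R r Φ) {t : ℝ} {x : ℂ}
    (hp : (t, x) ∈ Wset m T R r) : DifferentiableAt ℂ (foot R Φ t) x := by
  have h1 := (h.back_deriv hp le_rfl hp.1.1).differentiableAt
  refine h1.congr_of_eventuallyEq ?_
  filter_upwards [(h.slice_open t).mem_nhds hp] with y hy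
  exact (h.hΦ0 _ (h.foot_spec hy).1).symm

theorem expo_diff (h : CharCtx T₀ R₀ m b B T R r Φ) {lam : ℝ → ℂ → ℂ} {L : ℝ}
    (hX : MemX0 (Set.Icc 0 T₀) R₀ lam) (hL0 : 0 < L)
    (hL : ∀ t ∈ Set.Ioc (0:ℝ) T₀, ∀ x ∈ Metric.ball (0:ℂ) R₀, ‖lam t x‖ ≤ L * m t)
    {t : ℝ} {x : ℂ} (hp : (t, x) ∈ Wset m T R r) : DifferentiableAt ℂ (expo R Φ lam t) x := by
  have evW : ∀ᶠ y in 𝓝[≠] x, (t, y) ∈ Wset m T R r :=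
    nhdsWithin_le_nhds ((h.slice_open t).mem_nhds hp)
  have hsub : Set.Ioc 0 t ⊆ Set.Ioc 0 T := Set.Ioc_subset_Ioc_right hp.1.2
  set Y : ℝ → ℂ → ℂ := fun σ y => Φ (foot R Φ t y) σ with hY
  set C := Real.exp (2 * B / (R₀ - R) * wphi m T)
  suffices H : HasDerivAt (expo R Φ lam t)
      (∫ σ in Set.Ioc 0 t, deriv (fun y => lam σ (Y σ y)) x / (σ:ℂ)) x from H.differentiableAt
  rw [hasDerivAt_iff_tendsto_slope]
  have hlim : Tendsto (fun y => ∫ σ in Set.Ioc 0 t, slope (fun y => lam σ (Y σ y)) x y / (σ:ℂ))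
      (𝓝[≠] x) (𝓝 (∫ σ in Set.Ioc 0 t, deriv (fun y => lam σ (Y σ y)) x / (σ:ℂ))) := by
    apply tendsto_integral_filter_of_dominated_convergence
      (fun σ => 2 * L / (R₀ - R) * C * (m σ / σ))
    · filter_upwards [evW] with y hy
      apply ContinuousOn.aestronglyMeasurable _ measurableSet_Ioc
      simp only [slope_def_field]
      apply ContinuousOn.div _ (by fun_prop)
      · intro s hs
        exact_mod_cast hs.1.ne'
      · apply ContinuousOn.div_const
        exact ((h.comp_cont hX (h.foot_spec hy).1).sub (h.comp_cont hX (h.foot_spec hp).1)).mono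
          (hsub.trans Set.Ioc_subset_Icc_self)
    · filter_upwards [evW, self_mem_nhdsWithin] with y hy hyx
      refine (ae_restrict_iff' measurableSet_Ioc).2 (Eventually.of_forall fun σ hσ => ?_)
      have hσT : σ ≤ T₀ := (hsub hσ).2.trans h.hTT.le
      have e1 := aux_lip h.hRR (hX.2 σ ⟨hσ.1.le, hσT⟩) (hL σ ⟨hσ.1, hσT⟩)
        (h.foot_ball hp hσ.1.le hσ.2) (h.foot_ball hy hσ.1.le hσ.2)
      have e2 := h.lip_back hp hy hσ.1.le hσ.2 hσ.2
      simp only [sub_self, abs_zero, mul_zero, add_zero] at e2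
      have hm0 := h.hm.2.2.1 σ ⟨hσ.1, hσT⟩
      have hR0 : 0 < R₀ - R := sub_pos.2 h.hRR
      have hyx' : 0 < ‖y - x‖ := norm_pos_iff.2 (sub_ne_zero.2 hyx)
      have hσ0 := hσ.1
      rw [norm_div, Complex.norm_real, Real.norm_of_nonneg hσ.1.le, ← mul_div_assoc,
        slope_def_field, norm_div]
      gcongr
      rw [div_le_iff₀ hyx']
      calc ‖lam σ (Y σ y) - lam σ (Y σ x)‖ ≤ 2 * (L * m σ) / (R₀ - R) * ‖Y σ y - Y σ x‖ := e1
        _ ≤ 2 * (L * m σ) / (R₀ - R) * (C * ‖y - x‖) := by gcongr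
        _ = _ := by ring
    · exact (h.hm.2.2.2.mono_set (Set.Ioc_subset_Ioc_right (hp.1.2.trans h.hTT.le))).const_mul _
    · refine (ae_restrict_iff' measurableSet_Ioc).2 (Eventually.of_forall fun σ hσ => ?_)
      have hσ' := hsub hσ
      apply Tendsto.div_const
      have hd : DifferentiableAt ℂ (lam σ) (Y σ x) :=
        (hX.2 σ ⟨hσ'.1.le, hσ'.2.trans h.hTT.le⟩).differentiableAt
          (isOpen_ball.mem_nhds (h.mem_ball (h.foot_spec hp).1 ⟨hσ'.1.le, hσ'.2⟩))
      have hd2 : DifferentiableAt ℂ (fun y => lam σ (Y σ y)) x :=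
        DifferentiableAt.fun_comp' x hd (h.back_deriv hp hσ.1.le hσ.2).differentiableAt
      exact hasDerivAt_iff_tendsto_slope.1 hd2.hasDerivAt
  refine hlim.congr' ?_
  filter_upwards [evW] with y hy
  have i1 := (h.comp_div_int hX hL (h.foot_spec hy).1).mono_set hsub
  have i2 := (h.comp_div_int hX hL (h.foot_spec hp).1).mono_set hsub
  rw [slope_def_field]
  unfold expo
  rw [← integral_sub i1 i2, ← integral_div]
  congr 1
  ext σ
  rw [slope_def_field, hY]
  ring

/-- chain rule in the `x`-direction along a curve. -/
theorem chain (h : CharCtx T₀ R₀ m b B T R r Φ) {f : ℝ → ℂ → ℂ}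
    (hf : MemX0W (Wset m T R r) f) {t : ℝ} {x : ℂ} (hp : (t, x) ∈ Wset m T R r)
    {y : ℝ → ℂ} {y' : ℂ} (hy : HasDerivWithinAt y y' (Set.Icc 0 T) t) (hyt : y t = x) :
    HasDerivWithinAt (fun s => f s (y s) - f s x) (deriv (f t) x * y') (Set.Icc 0 T) t := by
  set d := deriv (f t) x with hd
  rw [hasDerivWithinAt_iff_isLittleO] at hy ⊢
  have hyc : Tendsto y (𝓝[Set.Icc 0 T] t) (𝓝 x) := by
    rw [← hyt]
    exact (hasDerivWithinAt_iff_isLittleO.2 hy).continuousWithinAt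
  have hO : (fun s => y s - x) =O[𝓝[Set.Icc 0 T] t] fun s => s - t := by
    have := (hasDerivWithinAt_iff_isLittleO.2 hy).hasFDerivWithinAt.isBigO_sub
    rwa [hyt] at this
  have h1 : (fun s => f s (y s) - f s x - d * (y s - x)) =o[𝓝[Set.Icc 0 T] t]
      fun s => y s - x := by
    rw [Asymptotics.isLittleO_iff]
    intro c hc
    have hW := h.W_nhds hp
    have e1 : ∀ᶠ p : ℝ × ℂ in 𝓝[Wset m T R r] (t, x), ‖deriv (f p.1) p.2 - d‖ < c := by
      have := (h.deriv_cont hf (t, x) hp).tendsto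
      have := (tendsto_iff_norm_sub_tendsto_zero.1 this).eventually_lt_const hc
      exact this
    have e2 := (nhdsWithin_le_iff.2 hW) e1
    have e3 := hW.and e2
    rw [nhdsWithin_prod_eq, nhdsWithin_univ] at e3
    obtain ⟨P, hP, Q, hQ, hPQ⟩ := eventually_prod_iff.1 e3
    obtain ⟨ε, hε, hεs⟩ := Metric.nhds_basis_ball.mem_iff.1 hQ
    filter_upwards [hP, hyc (ball_mem_nhds x hε)] with s hs hys
    have hda : ∀ z ∈ ball x ε, DifferentiableAt ℂ (f s) z := fun z hz =>
      (hf.2 s).differentiableAt ((h.slice_open s).mem_nhds (hPQ hs (hεs hz)).1)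
    have hda2 : ∀ z ∈ ball x ε, HasDerivAt (fun z => f s z - d * z) (deriv (f s) z - d) z := by
      intro z hz
      exact (HasDerivAt.fun_sub (hda z hz).hasDerivAt
        ((hasDerivAt_id' z).const_mul d)).congr_deriv (by simp)
    have := Convex.norm_image_sub_le_of_norm_deriv_le (𝕜 := ℂ) (f := fun z => f s z - d * z)
      (s := ball x ε) (C := c) (x := x) (y := y s)
      (fun z hz => (hda2 z hz).differentiableAt)
      (fun z hz => by
        rw [(hda2 z hz).deriv]
        exact (hPQ hs (hεs hz)).2.le) (convex_ball _ _) (mem_ball_self hε) hys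
    refine le_trans (le_of_eq ?_) this
    congr 1
    ring
  have h2 := (h1.trans_isBigO hO).add (hy.const_mul_left d)
  refine h2.congr (fun s => ?_) fun s => rfl
  rw [hyt]
  simp only [real_smul, sub_self]
  ring

/-- the solution. -/
def sol (R : ℝ) (Φ : ℂ → ℝ → ℂ) (lam : ℝ → ℂ → ℂ) (ψ : ℂ → ℂ) (t : ℝ) (x : ℂ) : ℂ :=
  ψ (foot R Φ t x) * Complex.exp (expo R Φ lam t x)

theorem sol_char (h : CharCtx T₀ R₀ m b B T R r Φ) (lam : ℝ → ℂ → ℂ) (ψ : ℂ → ℂ)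
    {t : ℝ} {x : ℂ} (hx : x ∈ ball (0:ℂ) R) (hp : (t, Φ x t) ∈ Wset m T R r) :
    sol R Φ lam ψ t (Φ x t) =
      ψ x * Complex.exp (∫ s in Set.Ioc (0:ℝ) t, lam s (Φ x s) / (s:ℂ)) := by
  unfold sol expo
  rw [h.foot_eq hx hp]

theorem sol_X0 (h : CharCtx T₀ R₀ m b B T R r Φ) {lam : ℝ → ℂ → ℂ} {L : ℝ}
    (hX : MemX0 (Set.Icc 0 T₀) R₀ lam) (hL0 : 0 < L)
    (hL : ∀ t ∈ Set.Ioc (0:ℝ) T₀, ∀ x ∈ Metric.ball (0:ℂ) R₀, ‖lam t x‖ ≤ L * m t)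
    {ψ : ℂ → ℂ} (hψ : DifferentiableOn ℂ ψ (Metric.ball (0:ℂ) R)) :
    MemX0W (Wset m T R r) (sol R Φ lam ψ) := by
  constructor
  · apply ContinuousOn.mul
    · exact hψ.continuousOn.comp h.foot_cont fun p hp => (h.foot_spec hp).1
    · exact (h.expo_cont hX hL).cexp
  · intro t x hp
    apply DifferentiableAt.differentiableWithinAt
    apply DifferentiableAt.mul
    · exact DifferentiableAt.fun_comp' x
        (hψ.differentiableAt (isOpen_ball.mem_nhds (h.foot_spec hp).1)) (h.foot_diff hp)
    · exact (h.expo_diff hX hL0 hL hp).cexp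

theorem W_curve (h : CharCtx T₀ R₀ m b B T R r Φ) {t : ℝ} {x : ℂ}
    (hp : (t, x) ∈ Wset m T R r) {y : ℝ → ℂ} (hy : ContinuousWithinAt y (Set.Icc 0 T) t)
    (hyt : y t = x) : ∀ᶠ s in 𝓝[Set.Icc 0 T] t, (s, y s) ∈ Wset m T R r := by
  have h1 := h.W_nhds hp
  have h2 : Tendsto (fun s => (s, y s)) (𝓝[Set.Icc 0 T] t)
      (𝓝[Set.Icc 0 T ×ˢ Set.univ] (t, x)) := by
    apply tendsto_nhdsWithin_of_tendsto_nhds_of_eventually_within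
    · rw [← hyt]
      exact (continuousWithinAt_id.prodMk hy).tendsto
    · filter_upwards [self_mem_nhdsWithin] with s hs using ⟨hs, mem_univ _⟩
  exact h2.eventually h1

theorem sol_pde (h : CharCtx T₀ R₀ m b B T R r Φ) {lam : ℝ → ℂ → ℂ} {L : ℝ}
    (hX : MemX0 (Set.Icc 0 T₀) R₀ lam) (hL0 : 0 < L)
    (hL : ∀ t ∈ Set.Ioc (0:ℝ) T₀, ∀ x ∈ Metric.ball (0:ℂ) R₀, ‖lam t x‖ ≤ L * m t)
    {ψ : ℂ → ℂ} (hψ : DifferentiableOn ℂ ψ (Metric.ball (0:ℂ) R)) {t : ℝ} {x : ℂ}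
    (hp : (t, x) ∈ Wset m T R r) (ht : 0 < t) :
    HasDerivWithinAt (fun s => sol R Φ lam ψ s x)
      ((lam t x * sol R Φ lam ψ t x + b t x * deriv (sol R Φ lam ψ t) x) / (t : ℂ))
      {s : ℝ | (s, x) ∈ Wset m T R r} t := by
  obtain ⟨hp1, hp2⟩ := h.foot_spec hp
  set p := foot R Φ t x with hpd
  have htT : t ∈ Set.Ioc 0 T := ⟨ht, hp.1.2⟩
  have hode := (h.hΦode p hp1 t htT).2.hasDerivWithinAt (s := Set.Icc 0 T)
  have h1 := h.chain (h.sol_X0 hX hL0 hL hψ) hp hode hp2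
  have h2 := (aux_ftc htT (h.comp_div_cont hX hp1) (h.comp_div_int hX hL hp1)).cexp.const_mul (ψ p)
  have h3 : HasDerivWithinAt (fun s => sol R Φ lam ψ s (Φ p s))
      (ψ p * (Complex.exp (∫ x in Set.Ioc 0 t, lam x (Φ p x) / (x:ℂ)) *
        (lam t (Φ p t) / (t:ℂ)))) (Set.Icc 0 T) t := by
    refine h2.congr_of_eventuallyEq ?_ ?_
    · filter_upwards [h.W_curve hp hode.continuousWithinAt hp2] with s hs
      exact h.sol_char lam ψ hp1 hs
    · exact h.sol_char lam ψ hp1 (by rw [hp2]; exact hp)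
  have h4 := (h3.sub h1).mono (show {s : ℝ | (s, x) ∈ Wset m T R r} ⊆ Set.Icc 0 T from
    fun s hs => hs.1)
  have e := h.sol_char lam ψ hp1 (t := t) (by rw [hp2]; exact hp)
  rw [hp2] at e
  refine (h4.congr_deriv ?_).congr (fun s _ => ?_) ?_
  · rw [e, hp2]
    ring
  · simp
  · simp

theorem sol_X1 (h : CharCtx T₀ R₀ m b B T R r Φ) {lam : ℝ → ℂ → ℂ} {L : ℝ}
    (hX : MemX0 (Set.Icc 0 T₀) R₀ lam) (hL0 : 0 < L)
    (hL : ∀ t ∈ Set.Ioc (0:ℝ) T₀, ∀ x ∈ Metric.ball (0:ℂ) R₀, ‖lam t x‖ ≤ L * m t)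
    {ψ : ℂ → ℂ} (hψ : DifferentiableOn ℂ ψ (Metric.ball (0:ℂ) R)) :
    MemX1W (Wset m T R r) (sol R Φ lam ψ) := by
  have h0 := h.sol_X0 hX hL0 hL hψ
  refine ⟨h0, fun t x => lam t x * sol R Φ lam ψ t x + b t x * deriv (sol R Φ lam ψ t) x,
    ⟨?_, ?_⟩, fun t x hp ht => h.sol_pde hX hL0 hL hψ hp ht⟩
  · exact ((hX.1.mono h.W_sub).mul h0.1).add ((h.hbX.1.mono h.W_sub).mul (h.deriv_cont h0))
  · intro t
    by_cases ht : t ∈ Set.Icc 0 T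
    · have ht' : t ∈ Set.Icc 0 T₀ := ⟨ht.1, ht.2.trans h.hTT.le⟩
      have hs : {y : ℂ | (t, y) ∈ Wset m T R r} ⊆ ball (0:ℂ) R₀ := fun y hy => (h.W_sub hy).2
      exact (((hX.2 t ht').mono hs).mul (h0.2 t)).add
        (((h.hbX.2 t ht').mono hs).mul ((h0.2 t).deriv (h.slice_open t)))
    · intro x hx
      exact absurd hx.1 ht

theorem sol_unique (h : CharCtx T₀ R₀ m b B T R r Φ) {lam : ℝ → ℂ → ℂ} {L : ℝ}
    (hX : MemX0 (Set.Icc 0 T₀) R₀ lam)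
    (hL : ∀ t ∈ Set.Ioc (0:ℝ) T₀, ∀ x ∈ Metric.ball (0:ℂ) R₀, ‖lam t x‖ ≤ L * m t)
    {ψ : ℂ → ℂ} {v : ℝ → ℂ → ℂ} (hv : MemX0W (Wset m T R r) v)
    (hv0 : ∀ x ∈ Metric.ball (0:ℂ) R, v 0 x = ψ x)
    (hvs : SolvesLW (Wset m T R r) lam b (fun _ _ => 0) v) {t : ℝ} {x : ℂ}
    (hp : (t, x) ∈ Wset m T R r) : v t x = sol R Φ lam ψ t x := by
  obtain ⟨hp1, hp2⟩ := h.foot_spec hp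
  set p := foot R Φ t x with hpd
  have hsub : Set.Ioc 0 t ⊆ Set.Ioc 0 T := Set.Ioc_subset_Ioc_right hp.1.2
  have hW : ∀ s ∈ Set.Icc 0 t, (s, Φ p s) ∈ Wset m T R r := fun s hs =>
    h.foot_back hp hs.1 hs.2
  have key := aux_lin (s := 0) (t := t) hp.1.1 (δ := fun s => v s (Φ p s))
    (c := fun s => -(lam s (Φ p s) / (s:ℂ))) ?_ ((h.comp_div_cont hX hp1).mono hsub).neg
    ((h.comp_div_int hX hL hp1).mono_set hsub).neg ?_
  · simp only [hp2, h.hΦ0 p hp1, hv0 p hp1, integral_neg] at key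
    have e := h.sol_char lam ψ hp1 (t := t) (by rw [hp2]; exact hp)
    rw [hp2] at e
    rw [e, ← key, mul_assoc, ← Complex.exp_add]
    simp
  · have : ContinuousOn (fun s : ℝ => ((s, Φ p s) : ℝ × ℂ)) (Set.Icc 0 t) :=
      continuousOn_id.prodMk ((h.hΦc p hp1).mono (Set.Icc_subset_Icc_right hp.1.2))
    exact hv.1.comp this hW
  · intro σ hσ
    have hσT : σ ∈ Set.Ioc 0 T := hsub ⟨hσ.1, hσ.2.le⟩
    have hσW := hW σ ⟨hσ.1.le, hσ.2.le⟩
    have hode := (h.hΦode p hp1 σ hσT).2.hasDerivWithinAt (s := Set.Icc 0 T)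
    have h1 := h.chain hv hσW hode rfl
    have h2 := hvs σ (Φ p σ) hσW hσ.1
    have h3 : HasDerivWithinAt (fun s => v s (Φ p σ)) _ (Set.Icc 0 T) σ :=
      h2.mono_of_mem_nhdsWithin (h.W_curve hσW (y := fun _ => Φ p σ) continuousWithinAt_const rfl)
    have hnb : Set.Icc 0 T ∈ 𝓝 σ := Icc_mem_nhds hσ.1 (hσ.2.trans_le hp.1.2)
    have h4 := (h1.add h3).hasDerivAt hnb
    refine (h4.congr_deriv ?_).congr_of_eventuallyEq (Eventually.of_forall fun s => ?_)
    · simp only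
      ring
    · simp

end CharCtx

/-- Lemma 6.1.2 (1): if `λ(0,·) ≡ 0`, `|λ| ≤ Λ m(t)` and `|b| ≤ B m(t)`, then for every
`ψ` holomorphic on `D_R` the equation `t ∂v/∂t - λ v - b ∂v/∂x = 0` has a unique
solution `v ∈ X₁(W)` with `v(0,x) = ψ(x)` on `D_R`, given (along the characteristics)
by `v(t,x) = ψ(φ(0;t,x)) exp[∫₀ᵗ λ(s,φ(s;t,x))/s ds]`. -/
theorem statement11
    (T₀ R₀ : ℝ) (hT₀ : 0 < T₀) (hR₀ : 0 < R₀)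
    (m : ℝ → ℝ) (hm : IsWeight T₀ m)
    (b : ℝ → ℂ → ℂ) (hbX : MemX0 (Set.Icc 0 T₀) R₀ b)
    (B : ℝ) (hB : 0 < B)
    (hb : ∀ t ∈ Set.Ioc (0:ℝ) T₀, ∀ x ∈ Metric.ball (0:ℂ) R₀, ‖b t x‖ ≤ B * m t)
    (T R r : ℝ) (hT : 0 < T) (hTT₀ : T < T₀) (hR : 0 < R) (hRR₀ : R < R₀)
    (hr : 0 < r) (hrB : r ≤ 1 / B)
    (lam : ℝ → ℂ → ℂ) (hlamX : MemX0 (Set.Icc 0 T₀) R₀ lam)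
    (hlam0 : ∀ x ∈ Metric.ball (0:ℂ) R₀, lam 0 x = 0)
    (Λ₁ : ℝ) (hΛ₁ : 0 < Λ₁)
    (hlam : ∀ t ∈ Set.Ioc (0:ℝ) T₀, ∀ x ∈ Metric.ball (0:ℂ) R₀, ‖lam t x‖ ≤ Λ₁ * m t)
    -- `Φ x₀ t` is the forward characteristic `φ(t; 0, x₀)` issued from `x₀` at `t = 0` :
    (Φ : ℂ → ℝ → ℂ)
    (hΦ0 : ∀ x₀ ∈ Metric.ball (0:ℂ) R, Φ x₀ 0 = x₀)
    (hΦc : ∀ x₀ ∈ Metric.ball (0:ℂ) R, ContinuousOn (Φ x₀) (Set.Icc 0 T))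
    (hΦode : ∀ x₀ ∈ Metric.ball (0:ℂ) R, ∀ t ∈ Set.Ioc (0:ℝ) T,
      Φ x₀ t ∈ Metric.ball (0:ℂ) R₀ ∧
      HasDerivAt (Φ x₀) (-(b t (Φ x₀ t)) / (t:ℂ)) t)
    (hΦuniq : ∀ x₀ ∈ Metric.ball (0:ℂ) R, ∀ y : ℝ → ℂ, ContinuousOn y (Set.Icc 0 T) →
      y 0 = x₀ →
      (∀ t ∈ Set.Ioc (0:ℝ) T, y t ∈ Metric.ball (0:ℂ) R₀ ∧
        HasDerivAt y (-(b t (y t)) / (t:ℂ)) t) →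
      Set.EqOn y (Φ x₀) (Set.Icc 0 T))
    (ψ : ℂ → ℂ) (hψ : DifferentiableOn ℂ ψ (Metric.ball (0:ℂ) R)) :
    ∃ v : ℝ → ℂ → ℂ,
      MemX1W (Wset m T R r) v ∧
      (∀ x ∈ Metric.ball (0:ℂ) R, v 0 x = ψ x) ∧
      SolvesLW (Wset m T R r) lam b (fun _ _ => 0) v ∧
      -- the explicit formula (6.1.4), written along the forward characteristics :
      (∀ x₀ ∈ Metric.ball (0:ℂ) R, ∀ t : ℝ, 0 ≤ t → (t, Φ x₀ t) ∈ Wset m T R r →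
        v t (Φ x₀ t) =
          ψ x₀ * Complex.exp (∫ s in Set.Ioc (0:ℝ) t, lam s (Φ x₀ s) / (s:ℂ))) ∧
      -- uniqueness :
      (∀ v' : ℝ → ℂ → ℂ, MemX1W (Wset m T R r) v' →
        (∀ x ∈ Metric.ball (0:ℂ) R, v' 0 x = ψ x) →
        SolvesLW (Wset m T R r) lam b (fun _ _ => 0) v' →
        ∀ p ∈ Wset m T R r, v' p.1 p.2 = v p.1 p.2) := by
  have h : CharCtx T₀ R₀ m b B T R r Φ :=
    ⟨hm, hbX, hB, hb, hT, hTT₀, hR, hRR₀, hr, hrB, hΦ0, hΦc, hΦode⟩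
  refine ⟨CharCtx.sol R Φ lam ψ, h.sol_X1 hlamX hΛ₁ hlam hψ, ?_, ?_, ?_, ?_⟩
  · intro x hx
    have hW : (0, Φ x 0) ∈ Wset m T R r := by
      rw [hΦ0 x hx]
      refine h.W_mk ⟨le_rfl, hT.le⟩ ?_
      rw [aux_wphi_zero]
      simpa using hx
    have e := h.sol_char lam ψ hx hW
    rw [hΦ0 x hx] at e
    rw [e]
    simp
  · intro t x hp ht
    have := h.sol_pde hlamX hΛ₁ hlam hψ hp ht
    simpa using this
  · intro x₀ hx₀ t _ hp
    exact h.sol_char lam ψ hx₀ hp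
  · intro v' hv' hv0 hvs p hp
    exact h.sol_unique hlamX hlam hv'.1 hv0 hvs hp
end
end

section
/- Let λ, b ∈ X₀([0,T₀]×D_{R₀}) satisfy Re λ(0,0) > 0, |λ(t,x) − λ(0,x)| ≤ Λ·m(t) and |b(t,x)| ≤ B·m(t)/|log t| on [0,T₀]×D_{R₀} for a weight function m, with 0 < T₀ < 1/e. Then there exist T, R, r > 0 such that, with W = {(t,x) ∈ [0,T]×D_R : φ(t)/r + |x| < R}, for every holomorphic ψ on D_R the linear equation t·∂v/∂t − λ(t,x)·v − b(t,x)·∂v/∂x = 0 has a unique solution v ∈ X₁(W) satisfying t^{−λ(0,x)}·v(t,x) → ψ(x) as t → 0⁺ uniformly on D_{R'} for every 0 < R' < R; moreover this solution v belongs to X₁^d for every 0 < d < Re λ(0,0). -/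
open Set Filter MeasureTheory Metric Topology Complex

noncomputable section

/-- Primitive of a function integrable on `(0,T]` and continuous there. -/
lemma prim_cont {E : Type*} [NormedAddCommGroup E] [NormedSpace ℝ E] {h : ℝ → E} {T : ℝ}
    (hi : IntegrableOn h (Ioc 0 T)) :
    ContinuousOn (fun t => ∫ s in Ioc 0 t, h s) (Icc 0 T) := by
  apply intervalIntegral.continuousOn_primitive
  rwa [integrableOn_Icc_iff_integrableOn_Ioc]

lemma prim_deriv {E : Type*} [NormedAddCommGroup E] [NormedSpace ℝ E] [CompleteSpace E]
    {h : ℝ → E} {T : ℝ}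
    (hi : IntegrableOn h (Ioc 0 T)) (hc : ContinuousOn h (Ioc 0 T)) {t : ℝ} (ht : t ∈ Ioc 0 T) :
    HasDerivWithinAt (fun t => ∫ s in Ioc 0 t, h s) (h t) (Icc 0 T) t := by
  have ht' : t ∈ Icc 0 T := ⟨ht.1.le, ht.2⟩
  have : Fact (t ∈ Icc 0 T) := ⟨ht'⟩
  have hnn : Ioc 0 T ∈ 𝓝[Icc 0 T] t := by
    have : Ioi (0:ℝ) ∈ 𝓝[Icc 0 T] t := mem_nhdsWithin_of_mem_nhds (Ioi_mem_nhds ht.1)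
    filter_upwards [this, self_mem_nhdsWithin] with s h1 h2 using ⟨h1, h2.2⟩
  have hcw : ContinuousWithinAt h (Icc 0 T) t :=
    (hc t ht).mono_of_mem_nhdsWithin hnn
  have hsm : StronglyMeasurableAtFilter h (𝓝[Icc 0 T] t) volume :=
    ⟨Ioc 0 T, hnn, hi.aestronglyMeasurable⟩
  have hii : IntervalIntegrable h volume 0 t := by
    rw [intervalIntegrable_iff_integrableOn_Ioc_of_le ht.1.le]
    exact hi.mono_set (Ioc_subset_Ioc_right ht.2)
  have := intervalIntegral.integral_hasDerivWithinAt_right (s := Icc 0 T) (t := Icc 0 T)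
    hii hsm hcw
  refine this.congr_of_mem (fun s hs => ?_) ht'
  rw [intervalIntegral.integral_of_le hs.1]

/-- `x`-derivatives are jointly continuous. -/
lemma deriv_cont {S : Set ℝ} {U : Set ℂ} (hU : IsOpen U) {f : ℝ → ℂ → ℂ}
    (hf : ContinuousOn (fun p : ℝ × ℂ => f p.1 p.2) (S ×ˢ U))
    (hd : ∀ t ∈ S, DifferentiableOn ℂ (f t) U) :
    ContinuousOn (fun p : ℝ × ℂ => deriv (f p.1) p.2) (S ×ˢ U) := by
  rintro ⟨t0, x0⟩ ⟨ht0, hx0⟩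
  simp only at ht0 hx0
  obtain ⟨ρ, hρ, hρU⟩ := Metric.isOpen_iff.1 hU x0 hx0
  have hd0 : ContinuousAt (deriv (f t0)) x0 :=
    ((hd t0 ht0).deriv hU).continuousOn.continuousAt (hU.mem_nhds hx0)
  rw [Metric.continuousWithinAt_iff']
  intro ε hε
  have hk : IsCompact (closedBall x0 (ρ/2)) := isCompact_closedBall _ _
  have hkU : closedBall x0 (ρ/2) ⊆ U :=
    (closedBall_subset_ball (by linarith)).trans hρU
  have hη : 0 < ε / 2 * (ρ/4) / 2 := by positivity
  obtain ⟨v, hv, hvu⟩ := hk.mem_uniformity_of_prod (f := f) (s := S) (q := t0)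
    (hf.mono (prod_mono le_rfl hkU)) ht0 (Metric.dist_mem_uniformity hη)
  have h1 : ∀ᶠ p : ℝ × ℂ in 𝓝[S ×ˢ U] (t0, x0), p.1 ∈ v := by
    have : Tendsto Prod.fst (𝓝[S ×ˢ U] (t0, x0)) (𝓝[S] t0) := by
      rw [nhdsWithin_prod_eq]; exact tendsto_fst
    exact this hv
  have h2 : ∀ᶠ p : ℝ × ℂ in 𝓝[S ×ˢ U] (t0, x0), p.2 ∈ ball x0 (ρ/4) ∧
      dist (deriv (f t0) p.2) (deriv (f t0) x0) < ε/2 := by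
    have ht : Tendsto Prod.snd (𝓝[S ×ˢ U] (t0, x0)) (𝓝 x0) :=
      (continuous_snd.tendsto (t0, x0)).mono_left nhdsWithin_le_nhds
    have hb : ∀ᶠ x in 𝓝 x0, x ∈ ball x0 (ρ/4) := Metric.ball_mem_nhds x0 (by positivity)
    exact ht.eventually (hb.and (Metric.continuousAt_iff'.1 hd0 (ε/2) (by positivity)))
  filter_upwards [h1, h2, self_mem_nhdsWithin] with p hp1 hp2 hp3
  have hsub : closedBall p.2 (ρ/4) ⊆ closedBall x0 (ρ/2) := by
    apply closedBall_subset_closedBall'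
    have := mem_ball.1 hp2.1
    linarith
  have hU2 : closedBall p.2 (ρ/4) ⊆ U := hsub.trans hkU
  have hdp : DifferentiableAt ℂ (f p.1) p.2 :=
    (hd _ hp3.1).differentiableAt (hU.mem_nhds hp3.2)
  have hdq : DifferentiableAt ℂ (f t0) p.2 :=
    (hd _ ht0).differentiableAt (hU.mem_nhds hp3.2)
  have h3 : ‖deriv (fun x => f p.1 x - f t0 x) p.2‖ ≤ (ε / 2 * (ρ/4) / 2) / (ρ/4) := by
    apply Complex.norm_deriv_le_of_forall_mem_sphere_norm_le (by positivity)
    · apply DifferentiableOn.diffContOnCl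
      rw [closure_ball _ (by positivity)]
      exact ((hd _ hp3.1).mono hU2).sub ((hd _ ht0).mono hU2)
    · intro z hz
      have := hvu p.1 hp1 z (hsub (sphere_subset_closedBall hz))
      simp only [mem_ofPred_eq, dist_eq_norm] at this
      exact this.le
  rw [deriv_fun_sub hdp hdq] at h3
  have h4 : (ε / 2 * (ρ/4) / 2) / (ρ/4) = ε / 4 := by field_simp; ring
  rw [h4] at h3
  calc dist (deriv (f p.1) p.2) (deriv (f t0) x0)
      ≤ dist (deriv (f p.1) p.2) (deriv (f t0) p.2) + dist (deriv (f t0) p.2) (deriv (f t0) x0) :=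
        dist_triangle _ _ _
    _ < ε := by rw [← dist_eq_norm] at h3; linarith [hp2.2]

/-- Nagumo's lemma. -/
lemma nagumo {ρ A : ℝ} {n : ℕ} {f : ℂ → ℂ} (hA : 0 ≤ A)
    (hf : DifferentiableOn ℂ f (ball 0 ρ))
    (hb : ∀ x ∈ ball (0:ℂ) ρ, ‖f x‖ ≤ A / (ρ - ‖x‖) ^ n) {x : ℂ} (hx : x ∈ ball (0:ℂ) ρ) :
    ‖deriv f x‖ ≤ 6 * A * (n + 1) / (ρ - ‖x‖) ^ (n + 1) := by
  have hd : 0 < ρ - ‖x‖ := by rw [mem_ball_zero_iff] at hx; linarith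
  set d := ρ - ‖x‖ with hdd
  have hn : (0:ℝ) < n + 2 := by positivity
  have hn1 : (0:ℝ) < n + 1 := by positivity
  have hrad : 0 < d / (n + 2) := by positivity
  have hkey : d - d / (n + 2) = d * ((n + 1) / (n + 2)) := by field_simp; ring
  have hlt : d / (n + 2) < d := by
    have : 0 < d * ((n + 1) / (n + 2)) := by positivity
    linarith
  have hy : ∀ y ∈ closedBall x (d / (n + 2)), d * ((n + 1) / (n + 2)) ≤ ρ - ‖y‖ := by
    intro y hy
    rw [mem_closedBall, dist_eq_norm] at hy
    have := norm_le_norm_add_norm_sub' y x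
    linarith
  have hyb : closedBall x (d / (n + 2)) ⊆ ball 0 ρ := by
    intro y hy'
    have := hy y hy'
    have : 0 < d * ((n + 1) / (n + 2)) := by positivity
    rw [mem_ball_zero_iff]; linarith
  have h1 : ‖deriv f x‖ ≤ (A / (d * ((n + 1) / (n + 2))) ^ n) / (d / (n + 2)) := by
    apply Complex.norm_deriv_le_of_forall_mem_sphere_norm_le hrad
    · apply DifferentiableOn.diffContOnCl
      rw [closure_ball _ hrad.ne']
      exact hf.mono hyb
    · intro z hz
      have hz' := sphere_subset_closedBall hz
      refine (hb z (hyb hz')).trans ?_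
      have := hy z hz'
      have : 0 < d * ((n + 1) / (n + 2)) := by positivity
      gcongr
  refine h1.trans ?_
  have h2 : (((n:ℝ) + 2) / (n + 1)) ^ n ≤ 3 := by
    have e1 : ((n:ℝ) + 2) / (n + 1) = 1 / (n + 1) + 1 := by field_simp; ring
    have e2 : (1:ℝ) / (n + 1) + 1 ≤ Real.exp (1 / (n + 1)) := Real.add_one_le_exp _
    calc (((n:ℝ) + 2) / (n + 1)) ^ n ≤ (Real.exp (1 / (n + 1))) ^ n := by
          rw [e1]; gcongr
      _ = Real.exp (n * (1 / (n + 1))) := by rw [← Real.exp_nat_mul]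
      _ ≤ Real.exp 1 := by
          apply Real.exp_le_exp.2
          rw [mul_one_div, div_le_one hn1]; linarith
      _ ≤ 3 := by have := Real.exp_one_lt_d9; linarith
  have h3 : (A / (d * ((n + 1) / (n + 2))) ^ n) / (d / (n + 2))
      = A * ((((n:ℝ) + 2) / (n + 1)) ^ n) * (n + 2) / d ^ (n + 1) := by
    rw [mul_pow, div_pow, div_pow, pow_succ]; field_simp
  rw [h3]
  refine div_le_div_of_nonneg_right ?_ (by positivity)
  calc A * ((((n:ℝ) + 2) / (n + 1)) ^ n) * (n + 2) ≤ A * 3 * (2 * (n + 1)) := by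
        gcongr; linarith
    _ = 6 * A * (n + 1) := by ring

section phi
variable {T : ℝ} {m : ℝ → ℝ}

lemma mdiv_cont (hm : IsWeight T m) : ContinuousOn (fun τ => m τ / τ) (Ioc 0 T) :=
  hm.2.1.div continuousOn_id (fun _ ht => ht.1.ne')

lemma wphi_zero : wphi m 0 = 0 := by simp [wphi]

lemma wphi_cont (hm : IsWeight T m) : ContinuousOn (wphi m) (Icc 0 T) := prim_cont hm.2.2.2

lemma wphi_deriv (hm : IsWeight T m) {t : ℝ} (ht : t ∈ Ioc 0 T) :
    HasDerivWithinAt (wphi m) (m t / t) (Icc 0 T) t := prim_deriv hm.2.2.2 (mdiv_cont hm) ht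

lemma wphi_mono (hm : IsWeight T m) : MonotoneOn (wphi m) (Icc 0 T) := by
  intro s hs t ht hst
  apply setIntegral_mono_set (hm.2.2.2.mono_set (Ioc_subset_Ioc_right ht.2))
  · refine (ae_restrict_iff' measurableSet_Ioc).2 (Eventually.of_forall fun τ hτ => ?_)
    have := hm.2.2.1 τ ⟨hτ.1, hτ.2.trans ht.2⟩
    have := hτ.1
    simp only [Pi.zero_apply]; positivity
  · exact (Ioc_subset_Ioc_right hst).eventuallyLE

lemma wphi_nonneg (hm : IsWeight T m) {t : ℝ} (ht : t ∈ Icc 0 T) : 0 ≤ wphi m t := by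
  have := wphi_mono hm (left_mem_Icc.2 (ht.1.trans ht.2)) ht ht.1
  rwa [wphi_zero] at this

/-- Growth lemma. -/
lemma grow (hm : IsWeight T m) {f f' : ℝ → ℂ} {A : ℝ} {n : ℕ}
    (hf : ContinuousOn f (Icc 0 T)) (h0 : f 0 = 0)
    (hd : ∀ t ∈ Ioc 0 T, HasDerivWithinAt f (f' t) (Icc 0 T) t)
    (hb : ∀ t ∈ Ioc 0 T, ‖f' t‖ ≤ A * ((n + 1) * wphi m t ^ n * (m t / t)))
    {t : ℝ} (ht : t ∈ Icc 0 T) : ‖f t‖ ≤ A * wphi m t ^ (n + 1) := by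
  rcases ht.1.eq_or_lt with h | ht0
  · rw [← h, h0, wphi_zero]; simp
  have key : ∀ ε ∈ Ioc 0 t, ‖f t‖ ≤ ‖f ε‖ + (A * wphi m t ^ (n + 1) - A * wphi m ε ^ (n + 1)) := by
    intro ε hε
    have hsub : Icc ε t ⊆ Icc 0 T := Icc_subset_Icc hε.1.le ht.2
    have hup : ∀ s ∈ Ico ε t, Icc 0 T ∈ 𝓝[Ici s] s := fun s hs => by
      have h1 : Iio T ∈ 𝓝[Ici s] s :=
        mem_nhdsWithin_of_mem_nhds (Iio_mem_nhds (hs.2.trans_le ht.2))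
      filter_upwards [h1, self_mem_nhdsWithin] with y hy1 hy2
      exact ⟨(hε.1.le.trans hs.1).trans hy2, le_of_lt hy1⟩
    have hmem : ∀ s ∈ Ico ε t, s ∈ Ioc 0 T := fun s hs =>
      ⟨hε.1.trans_le hs.1, hs.2.le.trans ht.2⟩
    have := image_norm_le_of_norm_deriv_right_le_deriv_boundary' (f := f) (f' := f') (a := ε) (b := t)
      (hf.mono hsub) (fun s hs => (hd s (hmem s hs)).mono_of_mem_nhdsWithin (hup s hs))
      (B := fun s => ‖f ε‖ + (A * wphi m s ^ (n + 1) - A * wphi m ε ^ (n + 1)))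
      (B' := fun s => A * ((n + 1) * wphi m s ^ n * (m s / s)))
      (by simp)
      (by
        have := (wphi_cont hm).mono hsub
        fun_prop)
      (fun s hs => by
        have h1 := (wphi_deriv hm (hmem s hs)).mono_of_mem_nhdsWithin (hup s hs)
        have h2 := (((h1.pow (n + 1)).const_mul A).sub_const (A * wphi m ε ^ (n + 1))).const_add ‖f ε‖
        rw [Nat.cast_add, Nat.cast_one, Nat.add_sub_cancel] at h2
        exact h2)
      (fun s hs => hb s (hmem s hs))
    exact this (right_mem_Icc.2 hε.2)
  have hlim : Tendsto (fun ε => ‖f ε‖ + (A * wphi m t ^ (n + 1) - A * wphi m ε ^ (n + 1)))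
      (𝓝[Ioc 0 t] 0) (𝓝 (‖f 0‖ + (A * wphi m t ^ (n + 1) - A * wphi m 0 ^ (n + 1)))) := by
    have hle : 𝓝[Ioc 0 t] (0:ℝ) ≤ 𝓝[Icc 0 T] 0 :=
      nhdsWithin_mono _ (fun s hs => ⟨hs.1.le, hs.2.trans ht.2⟩)
    have h0T : (0:ℝ) ∈ Icc 0 T := left_mem_Icc.2 (ht.1.trans ht.2)
    have h1 := (hf 0 h0T).tendsto.mono_left hle
    have h2 := (wphi_cont hm 0 h0T).tendsto.mono_left hle
    exact h1.norm.add (tendsto_const_nhds.sub ((h2.pow _).const_mul A))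
  have : (𝓝[Ioc 0 t] (0:ℝ)).NeBot := by
    rw [← mem_closure_iff_nhdsWithin_neBot, closure_Ioc ht0.ne]
    exact left_mem_Icc.2 ht0.le
  have := ge_of_tendsto hlim (eventually_nhdsWithin_of_forall key)
  simpa [h0, wphi_zero] using this

end phi


/-- The coefficient hypotheses for the reduced equation. -/
structure Coef (T R : ℝ) (m : ℝ → ℝ) (c b : ℝ → ℂ → ℂ) (C B : ℝ) : Prop where
  T_pos : 0 < T
  R_pos : 0 < R
  hm : IsWeight T m
  hc : MemX0 (Ioc 0 T) R c
  hb : MemX0 (Ioc 0 T) R b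
  c_bd : ∀ t ∈ Ioc 0 T, ∀ x ∈ ball (0:ℂ) R, ‖c t x‖ ≤ C * m t
  b_bd : ∀ t ∈ Ioc 0 T, ∀ x ∈ ball (0:ℂ) R, ‖b t x‖ ≤ B * m t
  C_nonneg : 0 ≤ C
  B_pos : 0 < B

def hfun (c b w : ℝ → ℂ → ℂ) (s : ℝ) (x : ℂ) : ℂ :=
  (c s x * w s x + b s x * deriv (w s) x) / (s : ℂ)

def stepW (c b w : ℝ → ℂ → ℂ) (t : ℝ) (x : ℂ) : ℂ := ∫ s in Ioc 0 t, hfun c b w s x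

section step
variable {T R C B : ℝ} {m : ℝ → ℝ} {c b w : ℝ → ℂ → ℂ}

lemma MemX0.mono' {S S' : Set ℝ} {R' : ℝ} (h : MemX0 S R w) (hS : S' ⊆ S) (hR : R' ≤ R) :
    MemX0 S' R' w :=
  ⟨h.1.mono (prod_mono hS (ball_subset_ball hR)),
    fun t ht => (h.2 t (hS ht)).mono (ball_subset_ball hR)⟩

lemma MemX0.deriv' {S : Set ℝ} (h : MemX0 S R w) : MemX0 S R (fun t => deriv (w t)) :=
  ⟨deriv_cont isOpen_ball h.1 h.2, fun t ht => (h.2 t ht).deriv isOpen_ball⟩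

lemma MemX0.slice {S : Set ℝ} (h : MemX0 S R w) {x : ℂ} (hx : x ∈ ball (0:ℂ) R) :
    ContinuousOn (fun t => w t x) S :=
  h.1.comp (f := fun t : ℝ => (t, x)) (by fun_prop) (fun _ ht => ⟨ht, hx⟩)

lemma hfun_mem (H : Coef T R m c b C B) (hw : MemX0 (Ioc 0 T) R w) :
    MemX0 (Ioc 0 T) R (hfun c b w) := by
  constructor
  · apply ContinuousOn.div
    · exact (H.hc.1.mul hw.1).add (H.hb.1.mul hw.deriv'.1)
    · fun_prop
    · rintro p ⟨hp, -⟩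
      exact_mod_cast hp.1.ne'
  · intro t ht
    exact (((H.hc.2 t ht).mul (hw.2 t ht)).add ((H.hb.2 t ht).mul (hw.deriv'.2 t ht))).div_const _

lemma hfun_bd (H : Coef T R m c b C B) {s : ℝ} (hs : s ∈ Ioc 0 T) {x : ℂ}
    (hx : x ∈ ball (0:ℂ) R) {M M' : ℝ} (h1 : ‖w s x‖ ≤ M) (h2 : ‖deriv (w s) x‖ ≤ M') :
    ‖hfun c b w s x‖ ≤ (C * M + B * M') * (m s / s) := by
  have hs0 := hs.1
  have hms := H.hm.2.2.1 s hs
  have hC := H.C_nonneg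
  have hB := H.B_pos
  rw [hfun, norm_div, Complex.norm_real, Real.norm_of_nonneg hs0.le, mul_div_assoc']
  refine div_le_div_of_nonneg_right ?_ hs0.le
  calc ‖c s x * w s x + b s x * deriv (w s) x‖
      ≤ ‖c s x‖ * ‖w s x‖ + ‖b s x‖ * ‖deriv (w s) x‖ := by
        refine (norm_add_le _ _).trans ?_; rw [norm_mul, norm_mul]
    _ ≤ (C * m s) * M + (B * m s) * M' := by
        gcongr
        · exact H.c_bd s hs x hx
        · exact H.b_bd s hs x hx
    _ = _ := by ring

lemma cpt_bd (hw : MemX0 (Icc 0 T) R w) {ρ : ℝ} (hρ : ρ < R) :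
    ∃ M, 0 ≤ M ∧ ∀ t ∈ Icc 0 T, ∀ x ∈ closedBall (0:ℂ) ρ, ‖w t x‖ ≤ M := by
  have hk : IsCompact (Icc 0 T ×ˢ closedBall (0:ℂ) ρ) := isCompact_Icc.prod (isCompact_closedBall _ _)
  obtain ⟨M, hM⟩ := hk.exists_bound_of_continuousOn
    (hw.1.mono (prod_mono le_rfl (closedBall_subset_ball hρ)))
  refine ⟨max M 0, le_max_right _ _, fun t ht x hx => (hM (t, x) ⟨ht, hx⟩).trans (le_max_left _ _)⟩

lemma hfun_dom (H : Coef T R m c b C B) (hw : MemX0 (Icc 0 T) R w) {ρ : ℝ} (hρ : ρ < R) :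
    ∃ M, 0 ≤ M ∧ ∀ t ∈ Ioc 0 T, ∀ x ∈ closedBall (0:ℂ) ρ, ‖hfun c b w t x‖ ≤ M * (m t / t) := by
  obtain ⟨M, hM0, hM⟩ := cpt_bd hw hρ
  obtain ⟨M', hM'0, hM'⟩ := cpt_bd hw.deriv' hρ
  have hC := H.C_nonneg
  have hB := H.B_pos
  refine ⟨C * M + B * M', by positivity, fun t ht x hx => ?_⟩
  exact hfun_bd H ht (closedBall_subset_ball hρ hx) (hM t ⟨ht.1.le, ht.2⟩ x hx)
    (hM' t ⟨ht.1.le, ht.2⟩ x hx)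

lemma hfun_int (H : Coef T R m c b C B) (hw : MemX0 (Icc 0 T) R w) {x : ℂ}
    (hx : x ∈ ball (0:ℂ) R) : IntegrableOn (fun s => hfun c b w s x) (Ioc 0 T) := by
  have hx' : ‖x‖ < R := by simpa using hx
  obtain ⟨M, hM0, hM⟩ := hfun_dom H hw hx'
  have hh := hfun_mem H (hw.mono' Ioc_subset_Icc_self le_rfl)
  refine (H.hm.2.2.2.const_mul M).mono' ((hh.slice hx).aestronglyMeasurable measurableSet_Ioc) ?_
  refine (ae_restrict_iff' measurableSet_Ioc).2 (Eventually.of_forall fun s hs => ?_)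
  exact hM s hs x (by simp)

lemma step_deriv (H : Coef T R m c b C B) (hw : MemX0 (Icc 0 T) R w) {x : ℂ}
    (hx : x ∈ ball (0:ℂ) R) {t : ℝ} (ht : t ∈ Ioc 0 T) :
    HasDerivWithinAt (fun t => stepW c b w t x) (hfun c b w t x) (Icc 0 T) t :=
  prim_deriv (hfun_int H hw hx)
    ((hfun_mem H (hw.mono' Ioc_subset_Icc_self le_rfl)).slice hx) ht

lemma step_zero (x : ℂ) : stepW c b w 0 x = 0 := by simp [stepW]

lemma step_diff (H : Coef T R m c b C B) (hw : MemX0 (Icc 0 T) R w) {t : ℝ} (ht : t ∈ Icc 0 T) :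
    DifferentiableOn ℂ (stepW c b w t) (ball 0 R) := by
  intro x0 hx0
  have hx0' : ‖x0‖ < R := by simpa using hx0
  have hh := hfun_mem H (hw.mono' Ioc_subset_Icc_self le_rfl)
  obtain ⟨ρ, hρ1, hρ2⟩ := exists_between hx0'
  obtain ⟨M, hM0, hM⟩ := hfun_dom H hw hρ2
  obtain ⟨ρ', hρ1', hρ2'⟩ := exists_between hρ1
  have hsubT : Ioc 0 t ⊆ Ioc 0 T := Ioc_subset_Ioc_right ht.2
  have hbd : ∀ s ∈ Ioc 0 T, ∀ x ∈ ball (0:ℂ) ρ', ‖deriv (hfun c b w s) x‖ ≤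
      (M / (ρ - ρ')) * (m s / s) := by
    intro s hs x hx
    have hpos : 0 < ρ - ρ' := by linarith
    have hsub : closedBall x (ρ - ρ') ⊆ closedBall 0 ρ := by
      apply closedBall_subset_closedBall'
      rw [mem_ball] at hx; linarith
    have := Complex.norm_deriv_le_of_forall_mem_sphere_norm_le (f := hfun c b w s) (c := x)
      hpos (C := M * (m s / s)) (by
        apply DifferentiableOn.diffContOnCl
        rw [closure_ball _ hpos.ne']
        exact (hh.2 s hs).mono (hsub.trans (closedBall_subset_ball hρ2)))
      (fun z hz => hM s hs z (hsub (sphere_subset_closedBall hz)))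
    calc _ ≤ _ := this
      _ = _ := by ring
  have := hasDerivAt_integral_of_dominated_loc_of_deriv_le (𝕜 := ℂ)
    (μ := volume.restrict (Ioc 0 t)) (F := fun x s => hfun c b w s x)
    (F' := fun x s => deriv (hfun c b w s) x) (x₀ := x0) (s := ball 0 ρ')
    (bound := fun s => (M / (ρ - ρ')) * (m s / s))
    (isOpen_ball.mem_nhds (by simpa using hρ1'))
    (by
      filter_upwards [isOpen_ball.mem_nhds hx0] with x hx
      exact ((hh.slice hx).mono hsubT).aestronglyMeasurable measurableSet_Ioc)
    ((hfun_int H hw hx0).mono_set hsubT)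
    (((hh.deriv'.slice hx0).mono hsubT).aestronglyMeasurable measurableSet_Ioc)
    ((ae_restrict_iff' measurableSet_Ioc).2 (Eventually.of_forall fun s hs x hx =>
      hbd s (hsubT hs) x hx))
    ((H.hm.2.2.2.mono_set hsubT).const_mul _)
    ((ae_restrict_iff' measurableSet_Ioc).2 (Eventually.of_forall fun s hs x hx =>
      ((hh.2 s (hsubT hs)).differentiableAt (isOpen_ball.mem_nhds
        (ball_subset_ball (hρ2'.le.trans hρ2.le) hx))).hasDerivAt))
  exact this.2.differentiableAt.differentiableWithinAt

lemma step_X0 (H : Coef T R m c b C B) (hw : MemX0 (Icc 0 T) R w) :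
    MemX0 (Icc 0 T) R (stepW c b w) := by
  refine ⟨?_, fun t ht => step_diff H hw ht⟩
  have hh := hfun_mem H (hw.mono' Ioc_subset_Icc_self le_rfl)
  rintro ⟨t0, x0⟩ ⟨ht0, hx0⟩
  simp only at ht0 hx0
  have hx0' : ‖x0‖ < R := by simpa using hx0
  obtain ⟨ρ, hρ1, hρ2⟩ := exists_between hx0'
  obtain ⟨M, hM0, hM⟩ := hfun_dom H hw hρ2
  have hev : ∀ᶠ p : ℝ × ℂ in 𝓝[Icc 0 T ×ˢ ball 0 R] (t0, x0), p.2 ∈ ball (0:ℂ) ρ := by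
    have : Tendsto Prod.snd (𝓝[Icc 0 T ×ˢ ball (0:ℂ) R] (t0, x0)) (𝓝 x0) :=
      (continuous_snd.tendsto (t0, x0)).mono_left nhdsWithin_le_nhds
    exact this (isOpen_ball.mem_nhds (by simpa using hρ1))
  have key : ContinuousWithinAt (fun p : ℝ × ℂ => ∫ s in Ioc 0 T,
      (Iic p.1).indicator (fun s => hfun c b w s p.2) s) (Icc 0 T ×ˢ ball 0 R) (t0, x0) := by
    apply continuousWithinAt_of_dominated (bound := fun s => M * (m s / s))
    · filter_upwards [self_mem_nhdsWithin] with p hp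
      exact ((hh.slice hp.2).aestronglyMeasurable measurableSet_Ioc).indicator measurableSet_Iic
    · filter_upwards [hev] with p hp
      refine (ae_restrict_iff' measurableSet_Ioc).2 (Eventually.of_forall fun s hs => ?_)
      exact (norm_indicator_le_norm_self _ _).trans (hM s hs _ (ball_subset_closedBall hp))
    · exact H.hm.2.2.2.const_mul M
    · have hne : ∀ᵐ s ∂(volume.restrict (Ioc 0 T)), s ≠ t0 :=
        ae_restrict_of_ae (Measure.ae_ne volume t0)
      have hin : ∀ᵐ s ∂(volume.restrict (Ioc 0 T)), s ∈ Ioc 0 T :=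
        ae_restrict_mem measurableSet_Ioc
      filter_upwards [hne, hin] with s hs hsT
      have hft : Tendsto Prod.fst (𝓝[Icc 0 T ×ˢ ball (0:ℂ) R] (t0, x0)) (𝓝 t0) :=
        (continuous_fst.tendsto (t0, x0)).mono_left nhdsWithin_le_nhds
      have hcont : ContinuousWithinAt (fun p : ℝ × ℂ => hfun c b w s p.2)
          (Icc 0 T ×ˢ ball 0 R) (t0, x0) := by
        have h1 : ContinuousAt (hfun c b w s) x0 :=
          ((hh.2 s hsT).continuousOn).continuousAt (isOpen_ball.mem_nhds hx0)
        have h2 : ContinuousAt (fun p : ℝ × ℂ => hfun c b w s p.2) (t0, x0) :=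
          ContinuousAt.comp (f := Prod.snd) (g := hfun c b w s) (x := (t0, x0)) h1 continuousAt_snd
        exact h2.continuousWithinAt
      rcases lt_or_gt_of_ne hs with hlt | hgt
      · refine hcont.congr_of_eventuallyEq ?_ ?_
        · filter_upwards [hft (Ioi_mem_nhds hlt)] with p hp
          have hp' : s < p.1 := hp
          exact indicator_of_mem (s := Iic p.1) (mem_Iic.2 hp'.le) _
        · exact indicator_of_mem (s := Iic t0) (mem_Iic.2 hlt.le) _
      · refine (continuousWithinAt_const (b := (0:ℂ))).congr_of_eventuallyEq ?_ ?_
        · filter_upwards [hft (Iio_mem_nhds hgt)] with p hp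
          have hp' : p.1 < s := hp
          exact indicator_of_notMem (s := Iic p.1) (fun h => absurd hp' (not_lt.2 (mem_Iic.1 h))) _
        · exact indicator_of_notMem (s := Iic t0) (fun h => absurd hgt (not_lt.2 (mem_Iic.1 h))) _
  refine key.congr_of_mem (fun p hp => ?_) ⟨ht0, hx0⟩
  rw [setIntegral_indicator measurableSet_Iic, stepW, Ioc_inter_Iic, min_eq_right hp.1.2]

/-- the basic estimate. -/
lemma step_bound (H : Coef T R m c b C B) {ρ A : ℝ} {n : ℕ} (hρ : ρ ≤ R) (hA : 0 ≤ A)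
    (hwd : ∀ t ∈ Ioc 0 T, DifferentiableOn ℂ (w t) (ball 0 ρ))
    (hwb : ∀ t ∈ Ioc 0 T, ∀ x ∈ ball (0:ℂ) ρ, ‖w t x‖ ≤ A * wphi m t ^ n / (ρ - ‖x‖) ^ n)
    {u : ℝ → ℂ → ℂ} {x : ℂ} (hx : x ∈ ball (0:ℂ) ρ)
    (huc : ContinuousOn (fun t : ℝ => u t x) (Icc 0 T)) (hu0 : u (0:ℝ) x = 0)
    (hud : ∀ t ∈ Ioc (0:ℝ) T, HasDerivWithinAt (fun t => u t x) (hfun c b w t x) (Icc 0 T) t)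
    {t : ℝ} (ht : t ∈ Icc 0 T) :
    ‖u t x‖ ≤ A * (C * R + 6 * B) * wphi m t ^ (n + 1) / (ρ - ‖x‖) ^ (n + 1) := by
  have hd : 0 < ρ - ‖x‖ := by rw [mem_ball_zero_iff] at hx; linarith
  have := grow H.hm (A := A * (C * R + 6 * B) / (ρ - ‖x‖) ^ (n + 1)) (n := n)
    (f := fun t => u t x) (f' := fun t => hfun c b w t x) huc hu0 hud
    (fun s hs => by
      have hs' : s ∈ Icc 0 T := ⟨hs.1.le, hs.2⟩
      have hφ := wphi_nonneg H.hm hs'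
      have hC := H.C_nonneg
      have hB := H.B_pos
      have hs0 := hs.1
      have hms := H.hm.2.2.1 s hs
      have h1 := nagumo (n := n) (A := A * wphi m s ^ n) (by positivity) (hwd s hs) (hwb s hs) hx
      refine (hfun_bd H hs (ball_subset_ball hρ hx) (hwb s hs x hx) h1).trans ?_
      rw [← mul_assoc (A * (C * R + 6 * B) / (ρ - ‖x‖) ^ (n + 1)) _ (m s / s)]
      refine mul_le_mul_of_nonneg_right ?_ (div_nonneg hms.le hs0.le)
      set d := ρ - ‖x‖ with hdd
      have e1 : C * (A * wphi m s ^ n / d ^ n) + B * (6 * (A * wphi m s ^ n) * (n + 1) / d ^ (n + 1))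
          = (A * wphi m s ^ n / d ^ (n + 1)) * (C * d + 6 * B * (n + 1)) := by
        rw [pow_succ]; field_simp
      have e2 : A * (C * R + 6 * B) / d ^ (n + 1) * ((n + 1) * wphi m s ^ n)
          = (A * wphi m s ^ n / d ^ (n + 1)) * ((C * R + 6 * B) * (n + 1)) := by ring
      rw [e1, e2]
      have hdR : d ≤ R := by rw [hdd]; linarith [norm_nonneg x]
      have h3 : C * d ≤ C * R := by gcongr
      have h4 : C * R ≤ C * R * (n + 1) := by
        have : 0 ≤ C * R := mul_nonneg hC H.R_pos.le
        nlinarith [this, (Nat.cast_nonneg n : (0:ℝ) ≤ n)]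
      refine mul_le_mul_of_nonneg_left ?_ (by positivity)
      linarith) ht
  calc _ ≤ _ := this
    _ = _ := by ring

end step


section Wgeom
variable {T R r : ℝ} {m : ℝ → ℝ}

lemma mem_W (hm : IsWeight T m) (hr : 0 < r) {t : ℝ} {x : ℂ} :
    (t, x) ∈ Wset m T R r ↔ t ∈ Icc 0 T ∧ wphi m t / r + ‖x‖ < R := by
  constructor
  · intro h; exact ⟨h.1, h.2.2⟩
  · rintro ⟨h1, h2⟩
    refine ⟨h1, ?_, h2⟩
    have := div_nonneg (wphi_nonneg hm h1) hr.le
    simp only [mem_ball_zero_iff]; linarith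

lemma W_mono_time (hm : IsWeight T m) (hr : 0 < r) {s t : ℝ} {x : ℂ}
    (h : (t, x) ∈ Wset m T R r) (hs : 0 ≤ s) (hst : s ≤ t) : (s, x) ∈ Wset m T R r := by
  rw [mem_W hm hr] at *
  have hsI : s ∈ Icc 0 T := ⟨hs, hst.trans h.1.2⟩
  refine ⟨hsI, lt_of_le_of_lt ?_ h.2⟩
  have := wphi_mono hm hsI h.1 hst
  gcongr

lemma W_nhds (hm : IsWeight T m) (hr : 0 < r) {t : ℝ} {x : ℂ} (h : (t, x) ∈ Wset m T R r) :
    Wset m T R r ∈ 𝓝[Icc 0 T] t ×ˢ 𝓝 x := by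
  have h' := (mem_W hm hr).1 h
  have h1 : Tendsto (fun p : ℝ × ℂ => wphi m p.1 / r + ‖p.2‖) (𝓝[Icc 0 T] t ×ˢ 𝓝 x)
      (𝓝 (wphi m t / r + ‖x‖)) := by
    have a := ((wphi_cont hm t h'.1).tendsto.div_const r).comp
      (tendsto_fst (f := 𝓝[Icc 0 T] t) (g := 𝓝 x))
    have b := (continuous_norm.tendsto x).comp (tendsto_snd (f := 𝓝[Icc 0 T] t) (g := 𝓝 x))
    exact a.add b
  have h2 : ∀ᶠ p : ℝ × ℂ in 𝓝[Icc 0 T] t ×ˢ 𝓝 x, p.1 ∈ Icc 0 T :=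
    tendsto_fst.eventually self_mem_nhdsWithin
  filter_upwards [h1 (Iio_mem_nhds h'.2), h2] with p hp1 hp2
  exact (mem_W hm hr).2 ⟨hp2, hp1⟩

lemma nhdsW_le (T R r : ℝ) (m : ℝ → ℝ) (t : ℝ) (x : ℂ) :
    𝓝[Wset m T R r] (t, x) ≤ 𝓝[Icc 0 T] t ×ˢ 𝓝 x := by
  rw [← nhdsWithin_univ x, ← nhdsWithin_prod_eq]
  exact nhdsWithin_mono _ (fun p hp => ⟨hp.1, mem_univ _⟩)

lemma W_exists_rho (hm : IsWeight T m) (hr : 0 < r) (hR : 0 < R) {t : ℝ} {x : ℂ}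
    (h : (t, x) ∈ Wset m T R r) :
    ∃ ρ, 0 < ρ ∧ ρ < R ∧ (t, x) ∈ Wset m T ρ r := by
  have h' := (mem_W hm hr).1 h
  obtain ⟨ρ, h1, h2⟩ := exists_between (max_lt h'.2 hR)
  exact ⟨ρ, (le_max_right _ _).trans_lt h1, h2,
    (mem_W hm hr).2 ⟨h'.1, (le_max_left _ _).trans_lt h1⟩⟩

lemma W_sub {ρ : ℝ} (hρ : ρ ≤ R) : Wset m T ρ r ⊆ Wset m T R r := fun _ hp =>
  ⟨hp.1, ball_subset_ball hρ hp.2.1, hp.2.2.trans_le hρ⟩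

/-- slices are balls -/
lemma W_slice (hm : IsWeight T m) (hr : 0 < r) {t : ℝ} (ht : t ∈ Icc 0 T) :
    {y : ℂ | (t, y) ∈ Wset m T R r} = ball 0 (R - wphi m t / r) := by
  ext y
  have : y ∈ {y : ℂ | (t, y) ∈ Wset m T R r} ↔ (t, y) ∈ Wset m T R r := Iff.rfl
  rw [this, mem_W hm hr, mem_ball_zero_iff]
  constructor
  · rintro ⟨_, h⟩; linarith
  · intro h; exact ⟨ht, by linarith⟩

lemma W_slice_empty {t : ℝ} (ht : t ∉ Icc 0 T) :
    {y : ℂ | (t, y) ∈ Wset m T R r} = ∅ := by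
  ext y
  simp only [mem_empty_iff_false, iff_false]
  exact fun h => ht h.1

lemma W_slice_open (hm : IsWeight T m) (hr : 0 < r) (t : ℝ) :
    IsOpen {y : ℂ | (t, y) ∈ Wset m T R r} := by
  by_cases ht : t ∈ Icc 0 T
  · rw [W_slice hm hr ht]; exact isOpen_ball
  · rw [W_slice_empty ht]; exact isOpen_empty

lemma W_deriv (hm : IsWeight T m) (hr : 0 < r) {f : ℝ → ℂ → ℂ}
    (hf : MemX0W (Wset m T R r) f) : MemX0W (Wset m T R r) (fun t => deriv (f t)) := by
  refine ⟨?_, fun t => (hf.2 t).deriv (W_slice_open hm hr t)⟩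
  rintro ⟨t, x⟩ h
  obtain ⟨S, hS, V, hV, hSV⟩ := Filter.mem_prod_iff.1 (W_nhds hm hr h)
  obtain ⟨U, hUV, hU, hxU⟩ := _root_.mem_nhds_iff.1 hV
  have hsub : S ×ˢ U ⊆ Wset m T R r := (prod_mono le_rfl hUV).trans hSV
  have hn : S ×ˢ U ∈ 𝓝[Wset m T R r] (t, x) :=
    nhdsW_le T R r m t x (Filter.prod_mem_prod hS (hU.mem_nhds hxU))
  have htS : t ∈ S := mem_of_mem_nhdsWithin h.1 hS
  have := deriv_cont hU (hf.1.mono hsub)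
    (fun s hs => (hf.2 s).mono (fun y hy => hsub ⟨hs, hy⟩))
  exact (this (t, x) ⟨htS, hxU⟩).mono_of_mem_nhdsWithin hn

lemma W_time (hm : IsWeight T m) (hr : 0 < r) {t : ℝ} {x : ℂ} (h : (t, x) ∈ Wset m T R r) :
    ∃ t1, t ≤ t1 ∧ (t1, x) ∈ Wset m T R r ∧ Icc 0 t1 ∈ 𝓝[{s : ℝ | (s, x) ∈ Wset m T R r}] t := by
  rcases h.1.2.eq_or_lt with hT | hT
  · simp only at hT
    subst hT
    refine ⟨t, le_rfl, h, ?_⟩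
    filter_upwards [self_mem_nhdsWithin] with s hs using hs.1
  · simp only at hT
    have h1 : Tendsto (fun s : ℝ => (s, x)) (𝓝[Icc 0 T] t) (𝓝[Icc 0 T] t ×ˢ 𝓝 x) :=
      tendsto_id.prodMk tendsto_const_nhds
    have h2 := h1 (W_nhds hm hr h)
    obtain ⟨ε, hε, hsub⟩ := Metric.mem_nhdsWithin_iff.1 h2
    set t1 := min T (t + ε / 2) with ht1
    have htt1 : t < t1 := lt_min hT (by linarith)
    refine ⟨t1, htt1.le, ?_, ?_⟩
    · apply hsub
      refine ⟨?_, h.1.1.trans htt1.le, min_le_left _ _⟩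
      have : t1 ≤ t + ε / 2 := min_le_right _ _
      rw [mem_ball, Real.dist_eq, abs_of_pos (by linarith)]; linarith
    · have : Iio t1 ∈ 𝓝[{s : ℝ | (s, x) ∈ Wset m T R r}] t :=
        mem_nhdsWithin_of_mem_nhds (Iio_mem_nhds htt1)
      filter_upwards [this, self_mem_nhdsWithin] with s hs1 hs2
      exact ⟨hs2.1.1, le_of_lt hs1⟩

end Wgeom

def wseq (c b : ℝ → ℂ → ℂ) (ψ : ℂ → ℂ) : ℕ → ℝ → ℂ → ℂ
  | 0 => fun _ => ψ
  | n + 1 => stepW c b (wseq c b ψ n)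

section core
variable {T R C B : ℝ} {m : ℝ → ℝ} {c b : ℝ → ℂ → ℂ} {ψ : ℂ → ℂ}

lemma wseq_X0 (H : Coef T R m c b C B) (hψ : DifferentiableOn ℂ ψ (ball 0 R)) (n : ℕ) :
    MemX0 (Icc 0 T) R (wseq c b ψ n) := by
  induction n with
  | zero =>
    refine ⟨?_, fun t _ => hψ⟩
    exact hψ.continuousOn.comp (f := fun p : ℝ × ℂ => p.2) (by fun_prop) (fun p hp => hp.2)
  | succ n ih => exact step_X0 H ih

lemma wseq_bound (H : Coef T R m c b C B) (hψ : DifferentiableOn ℂ ψ (ball 0 R)) {ρ M : ℝ}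
    (hρ : ρ ≤ R) (hM : 0 ≤ M) (hψM : ∀ x ∈ ball (0:ℂ) ρ, ‖ψ x‖ ≤ M) (n : ℕ) :
    ∀ t ∈ Icc 0 T, ∀ x ∈ ball (0:ℂ) ρ,
      ‖wseq c b ψ n t x‖ ≤ M * (C * R + 6 * B) ^ n * wphi m t ^ n / (ρ - ‖x‖) ^ n := by
  have hK : 0 ≤ C * R + 6 * B := by
    have := H.C_nonneg; have := H.B_pos; have := H.R_pos; positivity
  induction n with
  | zero => intro t ht x hx; simpa [wseq] using hψM x hx
  | succ n ih =>
    intro t ht x hx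
    have hX := wseq_X0 H hψ n
    have := step_bound H (w := wseq c b ψ n) (u := stepW c b (wseq c b ψ n)) hρ
      (A := M * (C * R + 6 * B) ^ n) (n := n) (by positivity)
      (fun s hs => (hX.2 s ⟨hs.1.le, hs.2⟩).mono (ball_subset_ball hρ))
      (fun s hs y hy => ih s ⟨hs.1.le, hs.2⟩ y hy) hx
      ((step_X0 H hX).slice (ball_subset_ball hρ hx)) (step_zero x)
      (fun s hs => step_deriv H hX (ball_subset_ball hρ hx) hs) ht
    rw [pow_succ (C * R + 6 * B), ← mul_assoc]
    exact this

lemma K_pos (H : Coef T R m c b C B) : 0 < C * R + 6 * B := by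
  have := H.C_nonneg; have := H.B_pos; have := H.R_pos; positivity

lemma wseq_half (H : Coef T R m c b C B) (hψ : DifferentiableOn ℂ ψ (ball 0 R)) {ρ M : ℝ}
    (hρ : ρ ≤ R) (hM : 0 ≤ M) (hψM : ∀ x ∈ ball (0:ℂ) ρ, ‖ψ x‖ ≤ M) (n : ℕ) {t : ℝ} {x : ℂ}
    (h : (t, x) ∈ Wset m T ρ (1 / (2 * (C * R + 6 * B)))) :
    ‖wseq c b ψ n t x‖ ≤ M * (1 / 2) ^ n := by
  have hK := K_pos H
  refine (wseq_bound H hψ hρ hM hψM n t h.1 x h.2.1).trans ?_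
  have hφ := wphi_nonneg H.hm h.1
  have h2 : wphi m t / (1 / (2 * (C * R + 6 * B))) + ‖x‖ < ρ := h.2.2
  have e : wphi m t / (1 / (2 * (C * R + 6 * B))) = 2 * ((C * R + 6 * B) * wphi m t) := by
    field_simp
  rw [e] at h2
  simp only at hφ
  have hd : 0 < ρ - ‖x‖ := by
    have : 0 ≤ (C * R + 6 * B) * wphi m t := by positivity
    linarith
  rw [mul_assoc, ← mul_pow, mul_div_assoc, ← div_pow]
  have hq : (C * R + 6 * B) * wphi m t / (ρ - ‖x‖) ≤ 1 / 2 := by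
    rw [div_le_iff₀ hd]; linarith
  exact mul_le_mul_of_nonneg_left (pow_le_pow_left₀ (by positivity) hq n) hM

lemma psi_bd (hψ : DifferentiableOn ℂ ψ (ball 0 R)) {ρ : ℝ} (hρ : ρ < R) :
    ∃ M, 0 ≤ M ∧ ∀ x ∈ ball (0:ℂ) ρ, ‖ψ x‖ ≤ M := by
  obtain ⟨M, hM⟩ := (isCompact_closedBall (0:ℂ) ρ).exists_bound_of_continuousOn
    (hψ.continuousOn.mono (closedBall_subset_ball hρ))
  exact ⟨max M 0, le_max_right _ _, fun x hx =>
    (hM x (ball_subset_closedBall hx)).trans (le_max_left _ _)⟩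

lemma half_summable (M : ℝ) : Summable (fun n : ℕ => M * (1 / 2 : ℝ) ^ n) :=
  summable_geometric_two.mul_left M

def wsum (c b : ℝ → ℂ → ℂ) (ψ : ℂ → ℂ) (t : ℝ) (x : ℂ) : ℂ := ∑' n, wseq c b ψ n t x

lemma wsum_X0 (H : Coef T R m c b C B) (hψ : DifferentiableOn ℂ ψ (ball 0 R)) :
    MemX0W (Wset m T R (1 / (2 * (C * R + 6 * B)))) (wsum c b ψ) := by
  have hK := K_pos H
  have hr : 0 < 1 / (2 * (C * R + 6 * B)) := by positivity
  set r := 1 / (2 * (C * R + 6 * B)) with hrdef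
  constructor
  · rintro ⟨t, x⟩ h
    obtain ⟨ρ, hρ0, hρ, hmem⟩ := W_exists_rho H.hm hr H.R_pos h
    obtain ⟨M, hM0, hM⟩ := psi_bd hψ hρ
    have hn : Wset m T ρ r ∈ 𝓝[Wset m T R r] (t, x) :=
      nhdsW_le T R r m t x (W_nhds H.hm hr hmem)
    have : ContinuousOn (fun p : ℝ × ℂ => ∑' n, wseq c b ψ n p.1 p.2) (Wset m T ρ r) := by
      refine continuousOn_tsum (fun n => (wseq_X0 H hψ n).1.mono ?_) (half_summable M)
        (fun n p hp => wseq_half H hψ hρ.le hM0 hM n hp)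
      exact fun p hp => ⟨hp.1, ball_subset_ball hρ.le hp.2.1⟩
    exact (this (t, x) hmem).mono_of_mem_nhdsWithin hn
  · intro t x h
    obtain ⟨ρ, hρ0, hρ, hmem⟩ := W_exists_rho H.hm hr H.R_pos h
    obtain ⟨M, hM0, hM⟩ := psi_bd hψ hρ
    have hop := W_slice_open (R := ρ) H.hm hr t
    have := Complex.differentiableOn_tsum_of_summable_norm (F := fun n => wseq c b ψ n t)
      (half_summable M) (U := {y : ℂ | (t, y) ∈ Wset m T ρ r})
      (fun n => ((wseq_X0 H hψ n).2 t hmem.1).mono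
        (fun y hy => ball_subset_ball hρ.le hy.2.1)) hop
      (fun n y hy => wseq_half H hψ hρ.le hM0 hM n hy)
    exact (this.differentiableAt (hop.mem_nhds hmem)).differentiableWithinAt

lemma wsum_zero {x : ℂ} : wsum c b ψ 0 x = ψ x := by
  rw [wsum, tsum_eq_single 0]
  · rfl
  · intro n hn
    obtain ⟨k, rfl⟩ := Nat.exists_eq_succ_of_ne_zero hn
    exact step_zero x

lemma wsum_hfun_bound (H : Coef T R m c b C B) (hψ : DifferentiableOn ℂ ψ (ball 0 R))
    {t1 : ℝ} {x : ℂ} (h : (t1, x) ∈ Wset m T R (1 / (2 * (C * R + 6 * B)))) :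
    ∃ D, 0 ≤ D ∧ ∀ s ∈ Ioc 0 t1, HasSum (fun n => wseq c b ψ n s x) (wsum c b ψ s x) ∧
      HasSum (fun n => hfun c b (wseq c b ψ n) s x) (hfun c b (wsum c b ψ) s x) ∧
      ∀ n, ‖hfun c b (wseq c b ψ n) s x‖ ≤ (D * (1 / 2) ^ n) * (m s / s) := by
  have hK := K_pos H
  have hr : 0 < 1 / (2 * (C * R + 6 * B)) := by positivity
  set r := 1 / (2 * (C * R + 6 * B)) with hrdef
  obtain ⟨ρ, hρ0, hρ, hmem⟩ := W_exists_rho H.hm hr H.R_pos h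
  obtain ⟨M, hM0, hM⟩ := psi_bd hψ hρ
  have hC := H.C_nonneg
  have hB := H.B_pos
  set δ := ρ - wphi m t1 / r - ‖x‖ with hδ
  have hδ0 : 0 < δ := by have := ((mem_W H.hm hr).1 hmem).2; linarith
  refine ⟨C * M + B * (6 * M / δ), by positivity, fun s hs => ?_⟩
  have hsW := W_mono_time H.hm hr hmem hs.1.le hs.2
  have hsT : s ∈ Ioc 0 T := ⟨hs.1, hs.2.trans h.1.2⟩
  have hop := W_slice_open (R := ρ) H.hm hr s
  have hdiff : ∀ n, DifferentiableOn ℂ (wseq c b ψ n s) {y : ℂ | (s, y) ∈ Wset m T ρ r} :=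
    fun n => ((wseq_X0 H hψ n).2 s hsW.1).mono (fun y hy => ball_subset_ball hρ.le hy.2.1)
  have h1 : HasSum (fun n => wseq c b ψ n s x) (wsum c b ψ s x) :=
    (Summable.of_norm_bounded (half_summable M)
      (fun n => wseq_half H hψ hρ.le hM0 hM n hsW)).hasSum
  have h2 : HasSum (fun n => deriv (wseq c b ψ n s) x) (deriv (wsum c b ψ s) x) :=
    Complex.hasSum_deriv_of_summable_norm (F := fun n => wseq c b ψ n s)
      (half_summable M) hdiff hop (fun n y hy => wseq_half H hψ hρ.le hM0 hM n hy) hsW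
  refine ⟨h1, ((h1.mul_left _).add (h2.mul_left _)).div_const _, fun n => ?_⟩
  have hsl := W_slice (R := ρ) H.hm hr hsW.1
  have hd := nagumo (ρ := ρ - wphi m s / r) (A := M * (1 / 2) ^ n) (n := 0) (f := wseq c b ψ n s)
    (by positivity) (hsl ▸ hdiff n)
    (fun y hy => by
      have hy' : (s, y) ∈ Wset m T ρ r := by
        have : y ∈ {y : ℂ | (s, y) ∈ Wset m T ρ r} := by rw [hsl]; exact hy
        exact this
      simpa using wseq_half H hψ hρ.le hM0 hM n hy') (x := x) (by rw [← hsl]; exact hsW)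
  have hδs : δ ≤ ρ - wphi m s / r - ‖x‖ := by
    have := wphi_mono H.hm hsW.1 hmem.1 hs.2
    have : wphi m s / r ≤ wphi m t1 / r := by gcongr
    linarith
  have hd' : ‖deriv (wseq c b ψ n s) x‖ ≤ 6 * (M * (1 / 2) ^ n) / δ := by
    refine hd.trans ?_
    simp only [Nat.cast_zero, zero_add, mul_one, pow_one]
    gcongr
  refine (hfun_bd H hsT (ball_subset_ball hρ.le hmem.2.1)
    (wseq_half H hψ hρ.le hM0 hM n hsW) hd').trans (le_of_eq ?_)
  ring

lemma wsum_deriv (H : Coef T R m c b C B) (hψ : DifferentiableOn ℂ ψ (ball 0 R))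
    {t : ℝ} {x : ℂ} (h : (t, x) ∈ Wset m T R (1 / (2 * (C * R + 6 * B)))) (ht : 0 < t) :
    HasDerivWithinAt (fun s => wsum c b ψ s x) (hfun c b (wsum c b ψ) t x)
      {s : ℝ | (s, x) ∈ Wset m T R (1 / (2 * (C * R + 6 * B)))} t := by
  have hK := K_pos H
  have hr : 0 < 1 / (2 * (C * R + 6 * B)) := by positivity
  have hbound := fun t1 (h1 : (t1, x) ∈ Wset m T R (1 / (2 * (C * R + 6 * B)))) =>
    wsum_hfun_bound H hψ h1
  have hX := wsum_X0 H hψ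
  set r := 1 / (2 * (C * R + 6 * B)) with hrdef
  obtain ⟨t1, htt1, ht1, hn⟩ := W_time H.hm hr h
  obtain ⟨D, hD0, hD⟩ := hbound t1 ht1
  have hxR : x ∈ ball (0:ℂ) R := h.2.1
  have hsub : Ioc 0 t1 ⊆ Ioc 0 T := Ioc_subset_Ioc_right ht1.1.2
  have hseq : ∀ n, ContinuousOn (fun s => hfun c b (wseq c b ψ n) s x) (Ioc 0 T) := fun n =>
    (hfun_mem H ((wseq_X0 H hψ n).mono' Ioc_subset_Icc_self le_rfl)).slice hxR
  have hmemW : ∀ s ∈ Ioc 0 t1, (s, x) ∈ Wset m T R r := fun s hs =>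
    W_mono_time H.hm hr ht1 hs.1.le hs.2
  have hcont : ContinuousOn (fun s => hfun c b (wsum c b ψ) s x) (Ioc 0 t1) := by
    have e0 : ContinuousOn (fun s : ℝ => (s, x)) (Ioc 0 t1) := by fun_prop
    have e1 : ContinuousOn (fun s => wsum c b ψ s x) (Ioc 0 t1) :=
      hX.1.comp (f := fun s : ℝ => (s, x)) e0 hmemW
    have e2 : ContinuousOn (fun s => deriv (wsum c b ψ s) x) (Ioc 0 t1) :=
      (W_deriv H.hm hr hX).1.comp (f := fun s : ℝ => (s, x)) e0 hmemW
    have e3 := (H.hc.slice hxR).mono hsub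
    have e4 := (H.hb.slice hxR).mono hsub
    refine ((e3.mul e1).add (e4.mul e2)).div (by fun_prop) (fun s hs => ?_)
    exact_mod_cast hs.1.ne'
  have hgeo : ∀ s, HasSum (fun n : ℕ => (D * (1 / 2) ^ n) * (m s / s)) ((D * 2) * (m s / s)) :=
    fun s => (hasSum_geometric_two.mul_left D).mul_right _
  have hnorm : ∀ s ∈ Ioc 0 t1, ‖hfun c b (wsum c b ψ) s x‖ ≤ (D * 2) * (m s / s) := by
    intro s hs
    obtain ⟨_, h2, h3⟩ := hD s hs
    exact h2.norm_le_of_bounded (hgeo s) h3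
  have hintg : IntegrableOn (fun s => hfun c b (wsum c b ψ) s x) (Ioc 0 t1) := by
    refine ((H.hm.2.2.2.mono_set hsub).const_mul (D * 2)).mono'
      (hcont.aestronglyMeasurable measurableSet_Ioc) ?_
    exact (ae_restrict_iff' measurableSet_Ioc).2 (Eventually.of_forall hnorm)
  have hformula : ∀ s ∈ Icc 0 t1, wsum c b ψ s x = ψ x + ∫ τ in Ioc 0 s, hfun c b (wsum c b ψ) τ x := by
    intro s hs
    rcases hs.1.eq_or_lt with h0 | hs0
    · rw [← h0, wsum_zero]; simp
    have hss : Ioc 0 s ⊆ Ioc 0 t1 := Ioc_subset_Ioc_right hs.2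
    have hS := hasSum_integral_of_dominated_convergence (μ := volume.restrict (Ioc 0 s))
      (F := fun n τ => hfun c b (wseq c b ψ n) τ x) (f := fun τ => hfun c b (wsum c b ψ) τ x)
      (fun n τ => (D * (1 / 2) ^ n) * (m τ / τ))
      (fun n => ((hseq n).mono (hss.trans hsub)).aestronglyMeasurable measurableSet_Ioc)
      (fun n => (ae_restrict_iff' measurableSet_Ioc).2
        (Eventually.of_forall fun τ hτ => (hD τ (hss hτ)).2.2 n))
      (Eventually.of_forall fun τ => (hgeo τ).summable)
      (by
        simp only [fun τ => (hgeo τ).tsum_eq]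
        exact (H.hm.2.2.2.mono_set (hss.trans hsub)).const_mul (D * 2))
      ((ae_restrict_iff' measurableSet_Ioc).2
        (Eventually.of_forall fun τ hτ => (hD τ (hss hτ)).2.1))
    have hS' : HasSum (fun n => wseq c b ψ (n + 1) s x)
      (∫ τ in Ioc 0 s, hfun c b (wsum c b ψ) τ x) := hS
    have hsum := (hD s ⟨hs0, hs.2⟩).1
    have hS2 := HasSum.zero_add (f := fun n => wseq c b ψ n s x) hS'
    exact hsum.unique hS2
  have hder := prim_deriv hintg hcont (⟨ht, htt1⟩ : t ∈ Ioc 0 t1)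
  have := (hder.const_add (ψ x)).congr_of_mem (f₁ := fun s => wsum c b ψ s x)
    (fun s hs => hformula s hs) ⟨ht.le, htt1⟩
  exact this.mono_of_mem_nhdsWithin hn

end core


lemma core_unique {T R C B : ℝ} {m : ℝ → ℝ} {c b : ℝ → ℂ → ℂ} (H : Coef T R m c b C B)
    {ρ ρ' : ℝ} (hρ : ρ < ρ') (hρ' : ρ' ≤ R) {u : ℝ → ℂ → ℂ} (hu : MemX0 (Icc 0 T) ρ' u)
    (hu0 : ∀ x ∈ ball (0:ℂ) ρ, u 0 x = 0)
    (hud : ∀ t ∈ Ioc 0 T, ∀ x ∈ ball (0:ℂ) ρ,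
      HasDerivWithinAt (fun t => u t x) (hfun c b u t x) (Icc 0 T) t)
    {t : ℝ} (ht : t ∈ Icc 0 T) {x : ℂ} (hx : x ∈ ball (0:ℂ) ρ)
    (hK : (C * R + 6 * B) * wphi m t < ρ - ‖x‖) : u t x = 0 := by
  obtain ⟨M, hM0, hM⟩ := cpt_bd hu hρ
  have hKp := K_pos H
  have key : ∀ n : ℕ, ∀ t ∈ Icc 0 T, ∀ x ∈ ball (0:ℂ) ρ,
      ‖u t x‖ ≤ M * (C * R + 6 * B) ^ n * wphi m t ^ n / (ρ - ‖x‖) ^ n := by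
    intro n
    induction n with
    | zero => intro t ht x hx; simpa using hM t ht x (ball_subset_closedBall hx)
    | succ n ih =>
      intro t ht x hx
      have := step_bound H (w := u) (u := u) (hρ.le.trans hρ')
        (A := M * (C * R + 6 * B) ^ n) (n := n) (by positivity)
        (fun s hs => (hu.2 s ⟨hs.1.le, hs.2⟩).mono (ball_subset_ball hρ.le))
        (fun s hs y hy => ih s ⟨hs.1.le, hs.2⟩ y hy) hx
        (hu.slice (ball_subset_ball hρ.le hx)) (hu0 x hx)
        (fun s hs => hud s hs x hx) ht
      rw [pow_succ (C * R + 6 * B), ← mul_assoc]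
      exact this
  have hφ := wphi_nonneg H.hm ht
  have hd : 0 < ρ - ‖x‖ := by rw [mem_ball_zero_iff] at hx; linarith
  set q := (C * R + 6 * B) * wphi m t / (ρ - ‖x‖) with hq
  have hq0 : 0 ≤ q := by positivity
  have hq1 : q < 1 := by rw [hq, div_lt_one hd]; exact hK
  have hlim : Tendsto (fun n : ℕ => M * q ^ n) atTop (𝓝 (M * 0)) :=
    (tendsto_pow_atTop_nhds_zero_of_lt_one hq0 hq1).const_mul M
  have hle : ∀ n : ℕ, ‖u t x‖ ≤ M * q ^ n := by
    intro n
    refine (key n t ht x hx).trans (le_of_eq ?_)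
    rw [hq, div_pow, mul_pow]; ring
  have := ge_of_tendsto' hlim hle
  rw [mul_zero] at this
  exact norm_le_zero_iff.1 this

lemma phi_small {T : ℝ} {m : ℝ → ℝ} (hm : IsWeight T m) (hT : 0 < T) {ε : ℝ} (hε : 0 < ε) :
    ∃ T', 0 < T' ∧ T' ≤ T ∧ wphi m T' < ε := by
  have h0 : (0:ℝ) ∈ Icc 0 T := left_mem_Icc.2 hT.le
  have h1 := (wphi_cont hm 0 h0).tendsto
  rw [wphi_zero] at h1
  have h2 : 𝓝[Ioc 0 T] (0:ℝ) ≤ 𝓝[Icc 0 T] 0 := nhdsWithin_mono _ Ioc_subset_Icc_self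
  have : (𝓝[Ioc 0 T] (0:ℝ)).NeBot := by
    rw [← mem_closure_iff_nhdsWithin_neBot, closure_Ioc hT.ne]; exact h0
  have hev : ∀ᶠ t in 𝓝[Ioc 0 T] (0:ℝ), wphi m t < ε := (h1.mono_left h2).eventually (Iio_mem_nhds hε)
  have hself : ∀ᶠ t in 𝓝[Ioc 0 T] (0:ℝ), t ∈ Ioc 0 T := self_mem_nhdsWithin
  obtain ⟨t, ht1, ht2⟩ := (hev.and hself).exists
  exact ⟨t, ht2.1, ht2.2, ht1⟩

lemma IsWeight.mono_T {T T' : ℝ} {m : ℝ → ℝ} (hm : IsWeight T m) (h : T' ≤ T) : IsWeight T' m := by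
  have hs : Ioc 0 T' ⊆ Ioc 0 T := Ioc_subset_Ioc_right h
  exact ⟨hm.1.mono hs, hm.2.1.mono hs, fun t ht => hm.2.2.1 t (hs ht), hm.2.2.2.mono_set hs⟩

lemma tube {T R r R' : ℝ} {m : ℝ → ℝ} (hm : IsWeight T m) (hT : 0 < T) (hr : 0 < r) (hR : R' < R) :
    ∃ T', 0 < T' ∧ T' ≤ T ∧ Icc 0 T' ×ˢ closedBall (0:ℂ) R' ⊆ Wset m T R r := by
  obtain ⟨T', h1, h2, h3⟩ := phi_small hm hT (ε := r * (R - R')) (mul_pos hr (by linarith))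
  refine ⟨T', h1, h2, ?_⟩
  rintro ⟨t, x⟩ ⟨ht, hx⟩
  have hxn : ‖x‖ ≤ R' := by simpa using hx
  have hx0 : t ∈ Icc 0 T := ⟨ht.1, ht.2.trans h2⟩
  rw [mem_W hm hr]
  refine ⟨hx0, ?_⟩
  have h4 := wphi_mono hm hx0 ⟨h1.le, h2⟩ ht.2
  have h5 : wphi m t / r < R - R' := by
    rw [div_lt_iff₀ hr]; linarith
  linarith

lemma exp_bd {z : ℂ} {δ t : ℝ} (ht : 0 < t) (ht1 : t ≤ 1) (hz : δ ≤ z.re) :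
    ‖Complex.exp (z * (Real.log t : ℂ))‖ ≤ t ^ δ := by
  rw [Complex.norm_exp, Complex.re_mul_ofReal, Real.rpow_def_of_pos ht, mul_comm]
  apply Real.exp_le_exp.2
  exact mul_le_mul_of_nonpos_left hz (Real.log_nonpos ht.le ht1)

lemma twist {J : Set ℝ} {t : ℝ} (ht : 0 < t) {a : ℂ → ℂ} {x : ℂ} (ha : DifferentiableAt ℂ a x)
    {y : ℝ → ℂ → ℂ} (hy : DifferentiableAt ℂ (y t) x) {p q : ℂ}
    (hd : HasDerivWithinAt (fun s => y s x) ((p * y t x + q * deriv (y t) x) / (t : ℂ)) J t) :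
    HasDerivWithinAt (fun s : ℝ => Complex.exp (a x * (Real.log s : ℂ)) * y s x)
      (((p + a x - q * deriv a x * (Real.log t : ℂ)) * (Complex.exp (a x * (Real.log t : ℂ)) * y t x)
        + q * deriv (fun x' => Complex.exp (a x' * (Real.log t : ℂ)) * y t x') x) / (t : ℂ)) J t := by
  have h1 : HasDerivAt (fun x' => Complex.exp (a x' * (Real.log t : ℂ)) * y t x')
      (Complex.exp (a x * (Real.log t : ℂ)) * (deriv a x * (Real.log t : ℂ)) * y t x
        + Complex.exp (a x * (Real.log t : ℂ)) * deriv (y t) x) x :=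
    ((ha.hasDerivAt.mul_const _).cexp).mul hy.hasDerivAt
  rw [h1.deriv]
  have h2 : HasDerivAt (fun s : ℝ => (Real.log s : ℂ)) ((t⁻¹ : ℝ) : ℂ) t :=
    (Real.hasDerivAt_log ht.ne').ofReal_comp
  have h3 := ((h2.const_mul (a x)).cexp).hasDerivWithinAt (s := J)
  have h4 := h3.mul hd
  have ht' : (t : ℂ) ≠ 0 := by exact_mod_cast ht.ne'
  refine h4.congr_deriv ?_
  push_cast
  field_simp
  ring

structure Sit (T R r δ : ℝ) (m : ℝ → ℝ) (lam b : ℝ → ℂ → ℂ) : Prop where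
  hm : IsWeight T m
  hT : 0 < T
  hT1 : T ≤ 1
  hR : 0 < R
  hr : 0 < r
  hlam : MemX0 (Icc 0 T) R lam
  hb : MemX0 (Icc 0 T) R b
  hδ : 0 < δ
  hre : ∀ x ∈ ball (0:ℂ) R, δ ≤ (lam 0 x).re

def mkV (lam w : ℝ → ℂ → ℂ) (t : ℝ) (x : ℂ) : ℂ :=
  if t = 0 then 0 else Complex.exp (lam 0 x * (Real.log t : ℂ)) * w t x

def redC (lam b : ℝ → ℂ → ℂ) (t : ℝ) (x : ℂ) : ℂ :=
  lam t x - lam 0 x + b t x * deriv (lam 0) x * (Real.log t : ℂ)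

section sit
variable {T R r δ : ℝ} {m : ℝ → ℝ} {lam b w : ℝ → ℂ → ℂ}

lemma mkV_pos {t : ℝ} (ht : 0 < t) :
    mkV lam w t = fun x => Complex.exp (lam 0 x * (Real.log t : ℂ)) * w t x := by
  funext x; simp [mkV, ht.ne']

lemma mkV_zero : mkV lam w 0 = fun _ => 0 := by funext x; simp [mkV]

lemma Sit.zero_mem (S : Sit T R r δ m lam b) : (0:ℝ) ∈ Icc 0 T := left_mem_Icc.2 S.hT.le

lemma Sit.lam0_at (S : Sit T R r δ m lam b) {x : ℂ} (hx : x ∈ ball (0:ℂ) R) :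
    DifferentiableAt ℂ (lam 0) x :=
  (S.hlam.2 0 S.zero_mem).differentiableAt (isOpen_ball.mem_nhds hx)

/-- continuity of the exponential factor at positive times -/
lemma Sit.exp_cont (S : Sit T R r δ m lam b) {t : ℝ} {x : ℂ} (ht : 0 < t)
    (hx : x ∈ ball (0:ℂ) R) (σ : ℂ) :
    ContinuousAt (fun p : ℝ × ℂ => Complex.exp (σ * lam 0 p.2 * (Real.log p.1 : ℂ))) (t, x) := by
  have h1 : ContinuousAt (fun p : ℝ × ℂ => lam 0 p.2) (t, x) :=
    ContinuousAt.comp (f := Prod.snd) (g := lam 0) (x := (t, x)) (S.lam0_at hx).continuousAt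
      continuousAt_snd
  have h2 : ContinuousAt (fun p : ℝ × ℂ => Real.log p.1) (t, x) :=
    ContinuousAt.comp (f := Prod.fst) (g := Real.log) (x := (t, x))
      (Real.continuousAt_log ht.ne') continuousAt_fst
  have h3 : ContinuousAt (fun p : ℝ × ℂ => (Real.log p.1 : ℂ)) (t, x) :=
    Complex.continuous_ofReal.continuousAt.comp h2
  exact ((continuousAt_const.mul h1).mul h3).cexp

lemma Sit.mkV_norm (S : Sit T R r δ m lam b) {t : ℝ} {x : ℂ} (ht : t ∈ Icc 0 T) {d : ℝ}
    (hd : 0 < d) (hx : d ≤ (lam 0 x).re) : ‖mkV lam w t x‖ ≤ t ^ d * ‖w t x‖ := by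
  rcases ht.1.eq_or_lt with h | h
  · rw [← h, mkV_zero, Real.zero_rpow hd.ne']; simp
  · rw [mkV_pos h, norm_mul]
    exact mul_le_mul_of_nonneg_right (exp_bd h (ht.2.trans S.hT1) hx) (norm_nonneg _)

lemma fst_pos_ev {A : Set (ℝ × ℂ)} {t : ℝ} {x : ℂ} (ht : 0 < t) :
    ∀ᶠ p : ℝ × ℂ in 𝓝[A] (t, x), 0 < p.1 := by
  have hft : Tendsto Prod.fst (𝓝[A] (t, x)) (𝓝 t) :=
    (continuous_fst.tendsto (t, x)).mono_left nhdsWithin_le_nhds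
  exact hft.eventually (Ioi_mem_nhds ht)

lemma Sit.mkV_X0 (S : Sit T R r δ m lam b) (hw : MemX0W (Wset m T R r) w) :
    MemX0W (Wset m T R r) (mkV lam w) := by
  constructor
  · rintro ⟨t, x⟩ h
    rcases h.1.1.eq_or_lt with h0 | ht
    · simp only at h0
      subst h0
      have h1 : Tendsto (fun p : ℝ × ℂ => p.1 ^ δ * ‖w p.1 p.2‖) (𝓝[Wset m T R r] (0, x)) (𝓝 0) := by
        have a : Tendsto (fun p : ℝ × ℂ => p.1 ^ δ) (𝓝[Wset m T R r] (0, x)) (𝓝 ((0:ℝ) ^ δ)) := by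
          have hft : Tendsto Prod.fst (𝓝[Wset m T R r] ((0:ℝ), x)) (𝓝 0) :=
            (continuous_fst.tendsto ((0:ℝ), x)).mono_left nhdsWithin_le_nhds
          exact ((Real.continuousAt_rpow_const 0 δ (Or.inr S.hδ.le)).tendsto).comp hft
        rw [Real.zero_rpow S.hδ.ne'] at a
        have b := (hw.1 (0, x) h).tendsto.norm
        simpa using a.mul b
      have h2 : Tendsto (fun p : ℝ × ℂ => mkV lam w p.1 p.2) (𝓝[Wset m T R r] (0, x)) (𝓝 0) := by
        refine squeeze_zero_norm' ?_ h1
        filter_upwards [self_mem_nhdsWithin] with p hp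
        exact S.mkV_norm hp.1 S.hδ (S.hre _ hp.2.1)
      have h3 : mkV lam w 0 x = 0 := by rw [mkV_zero]
      unfold ContinuousWithinAt
      simp only [h3]
      exact h2
    · simp only at ht
      have h1 := ((S.exp_cont ht h.2.1 1).continuousWithinAt (s := Wset m T R r)).mul (hw.1 (t, x) h)
      refine h1.congr_of_eventuallyEq ?_ ?_
      · filter_upwards [fst_pos_ev ht] with p hp
        rw [mkV_pos hp]; simp
      · simp only [mkV_pos ht]; simp
  · intro t
    by_cases hT : t ∈ Icc 0 T
    · rcases hT.1.eq_or_lt with h0 | ht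
      · rw [← h0, mkV_zero]; exact differentiableOn_const _
      · rw [mkV_pos ht]
        refine DifferentiableOn.mul (DifferentiableOn.cexp (DifferentiableOn.mul_const ?_ _)) (hw.2 t)
        exact (S.hlam.2 0 S.zero_mem).mono (fun y hy => hy.2.1)
    · rw [W_slice_empty hT]; exact differentiableOn_empty

lemma W_sub_prod : Wset m T R r ⊆ Icc 0 T ×ˢ ball (0:ℂ) R := fun _ hp => ⟨hp.1, hp.2.1⟩

lemma MemX0.toW (h : MemX0 (Icc 0 T) R w) : MemX0W (Wset m T R r) w := by
  refine ⟨h.1.mono W_sub_prod, fun t => ?_⟩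
  by_cases hT : t ∈ Icc 0 T
  · exact (h.2 t hT).mono (fun y hy => hy.2.1)
  · rw [W_slice_empty hT]; exact differentiableOn_empty

lemma MemX0W.mul' {W : Set (ℝ × ℂ)} {f g : ℝ → ℂ → ℂ} (hf : MemX0W W f) (hg : MemX0W W g) :
    MemX0W W (fun t x => f t x * g t x) := ⟨hf.1.mul hg.1, fun t => (hf.2 t).mul (hg.2 t)⟩

lemma MemX0W.add' {W : Set (ℝ × ℂ)} {f g : ℝ → ℂ → ℂ} (hf : MemX0W W f) (hg : MemX0W W g) :
    MemX0W W (fun t x => f t x + g t x) := ⟨hf.1.add hg.1, fun t => (hf.2 t).add (hg.2 t)⟩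

lemma MemX0W.sub' {W : Set (ℝ × ℂ)} {f g : ℝ → ℂ → ℂ} (hf : MemX0W W f) (hg : MemX0W W g) :
    MemX0W W (fun t x => f t x - g t x) := ⟨hf.1.sub hg.1, fun t => (hf.2 t).sub (hg.2 t)⟩

lemma Sit.diffAt (S : Sit T R r δ m lam b) (hw : MemX0W (Wset m T R r) w) {t : ℝ} {x : ℂ}
    (h : (t, x) ∈ Wset m T R r) : DifferentiableAt ℂ (w t) x :=
  (hw.2 t).differentiableAt ((W_slice_open S.hm S.hr t).mem_nhds h)

lemma pos_ev {J : Set ℝ} {t : ℝ} (ht : 0 < t) : ∀ᶠ s in 𝓝[J] t, 0 < s :=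
  mem_nhdsWithin_of_mem_nhds (Ioi_mem_nhds ht)

lemma Sit.mkV_solves (S : Sit T R r δ m lam b) (hw : MemX0W (Wset m T R r) w)
    (hd : ∀ t x, (t, x) ∈ Wset m T R r → 0 < t →
      HasDerivWithinAt (fun s => w s x) (hfun (redC lam b) b w t x)
        {s : ℝ | (s, x) ∈ Wset m T R r} t) :
    SolvesLW (Wset m T R r) lam b (fun _ _ => 0) (mkV lam w) := by
  intro t x h ht
  have h1 := twist ht (S.lam0_at h.2.1) (S.diffAt hw h) (hd t x h ht)
  have e : redC lam b t x + lam 0 x - b t x * deriv (lam 0) x * (Real.log t : ℂ) = lam t x := by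
    rw [redC]; ring
  rw [e, ← mkV_pos ht (lam := lam) (w := w)] at h1
  have e2 : Complex.exp (lam 0 x * (Real.log t : ℂ)) * w t x = mkV lam w t x := by rw [mkV_pos ht]
  rw [e2] at h1
  rw [add_zero]
  refine h1.congr_of_eventuallyEq ?_ e2.symm
  filter_upwards [pos_ev ht] with s hs
  rw [mkV_pos hs]

lemma Sit.solves_X1 (S : Sit T R r δ m lam b) {v : ℝ → ℂ → ℂ} (hv : MemX0W (Wset m T R r) v)
    (hs : SolvesLW (Wset m T R r) lam b (fun _ _ => 0) v) : MemX1W (Wset m T R r) v := by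
  refine ⟨hv, fun t x => lam t x * v t x + b t x * deriv (v t) x,
    (S.hlam.toW.mul' hv).add' (S.hb.toW.mul' (W_deriv S.hm S.hr hv)), fun t x h ht => ?_⟩
  have := hs t x h ht
  rwa [add_zero] at this

lemma Sit.mkV_lim (S : Sit T R r δ m lam b) (hw : MemX0W (Wset m T R r) w) {ψ : ℂ → ℂ}
    (hψ : ∀ x, w 0 x = ψ x) {R' : ℝ} (hR' : R' < R) :
    TendstoUniformlyOn
      (fun t x => Complex.exp (-(lam 0 x) * (Real.log t : ℂ)) * mkV lam w t x) ψ
      (𝓝[>] 0) (ball (0:ℂ) R') := by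
  obtain ⟨T', h1, h2, h3⟩ := tube S.hm S.hT S.hr hR'
  intro V hV
  obtain ⟨N, hN, hNV⟩ := (isCompact_closedBall (0:ℂ) R').mem_uniformity_of_prod (f := w)
    (s := Icc 0 T') (q := 0) (hw.1.mono h3) (left_mem_Icc.2 h1.le) (symm_le_uniformity hV)
  have hN' : N ∈ 𝓝[>] (0:ℝ) := by
    have : 𝓝[>] (0:ℝ) ≤ 𝓝[Icc 0 T'] 0 := by
      rw [← nhdsWithin_Ioc_eq_nhdsGT h1]
      exact nhdsWithin_mono _ Ioc_subset_Icc_self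
    exact this hN
  filter_upwards [hN', self_mem_nhdsWithin] with t ht ht0 x hx
  have := hNV t ht x (ball_subset_closedBall hx)
  rw [hψ] at this
  rw [mkV_pos ht0]
  have e : Complex.exp (-(lam 0 x) * (Real.log t : ℂ)) *
      (Complex.exp (lam 0 x * (Real.log t : ℂ)) * w t x) = w t x := by
    rw [← mul_assoc, ← Complex.exp_add, neg_mul, neg_add_cancel, Complex.exp_zero, one_mul]
  simp only [e]
  exact this

lemma Sit.mkV_X1d (S : Sit T R r δ m lam b) (hw : MemX0W (Wset m T R r) w)
    (hX1 : MemX1W (Wset m T R r) (mkV lam w)) {d : ℝ} (hd0 : 0 < d) (hd : d < (lam 0 0).re) :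
    MemX1d d (mkV lam w) := by
  have h0 : (0:ℂ) ∈ ball (0:ℂ) R := mem_ball_self S.hR
  have hc : ContinuousAt (fun x => (lam 0 x).re) 0 :=
    Complex.continuous_re.continuousAt.comp (S.lam0_at h0).continuousAt
  obtain ⟨ε, hε, hεb⟩ := Metric.eventually_nhds_iff_ball.1 (hc.eventually (Ioi_mem_nhds hd))
  set R' := min (ε / 2) (R / 2) with hR'def
  have hR' : 0 < R' := lt_min (by linarith) (by linarith [S.hR])
  have hR'R : R' < R := (min_le_right _ _).trans_lt (by linarith [S.hR])
  have hR'ε : R' < ε := (min_le_left _ _).trans_lt (by linarith)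
  obtain ⟨T', h1, h2, h3⟩ := tube S.hm S.hT S.hr hR'R
  have hk : IsCompact (Icc 0 T' ×ˢ closedBall (0:ℂ) R') := isCompact_Icc.prod (isCompact_closedBall _ _)
  obtain ⟨M, hM⟩ := hk.exists_bound_of_continuousOn (hw.1.mono h3)
  have hM0 : 0 ≤ M := (norm_nonneg _).trans
    (hM (0, 0) ⟨left_mem_Icc.2 h1.le, mem_closedBall_self hR'.le⟩)
  have hmem : ∀ t ∈ Icc 0 T', ∀ x ∈ closedBall (0:ℂ) R', (t, x) ∈ Wset m T R r :=
    fun t ht x hx => h3 ⟨ht, hx⟩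
  have hX0 : ∀ f, MemX0W (Wset m T R r) f → MemX0 (Icc 0 T') (R' / 2) f := by
    intro f hf
    have hsub : ball (0:ℂ) (R' / 2) ⊆ closedBall 0 R' :=
      ball_subset_closedBall.trans (closedBall_subset_closedBall (by linarith))
    exact ⟨hf.1.mono ((prod_mono le_rfl hsub).trans h3),
      fun t ht => (hf.2 t).mono (fun y hy => hmem t ht y (hsub hy))⟩
  have hsub : ball (0:ℂ) (R' / 2) ⊆ closedBall 0 R' :=
    ball_subset_closedBall.trans (closedBall_subset_closedBall (by linarith))
  refine ⟨T', h1, R' / 2, by positivity, ⟨hX0 _ hX1.1, ?_⟩, ?_⟩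
  · obtain ⟨g, hg, hgd⟩ := hX1.2
    refine ⟨g, hX0 g hg, fun t ht ht0 x hx => ?_⟩
    exact (hgd t x (hmem t ht x (hsub hx)) ht0).mono (fun s hs => hmem s hs x (hsub hx))
  · have hvb : ∀ t ∈ Icc 0 T', ∀ x ∈ closedBall (0:ℂ) R', ‖mkV lam w t x‖ ≤ M * t ^ d := by
      intro t ht x hx
      have hre : d < (lam 0 x).re := hεb x (closedBall_subset_ball hR'ε hx)
      have := S.mkV_norm (w := w) ⟨ht.1, ht.2.trans h2⟩ hd0 hre.le
      have h4 : ‖w t x‖ ≤ M := hM (t, x) ⟨ht, hx⟩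
      have h5 : 0 ≤ t ^ d := Real.rpow_nonneg ht.1 d
      calc _ ≤ _ := this
        _ ≤ t ^ d * M := by gcongr
        _ = _ := mul_comm _ _
    refine ⟨(M + 1) * (1 + 2 / R'), by positivity, fun t ht x hx => ?_⟩
    have h5 : 0 ≤ t ^ d := Real.rpow_nonneg ht.1 d
    apply max_le
    · refine (hvb t ht x (hsub hx)).trans ?_
      refine mul_le_mul_of_nonneg_right ?_ h5
      have : 0 ≤ (M + 1) * (2 / R') := by positivity
      linarith
    · have hR2 : 0 < R' / 2 := by positivity
      have hcb : closedBall x (R' / 2) ⊆ closedBall 0 R' := by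
        apply closedBall_subset_closedBall'
        rw [mem_ball] at hx; linarith
      have := Complex.norm_deriv_le_of_forall_mem_sphere_norm_le (f := mkV lam w t) (c := x)
        hR2 (C := M * t ^ d) (by
          apply DifferentiableOn.diffContOnCl
          rw [closure_ball _ hR2.ne']
          exact (hX1.1.2 t).mono (fun y hy => hmem t ht y (hcb hy)))
        (fun z hz => hvb t ht z (hcb (sphere_subset_closedBall hz)))
      refine this.trans ?_
      have e : M * t ^ d / (R' / 2) = (M * (2 / R')) * t ^ d := by field_simp
      rw [e]
      refine mul_le_mul_of_nonneg_right ?_ h5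
      have : 0 < 2 / R' := by positivity
      nlinarith

end sit


section uniq
variable {T R r δ : ℝ} {m : ℝ → ℝ} {lam b : ℝ → ℂ → ℂ}

lemma Sit.unique (S : Sit T R r δ m lam b) {C B : ℝ} (H : Coef T R m (redC lam b) b C B)
    (h1 : wphi m T / r < R / 4) (h2 : (C * R + 6 * B) * wphi m T < R / 4)
    {v v' : ℝ → ℂ → ℂ} {ψ : ℂ → ℂ}
    (hv : MemX0W (Wset m T R r) v) (hv' : MemX0W (Wset m T R r) v')
    (hs : SolvesLW (Wset m T R r) lam b (fun _ _ => 0) v)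
    (hs' : SolvesLW (Wset m T R r) lam b (fun _ _ => 0) v')
    (hl : TendstoUniformlyOn
        (fun t x => Complex.exp (-(lam 0 x) * (Real.log t : ℂ)) * v t x) ψ
        (𝓝[>] 0) (ball (0:ℂ) (3 * R / 4)))
    (hl' : TendstoUniformlyOn
        (fun t x => Complex.exp (-(lam 0 x) * (Real.log t : ℂ)) * v' t x) ψ
        (𝓝[>] 0) (ball (0:ℂ) (3 * R / 4))) :
    ∀ p ∈ Wset m T R r, v' p.1 p.2 = v p.1 p.2 := by
  have hR := S.hR
  have hTmem : T ∈ Icc 0 T := right_mem_Icc.2 S.hT.le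
  set y : ℝ → ℂ → ℂ := fun t x => v' t x - v t x with hy
  have hyX : MemX0W (Wset m T R r) y := hv'.sub' hv
  set u : ℝ → ℂ → ℂ := mkV (fun t x => -lam t x) y with hu
  have hmem : ∀ t ∈ Icc 0 T, ∀ x ∈ ball (0:ℂ) (3 * R / 4), (t, x) ∈ Wset m T R r := by
    intro t ht x hx
    rw [mem_W S.hm S.hr]
    refine ⟨ht, ?_⟩
    have h4 := wphi_mono S.hm ht hTmem ht.2
    have h5 : wphi m t / r ≤ wphi m T / r := div_le_div_of_nonneg_right h4 S.hr.le
    rw [mem_ball_zero_iff] at hx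
    linarith
  have huX : MemX0 (Icc 0 T) (3 * R / 4) u := by
    constructor
    · rintro ⟨t, x⟩ ⟨ht, hx⟩
      simp only at ht hx
      rcases ht.1.eq_or_lt with h0 | h0
      · subst h0
        have hz : u 0 x = 0 := by rw [hu, mkV_zero]
        unfold ContinuousWithinAt
        simp only [hz]
        rw [Metric.tendsto_nhds]
        intro ε hε
        rw [Metric.tendstoUniformlyOn_iff] at hl hl'
        have he := (hl (ε / 2) (by linarith)).and (hl' (ε / 2) (by linarith))
        obtain ⟨η, hη, hηs⟩ := (mem_nhdsGT_iff_exists_Ioo_subset (a := (0:ℝ))).1 he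
        have hη0 : (0:ℝ) < η := hη
        have hft : Tendsto Prod.fst (𝓝[Icc 0 T ×ˢ ball (0:ℂ) (3 * R / 4)] ((0:ℝ), x)) (𝓝 0) :=
          (continuous_fst.tendsto ((0:ℝ), x)).mono_left nhdsWithin_le_nhds
        filter_upwards [self_mem_nhdsWithin, hft.eventually (Iio_mem_nhds hη0)] with p hp hpη
        rcases hp.1.1.eq_or_lt with hp0 | hp0
        · rw [← hp0, hu, mkV_zero]; simpa using hε
        · obtain ⟨ha, hb⟩ := hηs ⟨hp0, hpη⟩
          have ha := ha p.2 hp.2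
          have hb := hb p.2 hp.2
          rw [hu, mkV_pos hp0]
          have e : Complex.exp (-lam 0 p.2 * (Real.log p.1 : ℂ)) * y p.1 p.2
              = Complex.exp (-lam 0 p.2 * (Real.log p.1 : ℂ)) * v' p.1 p.2
                - Complex.exp (-lam 0 p.2 * (Real.log p.1 : ℂ)) * v p.1 p.2 := by
            rw [hy]; ring
          simp only [e]
          rw [dist_zero_right, ← dist_eq_norm]
          rw [dist_comm] at hb
          have := dist_triangle (Complex.exp (-lam 0 p.2 * (Real.log p.1 : ℂ)) * v' p.1 p.2)
            (ψ p.2) (Complex.exp (-lam 0 p.2 * (Real.log p.1 : ℂ)) * v p.1 p.2)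
          linarith
      · have hsub : Icc 0 T ×ˢ ball (0:ℂ) (3 * R / 4) ⊆ Wset m T R r := fun p hp =>
          hmem p.1 hp.1 p.2 hp.2
        have hxR : x ∈ ball (0:ℂ) R := ball_subset_ball (by linarith) hx
        have hk := ((S.exp_cont h0 hxR (-1)).continuousWithinAt
          (s := Icc 0 T ×ˢ ball (0:ℂ) (3 * R / 4))).mul
          ((hyX.1 (t, x) (hmem t ht x hx)).mono hsub)
        refine hk.congr_of_eventuallyEq ?_ ?_
        · filter_upwards [fst_pos_ev h0] with p hp
          rw [hu, mkV_pos hp]; simp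
        · simp only [hu, mkV_pos h0]; simp
    · intro t ht
      rcases ht.1.eq_or_lt with h0 | h0
      · rw [← h0, hu, mkV_zero]; exact differentiableOn_const _
      · rw [hu, mkV_pos h0]
        refine DifferentiableOn.mul (DifferentiableOn.cexp (DifferentiableOn.mul_const ?_ _))
          ((hyX.2 t).mono (fun z hz => hmem t ht z hz))
        exact ((S.hlam.2 0 S.zero_mem).mono (ball_subset_ball (by linarith))).neg
  have hud : ∀ t ∈ Ioc 0 T, ∀ x ∈ ball (0:ℂ) (R / 2),
      HasDerivWithinAt (fun t => u t x) (hfun (redC lam b) b u t x) (Icc 0 T) t := by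
    intro t ht x hx
    have hx' : x ∈ ball (0:ℂ) (3 * R / 4) := ball_subset_ball (by linarith) hx
    have hxR : x ∈ ball (0:ℂ) R := ball_subset_ball (by linarith) hx
    have htI : t ∈ Icc 0 T := ⟨ht.1.le, ht.2⟩
    have hW := hmem t htI x hx'
    have hd : HasDerivWithinAt (fun s => y s x)
        ((lam t x * y t x + b t x * deriv (y t) x) / (t : ℂ)) (Icc 0 T) t := by
      have hdd := ((hs' t x hW ht.1).sub (hs t x hW ht.1)).mono
        (show Icc 0 T ⊆ {s : ℝ | (s, x) ∈ Wset m T R r} from fun s hs => hmem s hs x hx')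
      refine hdd.congr_deriv ?_
      have e : deriv (y t) x = deriv (v' t) x - deriv (v t) x :=
        deriv_sub (S.diffAt hv' hW) (S.diffAt hv hW)
      rw [e, hy]; ring
    have htw := twist ht.1 (a := fun x => -lam 0 x) (S.lam0_at hxR).neg (S.diffAt hyX hW) hd
    have e0 : deriv (fun x => -lam 0 x) x = - deriv (lam 0) x := deriv.fun_neg
    have eu : u t = fun x => Complex.exp (-lam 0 x * (Real.log t : ℂ)) * y t x := by
      rw [hu, mkV_pos ht.1]
    rw [e0] at htw
    have hfin := htw.congr_of_eventuallyEq (f₁ := fun s => u s x)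
      (by filter_upwards [pos_ev ht.1] with s hs; rw [hu, mkV_pos hs]) (by rw [eu])
    refine hfin.congr_deriv ?_
    rw [hfun, redC, eu]
    ring
  have hz : ∀ t ∈ Ioc 0 T, ∀ x, (t, x) ∈ Wset m T R r → y t x = 0 := by
    intro t ht x hW
    have htI : t ∈ Icc 0 T := ⟨ht.1.le, ht.2⟩
    have hu0 : ∀ z ∈ ball (0:ℂ) (R / 4), y t z = 0 := by
      intro z hz
      have hK := K_pos H
      have hzz : u t z = 0 := by
        refine core_unique H (ρ := R / 2) (ρ' := 3 * R / 4) (by linarith) (by linarith) huX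
          (fun x _ => by rw [hu, mkV_zero]) hud htI (ball_subset_ball (by linarith) hz) ?_
        have h4 := wphi_mono S.hm htI hTmem ht.2
        have h5 := mul_le_mul_of_nonneg_left h4 hK.le
        rw [mem_ball_zero_iff] at hz
        linarith
      rw [hu, mkV_pos ht.1] at hzz
      exact (mul_eq_zero.1 hzz).resolve_left (Complex.exp_ne_zero _)
    have hsl := hyX.2 t
    rw [W_slice S.hm S.hr htI] at hsl
    have hxs : x ∈ ball (0:ℂ) (R - wphi m t / r) := by
      rw [← W_slice S.hm S.hr htI]; exact hW
    have hpos : 0 < R - wphi m t / r := by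
      rw [mem_ball_zero_iff] at hxs
      exact (norm_nonneg _).trans_lt hxs
    have han := hsl.analyticOnNhd isOpen_ball
    refine han.eqOn_zero_of_preconnected_of_eventuallyEq_zero
      (convex_ball _ _).isPreconnected (mem_ball_self hpos) ?_ hxs
    filter_upwards [ball_mem_nhds (0:ℂ) (show 0 < R / 4 by linarith)] with z hz
    exact hu0 z hz
  rintro ⟨t, x⟩ hW
  have hW0 := (mem_W S.hm S.hr).1 hW
  refine sub_eq_zero.1 (?_ : y t x = 0)
  rcases hW0.1.1.eq_or_lt with h0 | h0
  · subst h0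
    have hx : ‖x‖ < R := by simpa using hW.2.1
    obtain ⟨T', a1, a2, a3⟩ := tube S.hm S.hT S.hr hx
    have hm' : ∀ s ∈ Icc 0 T', (s, x) ∈ Wset m T R r := fun s hs => a3 ⟨hs, by simp⟩
    have hc : ContinuousOn (fun s : ℝ => y s x) (Icc 0 T') := by
      have : ContinuousOn (fun s : ℝ => (s, x)) (Icc 0 T') := by fun_prop
      exact hyX.1.comp (f := fun s : ℝ => (s, x)) this hm'
    have hcl : (0:ℝ) ∈ closure (Ioc 0 T') := by
      rw [closure_Ioc a1.ne]; exact left_mem_Icc.2 a1.le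
    have hne : (𝓝[Ioc 0 T'] (0:ℝ)).NeBot := mem_closure_iff_nhdsWithin_neBot.1 hcl
    have ht1 : Tendsto (fun s : ℝ => y s x) (𝓝[Ioc 0 T'] 0) (𝓝 (y 0 x)) :=
      (hc 0 (left_mem_Icc.2 a1.le)).tendsto.mono_left (nhdsWithin_mono _ Ioc_subset_Icc_self)
    have ht2 : Tendsto (fun s : ℝ => y s x) (𝓝[Ioc 0 T'] 0) (𝓝 0) := by
      refine tendsto_const_nhds.congr' ?_
      filter_upwards [self_mem_nhdsWithin] with s hs
      exact (hz s ⟨hs.1, hs.2.trans a2⟩ x (hm' s ⟨hs.1.le, hs.2⟩)).symm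
    exact tendsto_nhds_unique ht1 ht2
  · exact hz t ⟨h0, hW0.1.2⟩ x hW

end uniq

/-- Lemma 6.2.1 (1): under `Re λ(0,0) > 0`, `|λ(t,x)-λ(0,x)| ≤ Λ m(t)` and
`|b| ≤ B m(t)/|log t|`, there are `T, R, r > 0` such that for every `ψ` holomorphic
on `D_R`, the equation `t ∂v/∂t - λ v - b ∂v/∂x = 0` has a unique solution
`v ∈ X₁(W)` with `t^{-λ(0,x)} v(t,x) → ψ(x)` as `t → 0⁺` uniformly on each `D_{R'}`,
`0 < R' < R`; moreover `v ∈ X₁^d` for every `0 < d < Re λ(0,0)`. -/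
theorem statement13
    (T₀ R₀ : ℝ) (hT₀ : 0 < T₀) (hT₀e : T₀ < 1 / Real.exp 1) (hR₀ : 0 < R₀)
    (m : ℝ → ℝ) (hm : IsWeight T₀ m)
    (lam b : ℝ → ℂ → ℂ)
    (hlamX : MemX0 (Set.Icc 0 T₀) R₀ lam) (hbX : MemX0 (Set.Icc 0 T₀) R₀ b)
    (hre : 0 < (lam 0 0).re)
    (Λ₁ : ℝ) (hΛ₁ : 0 < Λ₁)
    (hc2 : ∀ t ∈ Set.Ioc (0:ℝ) T₀, ∀ x ∈ Metric.ball (0:ℂ) R₀,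
      ‖lam t x - lam 0 x‖ ≤ Λ₁ * m t)
    (B : ℝ) (hB : 0 < B)
    (hc3 : ∀ t ∈ Set.Ioc (0:ℝ) T₀, ∀ x ∈ Metric.ball (0:ℂ) R₀,
      ‖b t x‖ ≤ B * m t / |Real.log t|)
    :
    ∃ T > (0:ℝ), ∃ R > (0:ℝ), ∃ r > (0:ℝ), T ≤ T₀ ∧ R ≤ R₀ ∧
      ∀ ψ : ℂ → ℂ, DifferentiableOn ℂ ψ (Metric.ball (0:ℂ) R) →
        ∃ v : ℝ → ℂ → ℂ,
          MemX1W (Wset m T R r) v ∧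
          SolvesLW (Wset m T R r) lam b (fun _ _ => 0) v ∧
          (∀ R' : ℝ, 0 < R' → R' < R →
            TendstoUniformlyOn
              (fun t x => Complex.exp (-(lam 0 x) * (Real.log t : ℂ)) * v t x) ψ
              (nhdsWithin 0 (Set.Ioi 0)) (Metric.ball (0:ℂ) R')) ∧
          (∀ d : ℝ, 0 < d → d < (lam 0 0).re → MemX1d d v) ∧
          -- uniqueness in X₁(W) :
          (∀ v' : ℝ → ℂ → ℂ, MemX1W (Wset m T R r) v' →
            SolvesLW (Wset m T R r) lam b (fun _ _ => 0) v' →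
            (∀ R' : ℝ, 0 < R' → R' < R →
              TendstoUniformlyOn
                (fun t x => Complex.exp (-(lam 0 x) * (Real.log t : ℂ)) * v' t x) ψ
                (nhdsWithin 0 (Set.Ioi 0)) (Metric.ball (0:ℂ) R')) →
            ∀ p ∈ Wset m T R r, v' p.1 p.2 = v p.1 p.2) := by
  obtain ⟨R, hR, hRR, hRre⟩ : ∃ R, 0 < R ∧ R ≤ R₀ / 2 ∧
      ∀ x ∈ ball (0:ℂ) R, (lam 0 0).re / 2 ≤ (lam 0 x).re := by
    have h0 : (0:ℂ) ∈ ball (0:ℂ) R₀ := mem_ball_self hR₀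
    have hd : DifferentiableAt ℂ (lam 0) 0 :=
      (hlamX.2 0 (left_mem_Icc.2 hT₀.le)).differentiableAt (isOpen_ball.mem_nhds h0)
    have hc : ContinuousAt (fun x => (lam 0 x).re) 0 :=
      Complex.continuous_re.continuousAt.comp hd.continuousAt
    obtain ⟨ε, hε, hεb⟩ := Metric.eventually_nhds_iff_ball.1
      (hc.eventually (Ioi_mem_nhds (show (lam 0 0).re / 2 < (lam 0 0).re by linarith)))
    refine ⟨min ε (R₀ / 2), lt_min hε (by linarith), min_le_right _ _, fun x hx => ?_⟩
    exact le_of_lt (hεb x (ball_subset_ball (min_le_left _ _) hx))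
  have hRR0 : R ≤ R₀ := by linarith
  obtain ⟨L, hL0, hL⟩ : ∃ L, 0 ≤ L ∧ ∀ x ∈ ball (0:ℂ) R, ‖deriv (lam 0) x‖ ≤ L := by
    have hd : DifferentiableOn ℂ (deriv (lam 0)) (ball (0:ℂ) R₀) :=
      (hlamX.2 0 (left_mem_Icc.2 hT₀.le)).deriv isOpen_ball
    obtain ⟨L, hL⟩ := (isCompact_closedBall (0:ℂ) R).exists_bound_of_continuousOn
      (hd.continuousOn.mono (closedBall_subset_ball (by linarith)))
    exact ⟨L, (norm_nonneg _).trans (hL 0 (mem_closedBall_self hR.le)),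
      fun x hx => hL x (ball_subset_closedBall hx)⟩
  have hCn : 0 ≤ Λ₁ + B * L := by positivity
  set C := Λ₁ + B * L with hC
  have hK : 0 < C * R + 6 * B := by positivity
  obtain ⟨T, hT, hTT, hTφ⟩ := phi_small hm hT₀ (ε := R / (8 * (C * R + 6 * B))) (by positivity)
  have hφ8 : (C * R + 6 * B) * wphi m T < R / 8 := by
    rw [lt_div_iff₀ (by positivity)] at hTφ
    linarith
  have hmT : IsWeight T m := hm.mono_T hTT
  have he1 : 1 / Real.exp 1 ≤ 1 := by
    rw [div_le_one (Real.exp_pos 1)]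
    exact Real.one_le_exp (by norm_num)
  have hlog : ∀ t ∈ Ioc 0 T₀, 1 ≤ |Real.log t| := by
    intro t ht
    have h1 : Real.log t ≤ Real.log (1 / Real.exp 1) :=
      Real.log_le_log ht.1 (ht.2.trans hT₀e.le)
    rw [one_div, Real.log_inv, Real.log_exp] at h1
    rw [abs_of_nonpos (by linarith)]
    linarith
  have hsT : Ioc 0 T ⊆ Ioc 0 T₀ := Ioc_subset_Ioc_right hTT
  have hsI : Ioc 0 T ⊆ Icc 0 T₀ := hsT.trans Ioc_subset_Icc_self
  have hsB : ball (0:ℂ) R ⊆ ball 0 R₀ := ball_subset_ball hRR0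
  have hlamR : MemX0 (Icc 0 T) R lam := hlamX.mono' (Icc_subset_Icc_right hTT) hRR0
  have hbR : MemX0 (Icc 0 T) R b := hbX.mono' (Icc_subset_Icc_right hTT) hRR0
  have hl0 : DifferentiableOn ℂ (lam 0) (ball (0:ℂ) R) := hlamR.2 0 (left_mem_Icc.2 hT.le)
  have hl0' : DifferentiableOn ℂ (deriv (lam 0)) (ball (0:ℂ) R) := hl0.deriv isOpen_ball
  have hmaps : MapsTo (Prod.snd : ℝ × ℂ → ℂ) (Ioc 0 T ×ˢ ball (0:ℂ) R) (ball 0 R) :=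
    fun p hp => hp.2
  have hbI : MemX0 (Ioc 0 T) R b := hbR.mono' Ioc_subset_Icc_self le_rfl
  have hlamI : MemX0 (Ioc 0 T) R lam := hlamR.mono' Ioc_subset_Icc_self le_rfl
  have H : Coef T R m (redC lam b) b C B := by
    refine ⟨hT, hR, hmT, ⟨?_, ?_⟩, hbI, ?_, ?_, hCn, hB⟩
    · have a1 : ContinuousOn (fun p : ℝ × ℂ => lam 0 p.2) (Ioc 0 T ×ˢ ball (0:ℂ) R) :=
        hl0.continuousOn.comp continuousOn_snd hmaps
      have a2 : ContinuousOn (fun p : ℝ × ℂ => deriv (lam 0) p.2) (Ioc 0 T ×ˢ ball (0:ℂ) R) :=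
        hl0'.continuousOn.comp continuousOn_snd hmaps
      have a3 : ContinuousOn (fun p : ℝ × ℂ => (Real.log p.1 : ℂ)) (Ioc 0 T ×ˢ ball (0:ℂ) R) :=
        Complex.continuous_ofReal.comp_continuousOn
          (continuousOn_fst.log (fun p hp => hp.1.1.ne'))
      exact (hlamI.1.sub a1).add ((hbI.1.mul a2).mul a3)
    · intro t ht
      exact ((hlamI.2 t ht).sub hl0).add (((hbI.2 t ht).mul hl0').mul_const _)
    · intro t ht x hx
      have b1 := hc2 t (hsT ht) x (hsB hx)
      have b2 := hc3 t (hsT ht) x (hsB hx)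
      have b3 := hlog t (hsT ht)
      have hmp := hm.2.2.1 t (hsT ht)
      rw [le_div_iff₀ (by linarith)] at b2
      rw [redC]
      refine (norm_add_le _ _).trans ?_
      have b4 : ‖b t x * deriv (lam 0) x * (Real.log t : ℂ)‖ ≤ B * m t * L := by
        rw [norm_mul, norm_mul, Complex.norm_real, Real.norm_eq_abs]
        calc _ = (‖b t x‖ * |Real.log t|) * ‖deriv (lam 0) x‖ := by ring
          _ ≤ _ := mul_le_mul b2 (hL x hx) (norm_nonneg _) (by positivity)
      rw [hC]
      linarith
    · intro t ht x hx
      have b2 := hc3 t (hsT ht) x (hsB hx)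
      have hmp := hm.2.2.1 t (hsT ht)
      exact b2.trans (div_le_self (by positivity) (hlog t (hsT ht)))
  set r := 1 / (2 * (C * R + 6 * B)) with hr
  have hrp : 0 < r := by positivity
  have S : Sit T R r ((lam 0 0).re / 2) m lam b :=
    ⟨hmT, hT, hTT.trans (hT₀e.le.trans he1), hR, hrp, hlamR, hbR, by linarith, hRre⟩
  have hφr : wphi m T / r < R / 4 := by
    have e : wphi m T / r = 2 * ((C * R + 6 * B) * wphi m T) := by
      rw [hr]; field_simp
    rw [e]; linarith
  refine ⟨T, hT, R, hR, r, hrp, hTT, hRR0, fun ψ hψ => ?_⟩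
  have hw : MemX0W (Wset m T R r) (wsum (redC lam b) b ψ) := wsum_X0 H hψ
  have hV0 := S.mkV_X0 hw
  have hVs := S.mkV_solves hw (fun t x h ht => wsum_deriv H hψ h ht)
  have hV1 := S.solves_X1 hV0 hVs
  have hVl := fun (R' : ℝ) (h : R' < R) => S.mkV_lim hw (ψ := ψ) (fun x => wsum_zero) h
  refine ⟨mkV lam (wsum (redC lam b) b ψ), hV1, hVs, fun R' _ h => hVl R' h,
    fun d hd hd' => S.mkV_X1d hw hV1 hd hd', fun v' hv' hs' hl' => ?_⟩
  exact S.unique H hφr (by linarith) hV0 hv'.1 hVs hs' (hVl _ (by linarith))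
    (hl' (3 * R / 4) (by linarith) (by linarith))
end
end
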